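/- arXiv:1102.4768 — 3 statements merged into one kernel-verified Lean document; each statement's English description precedes it below -/
import Mathlib

section
/- Let V be a real vector space of dimension n > 2 with n ∉ {3,7}, and let T be an alternating trilinear form on V. Then T possesses a singular line: there exist linearly independent a, b ∈ V with T(a,b,x) = 0 for all x ∈ V. -/
namespace SL
open LinearMap
open scoped LinearMap.FiniteRangeSetoid

section Abstract
variable {X Y W : Type*}
  [NormedAddCommGroup X] [InnerProductSpace ℂ X]
  [NormedAddCommGroup Y] [InnerProductSpace ℂ Y]
  [NormedAddCommGroup W] [InnerProductSpace ℂ W]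

/-- finite rank bounded operators -/
def FR (F : X →L[ℂ] Y) : Prop := (F : X →ₗ[ℂ] Y).HasFiniteRange

lemma FR.add {F G : X →L[ℂ] Y} (hF : FR F) (hG : FR G) : FR (F + G) := HasFiniteRange.add hF hG
lemma FR.neg {F : X →L[ℂ] Y} (hF : FR F) : FR (-F) := HasFiniteRange.neg hF
lemma FR.sub {F G : X →L[ℂ] Y} (hF : FR F) (hG : FR G) : FR (F - G) := HasFiniteRange.sub hF hG
lemma FR.zero : FR (0 : X →L[ℂ] Y) := HasFiniteRange.zero
lemma FR.left {F : X →L[ℂ] Y} (hF : FR F) (G : Y →L[ℂ] W) : FR (G ∘L F) :=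
  HasFiniteRange.comp_left hF (G : Y →ₗ[ℂ] W)
lemma FR.right {F : Y →L[ℂ] W} (hF : FR F) (G : X →L[ℂ] Y) : FR (F ∘L G) :=
  HasFiniteRange.comp_right hF (G : X →ₗ[ℂ] Y)

/-- norm limits of finite rank operators -/
def Cpt (K : X →L[ℂ] Y) : Prop := ∀ ε > 0, ∃ F : X →L[ℂ] Y, FR F ∧ ‖K - F‖ ≤ ε

lemma Cpt.of_FR {F : X →L[ℂ] Y} (hF : FR F) : Cpt F := fun ε hε => ⟨F, hF, by simp [hε.le]⟩
lemma Cpt.zero : Cpt (0 : X →L[ℂ] Y) := Cpt.of_FR FR.zero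

lemma Cpt.add {K L : X →L[ℂ] Y} (hK : Cpt K) (hL : Cpt L) : Cpt (K + L) := by
  intro ε hε
  obtain ⟨F, hF, hF'⟩ := hK (ε / 2) (by positivity)
  obtain ⟨G, hG, hG'⟩ := hL (ε / 2) (by positivity)
  refine ⟨F + G, hF.add hG, ?_⟩
  calc ‖K + L - (F + G)‖ = ‖(K - F) + (L - G)‖ := by congr 1; abel
    _ ≤ _ := norm_add_le _ _
    _ ≤ ε := by linarith

lemma Cpt.left {K : X →L[ℂ] Y} (hK : Cpt K) (G : Y →L[ℂ] W) : Cpt (G ∘L K) := by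
  intro ε hε
  obtain ⟨F, hF, hF'⟩ := hK (ε / (‖G‖ + 1)) (by positivity)
  refine ⟨G ∘L F, hF.left G, ?_⟩
  rw [← ContinuousLinearMap.comp_sub]
  calc _ ≤ ‖G‖ * ‖K - F‖ := ContinuousLinearMap.opNorm_comp_le _ _
    _ ≤ (‖G‖ + 1) * (ε / (‖G‖ + 1)) := by gcongr; linarith
    _ = ε := by field_simp

lemma Cpt.right {K : Y →L[ℂ] W} (hK : Cpt K) (G : X →L[ℂ] Y) : Cpt (K ∘L G) := by
  intro ε hε
  obtain ⟨F, hF, hF'⟩ := hK (ε / (‖G‖ + 1)) (by positivity)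
  refine ⟨F ∘L G, hF.right G, ?_⟩
  rw [← ContinuousLinearMap.sub_comp]
  calc _ ≤ ‖K - F‖ * ‖G‖ := ContinuousLinearMap.opNorm_comp_le _ _
    _ ≤ (ε / (‖G‖ + 1)) * (‖G‖ + 1) := by gcongr; linarith
    _ = ε := by field_simp

lemma Cpt.neg {K : X →L[ℂ] Y} (hK : Cpt K) : Cpt (-K) := by
  intro ε hε
  obtain ⟨F, hF, hF'⟩ := hK ε hε
  refine ⟨-F, hF.neg, ?_⟩
  rwa [neg_sub_neg, norm_sub_rev]

lemma Cpt.sub {K L : X →L[ℂ] Y} (hK : Cpt K) (hL : Cpt L) : Cpt (K - L) := by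
  rw [sub_eq_add_neg]; exact hK.add hL.neg

lemma Cpt.sum {ι : Type*} (s : Finset ι) {K : ι → X →L[ℂ] Y} (h : ∀ i ∈ s, Cpt (K i)) :
    Cpt (∑ i ∈ s, K i) := by
  classical
  induction s using Finset.induction_on with
  | empty => simpa using Cpt.zero
  | insert a s ha ih =>
    rw [Finset.sum_insert ha]
    exact (h a (by simp)).add (ih fun i hi => h i (by simp [hi]))

lemma Cpt.smul {K : X →L[ℂ] Y} (hK : Cpt K) (c : ℂ) : Cpt (c • K) := by
  have := hK.left (c • ContinuousLinearMap.id ℂ Y)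
  simpa using this

/-- `S` is a parametrix of `T`. -/
def Par (T : X →L[ℂ] Y) (S : Y →L[ℂ] X) : Prop :=
  FR (ContinuousLinearMap.id ℂ X - S ∘L T) ∧ FR (ContinuousLinearMap.id ℂ Y - T ∘L S)

lemma Par.symm {T : X →L[ℂ] Y} {S : Y →L[ℂ] X} (h : Par T S) : Par S T := ⟨h.2, h.1⟩

lemma Par.isFredholm {T : X →L[ℂ] Y} {S : Y →L[ℂ] X} (h : Par T S) : T.IsFredholm := by
  apply ContinuousLinearMap.IsFredholm.of_isQuasiInverse (v := S)
  constructor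
  · rw [LinearMap.IsLeftQuasiInverse, Setoid.comm, LinearMap.FiniteRangeSetoid.equiv_iff_hasFiniteRange]
    exact h.1
  · rw [LinearMap.IsRightQuasiInverse, Setoid.comm, LinearMap.FiniteRangeSetoid.equiv_iff_hasFiniteRange]
    exact h.2

lemma index_id_sub_FR {F : X →L[ℂ] X} (hF : FR F) :
    ((ContinuousLinearMap.id ℂ X - F : X →L[ℂ] X) : X →ₗ[ℂ] X).index = 0 := by
  have hfd : FiniteDimensional ℂ (F : X →ₗ[ℂ] X).range :=
    Module.Finite.iff_fg.2 (hasFiniteRange_iff_range.1 hF)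
  set T : X →L[ℂ] X := ContinuousLinearMap.id ℂ X - F with hT
  have hpar : Par T (ContinuousLinearMap.id ℂ X) := by
    constructor <;> simpa [hT] using hF
  have hfr := hpar.isFredholm
  set R := (F : X →ₗ[ℂ] X).range
  have h1 : R.mkQ ∘ₗ (T : X →ₗ[ℂ] X) = R.mkQ := by
    ext x
    simp only [LinearMap.comp_apply, hT]
    rw [← sub_eq_zero, ← map_sub]
    simp [R]
  have := hfr.finite_ker
  have : FiniteDimensional ℂ (X ⧸ (T : X →ₗ[ℂ] X).range) := hfr.finite_coker
  have : FiniteDimensional ℂ R.mkQ.ker := by rw [Submodule.ker_mkQ]; exact hfd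
  have : FiniteDimensional ℂ ((X ⧸ R) ⧸ R.mkQ.range) := by
    rw [Submodule.range_mkQ]; infer_instance
  have h2 := LinearMap.index_comp (f := (T : X →ₗ[ℂ] X)) R.mkQ
  rw [h1] at h2
  linarith

lemma Par.index_add {T : X →L[ℂ] Y} {S : Y →L[ℂ] X} (h : Par T S) :
    (S : Y →ₗ[ℂ] X).index + (T : X →ₗ[ℂ] Y).index = 0 := by
  have hT := h.isFredholm
  have hS := h.symm.isFredholm
  have := hT.finite_ker
  have := hS.finite_ker
  have : FiniteDimensional ℂ (Y ⧸ (T : X →ₗ[ℂ] Y).range) := hT.finite_coker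
  have : FiniteDimensional ℂ (X ⧸ (S : Y →ₗ[ℂ] X).range) := hS.finite_coker
  rw [← LinearMap.index_comp]
  have := index_id_sub_FR h.1
  simpa using this

lemma Par.comp {T : X →L[ℂ] Y} {S : Y →L[ℂ] X} (h : Par T S) {T' : Y →L[ℂ] W} {S' : W →L[ℂ] Y}
    (h' : Par T' S') : Par (T' ∘L T) (S ∘L S') := by
  constructor
  · have := h.1.add ((h'.1.left S).right T)
    convert this using 1
    ext x; simp
  · have := h'.2.add ((h.2.left T').right S')
    convert this using 1
    ext x; simp

lemma Par.index_comp {T : X →L[ℂ] Y} {S : Y →L[ℂ] X} (h : Par T S) {T' : Y →L[ℂ] W}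
    {S' : W →L[ℂ] Y} (h' : Par T' S') :
    ((T' ∘L T : X →L[ℂ] W) : X →ₗ[ℂ] W).index = (T' : Y →ₗ[ℂ] W).index + (T : X →ₗ[ℂ] Y).index := by
  have hT := h.isFredholm
  have hS := h'.isFredholm
  have := hT.finite_ker
  have := hS.finite_ker
  have : FiniteDimensional ℂ (Y ⧸ (T : X →ₗ[ℂ] Y).range) := hT.finite_coker
  have : FiniteDimensional ℂ (W ⧸ (T' : Y →ₗ[ℂ] W).range) := hS.finite_coker
  rw [← LinearMap.index_comp]
  rfl

/-- A parametrix up to small + finite rank can be improved -/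
lemma exists_par_pert [CompleteSpace X] [CompleteSpace Y] {T T' : X →L[ℂ] Y} {S : Y →L[ℂ] X}
    (h : Par T S) (hK : Cpt (T - T')) :
    ∃ S', Par T' S' ∧ (T' : X →ₗ[ℂ] Y).index = (T : X →ₗ[ℂ] Y).index := by
  obtain ⟨F, hF, hE⟩ := hK (1 / (2 * (‖S‖ + 1))) (by positivity)
  set E := T - T' - F with hEdef
  have hSE : ‖S ∘L E‖ < 1 := by
    calc _ ≤ ‖S‖ * ‖E‖ := ContinuousLinearMap.opNorm_comp_le _ _
      _ ≤ ‖S‖ * (1 / (2 * (‖S‖ + 1))) := by gcongr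
      _ < 1 := by
        rw [mul_one_div, div_lt_one (by positivity)]; linarith [norm_nonneg S]
  have hES : ‖E ∘L S‖ < 1 := by
    calc _ ≤ ‖E‖ * ‖S‖ := ContinuousLinearMap.opNorm_comp_le _ _
      _ ≤ (1 / (2 * (‖S‖ + 1))) * ‖S‖ := by gcongr
      _ < 1 := by
        rw [one_div_mul_eq_div, div_lt_one (by positivity)]; linarith [norm_nonneg S]
  have hu1 : IsUnit (1 - (S ∘L E : X →L[ℂ] X)) := isUnit_one_sub_of_norm_lt_one hSE
  have hu2 : IsUnit (1 - (E ∘L S : Y →L[ℂ] Y)) := isUnit_one_sub_of_norm_lt_one hES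
  obtain ⟨U, hU⟩ := hu1
  obtain ⟨V, hV⟩ := hu2
  have hT' : T' = T - E - F := by rw [hEdef]; abel
  -- the left and right parametrices
  set S1 : Y →L[ℂ] X := (↑U⁻¹ : X →L[ℂ] X) ∘L S with hS1
  set S2 : Y →L[ℂ] X := S ∘L (↑V⁻¹ : Y →L[ℂ] Y) with hS2
  have hl : FR (ContinuousLinearMap.id ℂ X - S1 ∘L T') := by
    have e1 : S ∘L T' = (U : X →L[ℂ] X) - (ContinuousLinearMap.id ℂ X - S ∘L T) - S ∘L F := by
      rw [hU, hT']; ext x; simp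
    have e2 : (↑U⁻¹ : X →L[ℂ] X) ∘L (U : X →L[ℂ] X) = ContinuousLinearMap.id ℂ X := by
      have := U.inv_mul; exact this
    have e3 : ContinuousLinearMap.id ℂ X - S1 ∘L T'
        = (↑U⁻¹ : X →L[ℂ] X) ∘L ((ContinuousLinearMap.id ℂ X - S ∘L T) + S ∘L F) := by
      rw [hS1, ContinuousLinearMap.comp_assoc, e1]
      simp only [ContinuousLinearMap.comp_sub, ContinuousLinearMap.comp_add, e2]
      abel
    rw [e3]
    exact (h.1.add (hF.left S)).left _
  have hr : FR (ContinuousLinearMap.id ℂ Y - T' ∘L S2) := by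
    have e1 : T' ∘L S = (V : Y →L[ℂ] Y) - (ContinuousLinearMap.id ℂ Y - T ∘L S) - F ∘L S := by
      rw [hV, hT']; ext x; simp
    have e2 : (V : Y →L[ℂ] Y) ∘L (↑V⁻¹ : Y →L[ℂ] Y) = ContinuousLinearMap.id ℂ Y := by
      have := V.mul_inv; exact this
    have e3 : ContinuousLinearMap.id ℂ Y - T' ∘L S2
        = ((ContinuousLinearMap.id ℂ Y - T ∘L S) + F ∘L S) ∘L (↑V⁻¹ : Y →L[ℂ] Y) := by
      rw [hS2, ← ContinuousLinearMap.comp_assoc, e1]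
      simp only [ContinuousLinearMap.sub_comp, ContinuousLinearMap.add_comp, e2]
      abel
    rw [e3]
    exact (h.2.add (hF.right S)).right _
  have hd : FR (S1 - S2) := by
    have := (hr.left S1).sub (hl.right S2)
    convert this using 1
    ext x; simp
  have hpar : Par T' S1 := by
    refine ⟨hl, ?_⟩
    have := hr.sub (hd.left T')
    convert this using 1
    ext x; simp
  refine ⟨S1, hpar, ?_⟩
  -- index
  have hUpar : Par (↑U⁻¹ : X →L[ℂ] X) (U : X →L[ℂ] X) := by
    constructor
    · have e : (U : X →L[ℂ] X) ∘L (↑U⁻¹ : X →L[ℂ] X) = ContinuousLinearMap.id ℂ X := U.mul_inv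
      rw [e, sub_self]; exact FR.zero
    · have e : (↑U⁻¹ : X →L[ℂ] X) ∘L (U : X →L[ℂ] X) = ContinuousLinearMap.id ℂ X := U.inv_mul
      rw [e, sub_self]; exact FR.zero
  have hUind : ((↑U⁻¹ : X →L[ℂ] X) : X →ₗ[ℂ] X).index = 0 := by
    have e1 : Function.Bijective (↑U⁻¹ : X →L[ℂ] X) :=
      ContinuousLinearMap.isUnit_iff_bijective.1 (U⁻¹).isUnit
    exact LinearEquiv.index_eq_zero (e := LinearEquiv.ofBijective ((↑U⁻¹ : X →L[ℂ] X) : X →ₗ[ℂ] X) e1)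
  have h1 := hpar.index_add
  have h2 := h.index_add
  have h3 := h.symm.index_comp hUpar
  rw [hUind, zero_add] at h3
  rw [← hS1] at h3
  linarith

/-- essential lower bound -/
def Est [CompleteSpace X] [CompleteSpace Y] (T : X →L[ℂ] Y) : Prop :=
  ∃ c > 0, ∃ K : X →L[ℂ] X, Cpt K ∧
    ∀ u, c * ‖u‖ ^ 2 ≤ RCLike.re (inner ℂ ((ContinuousLinearMap.adjoint T ∘L T + K) u) u)

lemma Est.exists_left [CompleteSpace X] [CompleteSpace Y] {T : X →L[ℂ] Y} (h : Est T) :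
    ∃ S : Y →L[ℂ] X, FR (ContinuousLinearMap.id ℂ X - S ∘L T) ∧
      ∃ R : X →L[ℂ] X, S = R ∘L ContinuousLinearMap.adjoint T := by
  obtain ⟨c, hc, K, hK, hest⟩ := h
  obtain ⟨F, hF, hE⟩ := hK (c / 2) (by positivity)
  set B : X →L[ℂ] X := ContinuousLinearMap.adjoint T ∘L T + F
  have hB : IsUnit B := by
    refine ContinuousLinearMap.isUnit_of_forall_le_norm_inner_map B
      (c := Real.toNNReal (c / 2)) (by simpa using hc) fun x => ?_
    have h1 := hest x
    have h2 : ‖inner ℂ ((K - F) x) x‖ ≤ c / 2 * ‖x‖ ^ 2 := by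
      calc _ ≤ ‖(K - F) x‖ * ‖x‖ := norm_inner_le_norm _ _
        _ ≤ (c / 2 * ‖x‖) * ‖x‖ := by
          gcongr; exact (ContinuousLinearMap.le_opNorm _ _).trans (by gcongr)
        _ = _ := by ring
    have h3 : (ContinuousLinearMap.adjoint T ∘L T + K) x = B x + (K - F) x := by simp [B]
    rw [h3, inner_add_left, map_add] at h1
    have h4 := RCLike.re_le_norm (inner ℂ ((K - F) x) x)
    have h5 := RCLike.re_le_norm (inner ℂ (B x) x)
    rw [Real.coe_toNNReal _ (by positivity)]
    linarith
  obtain ⟨U, hU⟩ := hB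
  refine ⟨(↑U⁻¹ : X →L[ℂ] X) ∘L ContinuousLinearMap.adjoint T, ?_, _, rfl⟩
  have e : (↑U⁻¹ : X →L[ℂ] X) ∘L (U : X →L[ℂ] X) = ContinuousLinearMap.id ℂ X := U.inv_mul
  have : ContinuousLinearMap.id ℂ X - ((↑U⁻¹ : X →L[ℂ] X) ∘L ContinuousLinearMap.adjoint T) ∘L T
      = (↑U⁻¹ : X →L[ℂ] X) ∘L F := by
    rw [← e, hU, ContinuousLinearMap.comp_assoc, ← ContinuousLinearMap.comp_sub]
    congr 1
    simp [B]
  rw [this]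
  exact hF.left _

lemma FR.adjoint [CompleteSpace X] [CompleteSpace Y] {F : X →L[ℂ] Y} (hF : FR F) :
    FR (ContinuousLinearMap.adjoint F) := by
  have hfd : FiniteDimensional ℂ (F : X →ₗ[ℂ] Y).range :=
    Module.Finite.iff_fg.2 (hasFiniteRange_iff_range.1 hF)
  set R := (F : X →ₗ[ℂ] Y).range
  have h : F = R.subtypeL ∘L (F.codRestrict R fun x => ⟨x, rfl⟩) := by ext x; rfl
  have : CompleteSpace R := FiniteDimensional.complete ℂ R
  rw [h, ContinuousLinearMap.adjoint_comp]
  apply FR.right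
  exact HasFiniteRange.of_finite_dom

lemma Est.par [CompleteSpace X] [CompleteSpace Y] {T : X →L[ℂ] Y} (h : Est T)
    (h' : Est (ContinuousLinearMap.adjoint T)) : ∃ S, Par T S := by
  obtain ⟨S1, hS1, -⟩ := h.exists_left
  obtain ⟨S2', hS2', -⟩ := h'.exists_left
  set S2 := ContinuousLinearMap.adjoint S2'
  have hr : FR (ContinuousLinearMap.id ℂ Y - T ∘L S2) := by
    have := hS2'.adjoint
    rwa [map_sub, ContinuousLinearMap.adjoint_comp, ContinuousLinearMap.adjoint_adjoint,
      ContinuousLinearMap.adjoint_id] at this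
  have hd : FR (S1 - S2) := by
    have := (hr.left S1).sub (hS1.right S2)
    convert this using 1
    ext x; simp
  refine ⟨S1, hS1, ?_⟩
  have := hr.sub (hd.left T)
  convert this using 1
  ext x; simp

lemma Par.index_eq [CompleteSpace X] [CompleteSpace Y] {T : X →L[ℂ] Y} {S : Y →L[ℂ] X}
    (h : Par T S) : (T : X →ₗ[ℂ] Y).index = Module.finrank ℂ (T : X →ₗ[ℂ] Y).ker
      - Module.finrank ℂ (ContinuousLinearMap.adjoint T : Y →ₗ[ℂ] X).ker := by
  rw [LinearMap.index_eq_finrank_sub]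
  congr 2
  have hc := h.isFredholm.isClosed_range
  set R := (T : X →ₗ[ℂ] Y).range
  have : CompleteSpace R := hc.completeSpace_coe
  have e := (Submodule.quotientEquivOfIsCompl R Rᗮ (Submodule.isCompl_orthogonal R)).finrank_eq
  rw [e, ContinuousLinearMap.orthogonal_range]

end Abstract
end SL

namespace SL
set_option linter.unusedSectionVars false
section Compress
variable {X : Type*} [NormedAddCommGroup X] [InnerProductSpace ℂ X] [CompleteSpace X]

open ContinuousLinearMap (adjoint)

/-- compression of an operator to submodules -/
noncomputable def compress (U V : Submodule ℂ X) [CompleteSpace V] (T : X →L[ℂ] X) : U →L[ℂ] V :=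
  V.orthogonalProjectionOnto ∘L T ∘L U.subtypeL

variable {U V W : Submodule ℂ X} [CompleteSpace U] [CompleteSpace V] [CompleteSpace W]

lemma compress_coe {T : X →L[ℂ] X} (h : ∀ u ∈ U, T u ∈ V) (u : U) :
    ((compress U V T u : V) : X) = T u := by
  simp only [compress, ContinuousLinearMap.comp_apply, Submodule.subtypeL_apply]
  exact congrArg Subtype.val (Submodule.orthogonalProjectionOnto_mem_subspace_eq_self (⟨T u, h u u.2⟩ : V))

lemma compress_adjoint (T : X →L[ℂ] X) :
    adjoint (compress U V T) = compress V U (adjoint T) := by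
  symm
  rw [ContinuousLinearMap.eq_adjoint_iff]
  intro x y
  simp only [compress, ContinuousLinearMap.comp_apply, Submodule.subtypeL_apply]
  rw [Submodule.inner_orthogonalProjectionOnto_eq_of_mem_right,
    Submodule.inner_orthogonalProjectionOnto_eq_of_mem_left, ContinuousLinearMap.adjoint_inner_left]

lemma compress_comp {T T' : X →L[ℂ] X} (h : ∀ u ∈ U, T u ∈ V) (h' : ∀ u ∈ V, T' u ∈ W) :
    compress V W T' ∘L compress U V T = compress U W (T' ∘L T) := by
  ext u
  rw [ContinuousLinearMap.comp_apply, compress_coe h', compress_coe h, compress_coe (T := T' ∘L T) (fun u hu => h' (T u) (h u hu))]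
  rfl

lemma compress_sub (T T' : X →L[ℂ] X) :
    compress U V (T - T') = compress U V T - compress U V T' := by
  ext u; simp [compress]

lemma compress_cpt {T : X →L[ℂ] X} (h : Cpt T) : Cpt (compress U V T) :=
  (h.right _).left _

lemma compress_est {T : X →L[ℂ] X} (h : ∀ u ∈ U, T u ∈ V) (hT : Est T) :
    Est (compress U V T) := by
  obtain ⟨c, hc, K, hK, hest⟩ := hT
  refine ⟨c, hc, compress U U K, compress_cpt hK, fun u => ?_⟩
  have := hest u
  refine this.trans (le_of_eq ?_)
  simp only [add_apply, inner_add_left, map_add, ContinuousLinearMap.comp_apply,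
    ContinuousLinearMap.adjoint_inner_left]
  congr 2
  · rw [Submodule.coe_inner, compress_coe h]
  · simp only [compress, ContinuousLinearMap.comp_apply, Submodule.subtypeL_apply]
    rw [Submodule.inner_orthogonalProjectionOnto_eq_of_mem_right]

lemma compress_ker {T : X →L[ℂ] X} (h : ∀ u ∈ U, T u ∈ V) :
    Module.finrank ℂ (compress U V T : U →ₗ[ℂ] V).ker
      = Module.finrank ℂ (U ⊓ (T : X →ₗ[ℂ] X).ker : Submodule ℂ X) := by
  have : (U ⊓ (T : X →ₗ[ℂ] X).ker) = (compress U V T : U →ₗ[ℂ] V).ker.map U.subtype := by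
    ext x
    simp only [Submodule.mem_inf, LinearMap.mem_ker, Submodule.mem_map]
    constructor
    · rintro ⟨h1, h2⟩
      refine ⟨⟨x, h1⟩, ?_, rfl⟩
      apply Subtype.ext
      exact (compress_coe h _).trans h2
    · rintro ⟨y, hy, rfl⟩
      exact ⟨y.2, (compress_coe h y).symm.trans (congrArg Subtype.val hy)⟩
  rw [this]
  exact (LinearEquiv.finrank_eq (Submodule.equivMapOfInjective _ U.injective_subtype _))

/-- dimension of the kernel of `T` on `U` -/
noncomputable def dk (U : Submodule ℂ X) (T : X →L[ℂ] X) : ℤ :=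
  Module.finrank ℂ (U ⊓ (T : X →ₗ[ℂ] X).ker : Submodule ℂ X)

lemma index_compress {T : X →L[ℂ] X} (h : ∀ u ∈ U, T u ∈ V) (h' : ∀ u ∈ V, adjoint T u ∈ U)
    (hT : Est T) (hT' : Est (adjoint T)) :
    ∃ S, Par (compress U V T) S ∧
     (compress U V T : U →ₗ[ℂ] V).index = dk U T - dk V (adjoint T) := by
  have e1 := compress_est h hT
  have e2 := compress_est h' hT'
  rw [← compress_adjoint] at e2
  obtain ⟨S, hS⟩ := e1.par e2
  refine ⟨S, hS, ?_⟩
  rw [hS.index_eq, compress_adjoint, compress_ker h, compress_ker h']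
  rfl

theorem index_square {U1 U2 U3 U4 : Submodule ℂ X} [CompleteSpace U1] [CompleteSpace U2]
    [CompleteSpace U3] [CompleteSpace U4] {A C : X →L[ℂ] X}
    (hA23 : ∀ u ∈ U2, A u ∈ U3) (hA32 : ∀ u ∈ U3, adjoint A u ∈ U2)
    (hA14 : ∀ u ∈ U1, A u ∈ U4) (hA41 : ∀ u ∈ U4, adjoint A u ∈ U1)
    (hC12 : ∀ u ∈ U1, C u ∈ U2) (hC21 : ∀ u ∈ U2, adjoint C u ∈ U1)
    (hC43 : ∀ u ∈ U4, C u ∈ U3) (hC34 : ∀ u ∈ U3, adjoint C u ∈ U4)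
    (eA : Est A) (eA' : Est (adjoint A)) (eC : Est C) (eC' : Est (adjoint C))
    (hcomm : Cpt (A ∘L C - C ∘L A)) :
    (dk U2 A - dk U3 (adjoint A)) + (dk U1 C - dk U2 (adjoint C))
      = (dk U4 C - dk U3 (adjoint C)) + (dk U1 A - dk U4 (adjoint A)) := by
  obtain ⟨S1, p1, i1⟩ := index_compress hA23 hA32 eA eA'
  obtain ⟨S2, p2, i2⟩ := index_compress hA14 hA41 eA eA'
  obtain ⟨S3, p3, i3⟩ := index_compress hC12 hC21 eC eC'
  obtain ⟨S4, p4, i4⟩ := index_compress hC43 hC34 eC eC'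
  rw [← i1, ← i2, ← i3, ← i4, ← p3.index_comp p1, ← p2.index_comp p4]
  obtain ⟨S', -, h⟩ := exists_par_pert (p3.comp p1) (T' := compress U4 U3 C ∘L compress U1 U4 A) (by
    rw [compress_comp hC12 hA23, compress_comp hA14 hC43, ← compress_sub]
    exact compress_cpt hcomm)
  exact h.symm

end Compress
end SL

namespace SL
set_option linter.unusedSectionVars false

section WC
variable {ι : Type*} {E : Type*} [NormedAddCommGroup E] [InnerProductSpace ℂ E]

/-- the Hilbert space of square summable families in `E` -/
abbrev L2 (ι E : Type*) [NormedAddCommGroup E] : Type _ := lp (fun _ : ι => E) 2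

lemma wc_sum_le {a : ι → E →L[ℂ] E} {φ : ι → ι} {C : ℝ} (hC : ∀ α, ‖a α‖ ≤ C)
    (hi : Set.InjOn φ {α | a α ≠ 0}) (u : L2 ι E) (s : Finset ι) :
    ∑ α ∈ s, ‖a α (u (φ α))‖ ^ (2 : ENNReal).toReal ≤ (C * ‖u‖) ^ (2 : ENNReal).toReal := by
  classical
  rcases s.eq_empty_or_nonempty with rfl | ⟨α₀, -⟩
  · simpa using sq_nonneg _
  have hC0 : 0 ≤ C := (norm_nonneg _).trans (hC α₀)
  have h1 : ∑ α ∈ s, ‖a α (u (φ α))‖ ^ (2 : ENNReal).toReal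
      = ∑ α ∈ s with a α ≠ 0, ‖a α (u (φ α))‖ ^ (2 : ENNReal).toReal := by
    rw [Finset.sum_filter]
    refine Finset.sum_congr rfl fun α _ => ?_
    split_ifs with h
    · rfl
    · simp only [not_not] at h; simp [h]
  rw [h1]
  have h2 := lp.sum_rpow_le_norm_rpow (p := 2) (by simp) u ((s.filter (a · ≠ 0)).image φ)
  rw [Finset.sum_image (fun x hx y hy h => hi (by simpa using (Finset.mem_filter.1 hx).2)
    (by simpa using (Finset.mem_filter.1 hy).2) h)] at h2
  simp only [ENNReal.toReal_ofNat, Real.rpow_ofNat] at h2 ⊢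
  calc _ ≤ ∑ α ∈ s with a α ≠ 0, C ^ 2 * ‖u (φ α)‖ ^ 2 := by
        refine Finset.sum_le_sum fun α _ => ?_
        rw [← mul_pow]
        gcongr
        exact (ContinuousLinearMap.le_opNorm _ _).trans (by gcongr; exact hC α)
    _ ≤ _ := by rw [← Finset.mul_sum, mul_pow]; gcongr

/-- weighted composition operators -/
noncomputable def wc (a : ι → E →L[ℂ] E) (φ : ι → ι) (C : ℝ) (hC : ∀ α, ‖a α‖ ≤ C)
    (hi : Set.InjOn φ {α | a α ≠ 0}) : L2 ι E →L[ℂ] L2 ι E :=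
  LinearMap.mkContinuous
    { toFun := fun u => ⟨fun α => a α (u (φ α)), memℓp_gen' (wc_sum_le hC hi u)⟩
      map_add' := fun u v => by ext α; simp; rfl
      map_smul' := fun c u => by ext α; simp } |C| (fun u => by
        refine lp.norm_le_of_forall_sum_le (by simp) (by positivity) fun s => ?_
        exact wc_sum_le (fun α => (hC α).trans (le_abs_self C)) hi u s)

lemma wc_apply (a : ι → E →L[ℂ] E) (φ : ι → ι) (C : ℝ) (hC : ∀ α, ‖a α‖ ≤ C)
    (hi : Set.InjOn φ {α | a α ≠ 0}) (u : L2 ι E) (α : ι) :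
    wc a φ C hC hi u α = a α (u (φ α)) := rfl

lemma wc_norm_le {a : ι → E →L[ℂ] E} {φ : ι → ι} {C : ℝ} (hC0 : 0 ≤ C) (hC : ∀ α, ‖a α‖ ≤ C)
    (hi : Set.InjOn φ {α | a α ≠ 0}) (W : L2 ι E →L[ℂ] L2 ι E)
    (hW : ∀ u α, W u α = a α (u (φ α))) : ‖W‖ ≤ C := by
  refine ContinuousLinearMap.opNorm_le_bound _ hC0 fun u => ?_
  refine lp.norm_le_of_forall_sum_le (by simp) (by positivity) fun s => ?_
  simp only [hW]
  exact wc_sum_le hC hi u s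

lemma FR.sum {X Y : Type*} [NormedAddCommGroup X] [InnerProductSpace ℂ X]
  [NormedAddCommGroup Y] [InnerProductSpace ℂ Y] {κ : Type*} (s : Finset κ) {K : κ → X →L[ℂ] Y}
    (h : ∀ i ∈ s, FR (K i)) : FR (∑ i ∈ s, K i) := by
  classical
  induction s using Finset.induction_on with
  | empty => simpa using FR.zero
  | insert a s ha ih =>
    rw [Finset.sum_insert ha]
    exact (h a (by simp)).add (ih fun i hi => h i (by simp [hi]))

lemma wc_cpt [FiniteDimensional ℂ E] {a : ι → E →L[ℂ] E} {φ : ι → ι}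
    (ht : ∀ ε > 0, {α | ε < ‖a α‖}.Finite)
    (hi : Set.InjOn φ {α | a α ≠ 0}) (W : L2 ι E →L[ℂ] L2 ι E)
    (hW : ∀ u α, W u α = a α (u (φ α))) : Cpt W := by
  classical
  intro ε hε
  set s := (ht ε hε).toFinset with hs
  refine ⟨∑ α ∈ s, (lp.singleContinuousLinearMap ℂ (fun _ : ι => E) 2 α) ∘L a α ∘L
    (lp.evalCLM ℂ (fun _ : ι => E) 2 (φ α)), FR.sum _ fun α _ => ?_, ?_⟩
  · apply FR.left
    apply FR.right
    exact LinearMap.HasFiniteRange.of_finite_dom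
  · refine wc_norm_le (a := fun α => if α ∈ s then 0 else a α) (φ := φ) hε.le (fun α => ?_) ?_ _ ?_
    · split_ifs with h
      · simpa using hε.le
      · simpa [hs] using h
    · intro x hx y hy h
      refine hi ?_ ?_ h
      · simp only [Set.mem_ofPred_eq, ne_eq, ite_eq_left_iff, not_forall] at hx; exact hx.2
      · simp only [Set.mem_ofPred_eq, ne_eq, ite_eq_left_iff, not_forall] at hy; exact hy.2
    · intro u α
      simp only [sub_apply, sum_apply, ContinuousLinearMap.comp_apply, lp.coeFn_sub, Pi.sub_apply, hW,
        lp.coeFn_sum, Finset.sum_apply, lp.singleContinuousLinearMap_apply, lp.single_apply]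
      rw [Finset.sum_pi_single]
      split_ifs with h
      · simp [lp.evalCLM]
      · simp

/-- constant operator acting pointwise -/
noncomputable def Mop (ι : Type*) (a : E →L[ℂ] E) : L2 ι E →L[ℂ] L2 ι E :=
  wc (fun _ => a) id ‖a‖ (fun _ => le_rfl) (Set.injOn_id _)

@[simp] lemma Mop_apply (a : E →L[ℂ] E) (u : L2 ι E) (α : ι) : Mop ι a u α = a (u α) := rfl

lemma Mop_adjoint [CompleteSpace E] (a : E →L[ℂ] E) :
    ContinuousLinearMap.adjoint (Mop ι a) = Mop ι (ContinuousLinearMap.adjoint a) := by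
  symm
  rw [ContinuousLinearMap.eq_adjoint_iff]
  intro x y
  simp [lp.inner_eq_tsum, ContinuousLinearMap.adjoint_inner_left]

end WC
end SL

namespace SL
set_option linter.unusedSectionVars false
open ContinuousLinearMap (adjoint)

section WCS
variable {ι : Type*} {E : Type*} [NormedAddCommGroup E] [InnerProductSpace ℂ E]

lemma norm_smul_id_le (r : ℝ) : ‖(r : ℂ) • ContinuousLinearMap.id ℂ E‖ ≤ |r| := by
  calc _ ≤ ‖(r : ℂ)‖ * ‖ContinuousLinearMap.id ℂ E‖ := norm_smul_le _ _
    _ ≤ ‖(r : ℂ)‖ * 1 := by gcongr; exact ContinuousLinearMap.norm_id_le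
    _ = |r| := by simp

/-- weighted composition operators with scalar weights -/
noncomputable def wcs (E : Type*) [NormedAddCommGroup E] [InnerProductSpace ℂ E] (w : ι → ℝ)
    (φ : ι → ι) (C : ℝ) (hC : ∀ α, |w α| ≤ C)
    (hi : Set.InjOn φ {α | w α ≠ 0}) : L2 ι E →L[ℂ] L2 ι E :=
  wc (fun α => (w α : ℂ) • ContinuousLinearMap.id ℂ E) φ C
    (fun α => (norm_smul_id_le _).trans (hC α))
    (hi.mono fun α h => by
      simp only [Set.mem_ofPred_eq] at h ⊢
      rintro h'; simp [h'] at h)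

@[simp] lemma wcs_apply (w : ι → ℝ) (φ : ι → ι) (C : ℝ) (hC : ∀ α, |w α| ≤ C)
    (hi : Set.InjOn φ {α | w α ≠ 0}) (u : L2 ι E) (α : ι) :
    wcs E w φ C hC hi u α = (w α : ℂ) • u (φ α) := rfl

lemma wcs_cpt [FiniteDimensional ℂ E] {w : ι → ℝ} {φ : ι → ι}
    (ht : ∀ ε > 0, {α | ε < |w α|}.Finite)
    (hi : Set.InjOn φ {α | w α ≠ 0}) (W : L2 ι E →L[ℂ] L2 ι E)
    (hW : ∀ u α, W u α = (w α : ℂ) • u (φ α)) : Cpt W := by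
  refine wc_cpt (a := fun α => (w α : ℂ) • ContinuousLinearMap.id ℂ E) (φ := φ) ?_ ?_ W hW
  · intro ε hε
    exact (ht ε hε).subset fun α h => lt_of_lt_of_le h (norm_smul_id_le _)
  · refine hi.mono fun α h => ?_
    simp only [Set.mem_ofPred_eq] at h ⊢
    rintro h'; simp [h'] at h

end WCS

section Index
variable {m : ℕ}

/-- raising an index -/
def up (i : Fin m) (α : Fin m → ℕ) : Fin m → ℕ := α + Pi.single i 1
/-- lowering an index -/
def dn (i : Fin m) (α : Fin m → ℕ) : Fin m → ℕ := α - Pi.single i 1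
/-- total degree -/
def deg (α : Fin m → ℕ) : ℕ := ∑ i, α i

@[simp] lemma dn_up (i : Fin m) (α : Fin m → ℕ) : dn i (up i α) = α := by
  simp [dn, up]
lemma up_inj (i : Fin m) : Function.Injective (up i) := fun a b h => by
  simpa using congrArg (dn i) h
@[simp] lemma up_self (i : Fin m) (α : Fin m → ℕ) : up i α i = α i + 1 := by simp [up]
lemma up_ne {i j : Fin m} (h : j ≠ i) (α : Fin m → ℕ) : up i α j = α j := by simp [up, h]
@[simp] lemma deg_up (i : Fin m) (α : Fin m → ℕ) : deg (up i α) = deg α + 1 := by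
  simp [deg, up, Finset.sum_add_distrib]
lemma up_comm (i j : Fin m) (α : Fin m → ℕ) : up i (up j α) = up j (up i α) := by
  simp only [up]; abel
lemma exists_up {i : Fin m} {β : Fin m → ℕ} (h : β i ≠ 0) : ∃ α, β = up i α := by
  refine ⟨dn i β, ?_⟩
  ext j
  by_cases hj : j = i
  · subst hj; simp [up, dn]; omega
  · simp [up, dn, hj]
lemma le_deg (α : Fin m → ℕ) (i : Fin m) : α i ≤ deg α :=
  Finset.single_le_sum (f := α) (fun _ _ => Nat.zero_le _) (Finset.mem_univ i)
lemma dn_up_ne {i j : Fin m} {β : Fin m → ℕ} (hb : β i ≠ 0) :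
    dn i (up j β) = up j (dn i β) := by
  obtain ⟨α, rfl⟩ := exists_up hb
  rw [up_comm, dn_up, dn_up]
lemma dn_ne {i j : Fin m} (h : j ≠ i) (β : Fin m → ℕ) : dn i β j = β j := by simp [dn, h]

lemma finite_of_bound {w : (Fin m → ℕ) → ℝ} {C : ℝ} (h : ∀ α, |w α| ≤ C / (deg α + 1)) :
    ∀ ε > 0, {α | ε < |w α|}.Finite := by
  intro ε hε
  obtain ⟨R, hR⟩ := exists_nat_gt (C / ε)
  refine (Set.finite_Iic (fun _ : Fin m => R)).subset fun α hα i => ?_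
  simp only [Set.mem_ofPred_eq] at hα
  have h1 := hα.trans_le (h α)
  rw [lt_div_iff₀ (by positivity)] at h1
  rw [div_lt_iff₀ hε] at hR
  have h2 : (deg α + 1 : ℝ) < R := by
    by_contra hc
    push Not at hc
    nlinarith
  have h3 : deg α + 1 < R := by exact_mod_cast h2
  have := le_deg α i
  change α i ≤ R
  omega

/-- the basic weight -/
noncomputable def rho (α : Fin m → ℕ) : ℝ := 1 / √((deg α : ℝ) + m)

lemma rho_sq_mul [NeZero m] (α : Fin m → ℕ) : rho α ^ 2 * ((deg α : ℝ) + m) = 1 := by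
  have : (0 : ℝ) < m := by exact_mod_cast Nat.pos_of_ne_zero (NeZero.ne m)
  rw [rho, div_pow, Real.sq_sqrt (by positivity)]
  field_simp

lemma rho_nonneg (α : Fin m → ℕ) : 0 ≤ rho α := by rw [rho]; positivity
lemma rho_pos [NeZero m] (α : Fin m → ℕ) : 0 < rho α := by
  have : (0 : ℝ) < m := by exact_mod_cast Nat.pos_of_ne_zero (NeZero.ne m)
  rw [rho]; positivity
lemma rho_congr {α β : Fin m → ℕ} (h : deg α = deg β) : rho α = rho β := by rw [rho, rho, h]

lemma zsw_le (i : Fin m) (α : Fin m → ℕ) : |√((α i : ℝ) + 1) * rho α| ≤ 1 := by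
  have : NeZero m := ⟨by have := i.2; omega⟩
  have h1 := le_deg α i
  have h2 : (1 : ℝ) ≤ m := by exact_mod_cast Nat.one_le_iff_ne_zero.2 (NeZero.ne m)
  have h3 : (α i : ℝ) ≤ deg α := by exact_mod_cast h1
  rw [abs_of_nonneg (mul_nonneg (Real.sqrt_nonneg _) (rho_nonneg _)), rho, mul_one_div,
    div_le_one (by positivity)]
  exact Real.sqrt_le_sqrt (by linarith)

/-- weight of Z -/
noncomputable def zw (i : Fin m) (β : Fin m → ℕ) : ℝ := √(β i : ℝ) * rho (dn i β)

@[simp] lemma zw_up (i : Fin m) (α : Fin m → ℕ) : zw i (up i α) = √((α i : ℝ) + 1) * rho α := by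
  simp [zw]

lemma zw_zero {i : Fin m} {β : Fin m → ℕ} (h : β i = 0) : zw i β = 0 := by simp [zw, h]

lemma dn_injOn (i : Fin m) : Set.InjOn (dn i) {β | β i ≠ 0} := by
  intro a ha b hb h
  obtain ⟨a, rfl⟩ := exists_up ha
  obtain ⟨b, rfl⟩ := exists_up hb
  simp at h; rw [h]

variable (E : Type*) [NormedAddCommGroup E] [InnerProductSpace ℂ E]

/-- the multiplication operator -/
noncomputable def Z (i : Fin m) : L2 (Fin m → ℕ) E →L[ℂ] L2 (Fin m → ℕ) E :=
  wcs E (zw i) (dn i) 1 (fun β => by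
    by_cases h : β i = 0
    · simp [zw_zero h]
    · obtain ⟨a, rfl⟩ := exists_up h
      rw [zw_up]; exact zsw_le i a)
    ((dn_injOn i).mono fun β h hz => h (zw_zero hz))

/-- its adjoint -/
noncomputable def Zs (i : Fin m) : L2 (Fin m → ℕ) E →L[ℂ] L2 (Fin m → ℕ) E :=
  wcs E (fun α => √((α i : ℝ) + 1) * rho α) (up i) 1 (zsw_le i) (up_inj i).injOn

lemma rho_up_le [NeZero m] (i : Fin m) (α : Fin m → ℕ) : rho (up i α) ≤ rho α := by
  have : (0 : ℝ) < m := by exact_mod_cast Nat.pos_of_ne_zero (NeZero.ne m)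
  rw [rho, rho]
  apply one_div_le_one_div_of_le (by positivity)
  apply Real.sqrt_le_sqrt
  simp

/-- an approximation of Z -/
noncomputable def Yo (i : Fin m) : L2 (Fin m → ℕ) E →L[ℂ] L2 (Fin m → ℕ) E :=
  wcs E (fun β => √(β i : ℝ) * rho β) (dn i) 1 (fun β => by
    have : NeZero m := ⟨by have := i.2; omega⟩
    by_cases h : β i = 0
    · simp [h]
    · obtain ⟨a, rfl⟩ := exists_up h
      refine le_trans ?_ (zsw_le i a)
      rw [abs_of_nonneg (mul_nonneg (Real.sqrt_nonneg _) (rho_nonneg _)),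
        abs_of_nonneg (mul_nonneg (Real.sqrt_nonneg _) (rho_nonneg _))]
      rw [up_self]
      push_cast
      gcongr
      exact rho_up_le i a)
    ((dn_injOn i).mono fun β h (h' : β i = 0) => h (by simp [h']))

variable {E}
lemma Z_apply (i : Fin m) (u : L2 (Fin m → ℕ) E) (β : Fin m → ℕ) :
    Z E i u β = (zw i β : ℂ) • u (dn i β) := rfl
lemma Z_apply_up (i : Fin m) (u : L2 (Fin m → ℕ) E) (α : Fin m → ℕ) :
    Z E i u (up i α) = ((√((α i : ℝ) + 1) * rho α : ℝ) : ℂ) • u α := by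
  rw [Z_apply, zw_up, dn_up]
lemma Z_apply_zero {i : Fin m} (u : L2 (Fin m → ℕ) E) {β : Fin m → ℕ} (h : β i = 0) :
    Z E i u β = 0 := by
  rw [Z_apply, zw_zero h]; simp
lemma Zs_apply (i : Fin m) (u : L2 (Fin m → ℕ) E) (α : Fin m → ℕ) :
    Zs E i u α = ((√((α i : ℝ) + 1) * rho α : ℝ) : ℂ) • u (up i α) := rfl
lemma Yo_apply (i : Fin m) (u : L2 (Fin m → ℕ) E) (β : Fin m → ℕ) :
    Yo E i u β = ((√(β i : ℝ) * rho β : ℝ) : ℂ) • u (dn i β) := rfl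

lemma Z_adjoint [CompleteSpace E] (i : Fin m) : adjoint (Z E i) = Zs E i := by
  symm
  rw [ContinuousLinearMap.eq_adjoint_iff]
  intro x y
  rw [lp.inner_eq_tsum, lp.inner_eq_tsum]
  rw [← (up_inj i).tsum_eq (f := fun β => inner ℂ (x β) ((Z E i y) β))]
  · refine tsum_congr fun α => ?_
    rw [Z_apply_up, Zs_apply, inner_smul_left, inner_smul_right, Complex.conj_ofReal]
  · intro β hβ
    by_contra hc
    apply hβ
    have : β i = 0 := by
      by_contra h
      obtain ⟨a, rfl⟩ := exists_up h
      exact hc ⟨a, rfl⟩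
    simp [Z_apply_zero y this]

lemma Zs_adjoint [CompleteSpace E] (i : Fin m) : adjoint (Zs E i) = Z E i := by
  rw [← Z_adjoint, ContinuousLinearMap.adjoint_adjoint]

lemma Z_comm (i j : Fin m) : Z E i ∘L Z E j = Z E j ∘L Z E i := by
  by_cases hij : i = j
  · rw [hij]
  ext u β : 3
  simp only [ContinuousLinearMap.comp_apply]
  by_cases hi : β i = 0
  · rw [Z_apply_zero _ hi, Z_apply, Z_apply_zero (i := i)]
    · simp
    · rw [dn_ne hij, hi]
  by_cases hj : β j = 0
  · rw [Z_apply_zero _ hj, Z_apply, Z_apply_zero (i := j)]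
    · simp
    · rw [dn_ne (Ne.symm hij), hj]
  obtain ⟨a, rfl⟩ := exists_up hi
  rw [up_ne (Ne.symm hij)] at hj
  obtain ⟨b, rfl⟩ := exists_up hj
  rw [Z_apply_up, Z_apply_up, up_comm, Z_apply_up, Z_apply_up, smul_smul, smul_smul]
  congr 1
  rw [up_ne hij, up_ne (Ne.symm hij), rho_congr (α := up j b) (β := up i b) (by simp)]
  push_cast
  ring

lemma Mop_Z (a : E →L[ℂ] E) (i : Fin m) :
    Mop _ a ∘L Z E i = Z E i ∘L Mop _ a := by
  ext u α : 3
  simp [Z_apply]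
lemma Mop_Zs (a : E →L[ℂ] E) (i : Fin m) :
    Mop _ a ∘L Zs E i = Zs E i ∘L Mop _ a := by
  ext u α : 3
  simp [Zs_apply]

lemma Yo_sub_cpt [FiniteDimensional ℂ E] (i : Fin m) : Cpt (Yo E i - Z E i) := by
  have : NeZero m := ⟨by have := i.2; omega⟩
  have hm : (1 : ℝ) ≤ m := by exact_mod_cast Nat.one_le_iff_ne_zero.2 (NeZero.ne m)
  refine wcs_cpt (w := fun β => √(β i : ℝ) * rho β - zw i β) (φ := dn i)
    (finite_of_bound (C := 2) fun β => ?_) ?_ _ ?_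
  · by_cases h : β i = 0
    · simp [zw_zero h, h]; positivity
    obtain ⟨a, rfl⟩ := exists_up h
    rw [zw_up]
    set x : ℝ := (deg a : ℝ) + m with hx
    have hx1 : 1 ≤ x := by rw [hx]; have : (0:ℝ) ≤ deg a := by positivity
                           linarith
    have hle : (a i : ℝ) + 1 ≤ x + 1 := by
      have : (a i : ℝ) ≤ deg a := by exact_mod_cast le_deg a i
      rw [hx]; linarith
    have e1 : rho a = 1 / √x := rfl
    have e2 : rho (up i a) = 1 / √(x + 1) := by
      rw [rho, hx, deg_up]; congr 2; push_cast; ring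
    rw [abs_sub_comm, up_self, e1, e2]
    push_cast
    rw [← mul_sub]
    have hs : √x ≤ √(x + 1) := Real.sqrt_le_sqrt (by linarith)
    have hpos : 0 < √x := Real.sqrt_pos.2 (by linarith)
    have hpos' : 0 < √(x + 1) := Real.sqrt_pos.2 (by linarith)
    have hd : 0 ≤ 1 / √x - 1 / √(x + 1) := sub_nonneg.2 (one_div_le_one_div_of_le hpos hs)
    rw [abs_of_nonneg (by positivity)]
    calc _ ≤ √(x + 1) * (1 / √x - 1 / √(x + 1)) := by gcongr
      _ = √(x + 1) / √x - 1 := by field_simp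
      _ ≤ 1 / x := by
        rw [sub_le_iff_le_add, div_le_iff₀ hpos, Real.sqrt_le_left (by positivity)]
        rw [mul_pow, Real.sq_sqrt (by linarith)]
        have : (0:ℝ) < x := by linarith
        field_simp
        nlinarith
      _ ≤ _ := by
        rw [div_le_div_iff₀ (by linarith) (by positivity)]
        simp only [deg_up]; push_cast
        rw [hx]; have : (0:ℝ) ≤ deg a := by positivity
        linarith
  · refine (dn_injOn i).mono fun β h (h' : β i = 0) => h (by simp [h', zw_zero h'])
  · intro u α
    simp only [sub_apply, lp.coeFn_sub, Pi.sub_apply, Yo_apply, Z_apply]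
    rw [← sub_smul]; push_cast; rfl

lemma comm_cpt [FiniteDimensional ℂ E] (i j : Fin m) :
    Cpt (Zs E j ∘L Z E i - Z E i ∘L Zs E j) := by
  have : NeZero m := ⟨by have := i.2; omega⟩
  have hm : (1 : ℝ) ≤ m := by exact_mod_cast Nat.one_le_iff_ne_zero.2 (NeZero.ne m)
  by_cases hij : i = j
  · subst hij
    refine wcs_cpt (w := fun β => ((β i : ℝ) + 1) * rho β ^ 2 - (β i : ℝ) * rho (dn i β) ^ 2)
      (φ := id) (finite_of_bound (C := 2) fun β => ?_) (Set.injOn_id _) _ ?_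
    · have hr := rho_sq_mul β
      have hr' : rho β ^ 2 = 1 / ((deg β : ℝ) + m) := by rw [eq_div_iff (by positivity)]; exact hr
      by_cases h : β i = 0
      · rw [hr']
        simp only [h, Nat.cast_zero, zero_add, one_mul, zero_mul, sub_zero]
        rw [abs_of_nonneg (by positivity), div_le_div_iff₀ (by positivity) (by positivity)]
        have : (0:ℝ) ≤ deg β := by positivity
        linarith
      · obtain ⟨a, rfl⟩ := exists_up h
        have hs := rho_sq_mul a
        have hs' : rho a ^ 2 = 1 / ((deg a : ℝ) + m) := by rw [eq_div_iff (by positivity)]; exact hs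
        rw [dn_up, hs', hr', up_self, deg_up]
        push_cast
        set x : ℝ := (deg a : ℝ) + m with hx
        have hx1 : 1 ≤ x := by rw [hx]; have : (0:ℝ) ≤ deg a := by positivity
                               linarith
        have hle : (a i : ℝ) + 1 ≤ x := by
          have : (a i : ℝ) ≤ deg a := by exact_mod_cast le_deg a i
          rw [hx]; linarith
        have h0 : (0 : ℝ) ≤ a i := by positivity
        have ex : (deg a : ℝ) + 1 + m = x + 1 := by rw [hx]; ring
        have ed : (deg a : ℝ) + 1 + 1 ≤ x + 1 := by rw [hx]; linarith
        rw [ex]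
        have e : ((a i : ℝ) + 1 + 1) * (1 / (x + 1)) - ((a i : ℝ) + 1) * (1 / x)
            = (x - (a i + 1)) / (x * (x + 1)) := by field_simp; ring
        have hn : 0 ≤ x - ((a i : ℝ) + 1) := by linarith
        rw [e, abs_of_nonneg (by positivity)]
        calc _ ≤ x / (x * (x + 1)) := by gcongr; linarith
          _ = 1 / (x + 1) := by field_simp
          _ ≤ _ := by
            rw [div_le_div_iff₀ (by linarith) (by positivity)]; linarith
    · intro u β
      simp only [sub_apply, lp.coeFn_sub, Pi.sub_apply, ContinuousLinearMap.comp_apply, id]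
      rw [Zs_apply, Z_apply_up, smul_smul, ← Complex.ofReal_mul]
      have e1 : √((β i : ℝ) + 1) * rho β * (√((β i : ℝ) + 1) * rho β) = ((β i : ℝ) + 1) * rho β ^ 2 := by
        have := Real.mul_self_sqrt (show (0:ℝ) ≤ (β i : ℝ) + 1 by positivity)
        linear_combination rho β ^ 2 * this
      rw [e1]
      by_cases h : β i = 0
      · rw [Z_apply_zero _ h]; simp [h]
      · obtain ⟨a, rfl⟩ := exists_up h
        rw [Z_apply_up, Zs_apply, smul_smul, ← sub_smul, dn_up, ← Complex.ofReal_mul,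
          ← Complex.ofReal_sub]
        congr 2
        have := Real.mul_self_sqrt (show (0:ℝ) ≤ (a i : ℝ) + 1 by positivity)
        rw [up_self]; push_cast
        linear_combination - rho a ^ 2 * this
  · refine wcs_cpt (w := fun β => √((β j : ℝ) + 1) * √(β i : ℝ) * (rho β ^ 2 - rho (dn i β) ^ 2))
      (φ := fun β => up j (dn i β)) (finite_of_bound (C := 2) fun β => ?_) ?_ _ ?_
    · by_cases h : β i = 0
      · simp [h]; positivity
      · obtain ⟨a, rfl⟩ := exists_up h
        have hr := rho_sq_mul (up i a)
        have hr' : rho (up i a) ^ 2 = 1 / ((deg (up i a) : ℝ) + m) := by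
          rw [eq_div_iff (by positivity)]; exact hr
        have hs := rho_sq_mul a
        have hs' : rho a ^ 2 = 1 / ((deg a : ℝ) + m) := by rw [eq_div_iff (by positivity)]; exact hs
        rw [dn_up, hs', hr', up_self, deg_up, up_ne (Ne.symm hij)]
        push_cast
        set x : ℝ := (deg a : ℝ) + m with hx
        have hx1 : 1 ≤ x := by rw [hx]; have : (0:ℝ) ≤ deg a := by positivity
                               linarith
        have hle : (a i : ℝ) + 1 ≤ x := by
          have : (a i : ℝ) ≤ deg a := by exact_mod_cast le_deg a i
          rw [hx]; linarith
        have hle' : (a j : ℝ) + 1 ≤ x := by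
          have : (a j : ℝ) ≤ deg a := by exact_mod_cast le_deg a j
          rw [hx]; linarith
        have ex : (deg a : ℝ) + 1 + m = x + 1 := by rw [hx]; ring
        have ed : (deg a : ℝ) + 1 + 1 ≤ x + 1 := by rw [hx]; linarith
        rw [ex]
        have e : 1 / (x + 1) - 1 / x = - (1 / (x * (x + 1))) := by field_simp; ring
        rw [e, mul_neg, abs_neg, abs_of_nonneg (by positivity)]
        calc _ ≤ √x * √x * (1 / (x * (x + 1))) := by gcongr
          _ = 1 / (x + 1) := by rw [Real.mul_self_sqrt (by linarith)]; field_simp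
          _ ≤ _ := by
            rw [div_le_div_iff₀ (by linarith) (by positivity)]; linarith
    · refine Set.InjOn.mono (s₂ := {β | β i ≠ 0}) (fun β h h' => h (by simp [h'])) ?_
      intro a ha b hb h
      exact dn_injOn i ha hb (up_inj j h)
    · intro u β
      simp only [sub_apply, lp.coeFn_sub, Pi.sub_apply, ContinuousLinearMap.comp_apply]
      by_cases h : β i = 0
      · rw [Zs_apply, Z_apply_zero _ h, Z_apply_zero]
        · simp [h]
        · rw [up_ne hij, h]
      · obtain ⟨a, rfl⟩ := exists_up h
        rw [Z_apply_up, Zs_apply, Zs_apply, dn_up, up_comm, Z_apply_up, smul_smul, smul_smul,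
          ← sub_smul, up_ne (Ne.symm hij), ← Complex.ofReal_mul, ← Complex.ofReal_mul,
          ← Complex.ofReal_sub]
        congr 2
        rw [up_ne hij, rho_congr (α := up j a) (β := up i a) (by simp), up_self]
        push_cast
        ring

end Index
end SL

namespace SL
set_option linter.unusedSectionVars false
open MeasureTheory
open scoped Real ComplexConjugate

section Gauss

/-- Gaussian density on the plane -/
noncomputable def gd (z : ℂ) : ℝ := π⁻¹ * Real.exp (-‖z‖ ^ 2)

lemma gd_cont : Continuous gd := by unfold gd; fun_prop

lemma gd_int_abs (a : ℕ) : ∫ z : ℂ, ‖z‖ ^ a * gd z = Real.Gamma (((a : ℝ) + 2) / 2) := by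
  have h := Complex.integral_rpow_mul_exp_neg_rpow (p := 2) (q := a) (by norm_num)
    (by have : (0:ℝ) ≤ a := by positivity
        linarith)
  simp only [Real.rpow_natCast, Real.rpow_ofNat] at h
  have : (fun z : ℂ => ‖z‖ ^ a * gd z) = fun z => π⁻¹ * (‖z‖ ^ a * Real.exp (-‖z‖ ^ 2)) := by
    ext z; rw [gd]; ring
  rw [this, integral_const_mul, h]
  field_simp

lemma gd_integrable_abs (a : ℕ) : Integrable (fun z : ℂ => ‖z‖ ^ a * gd z) := by
  by_contra h
  have h1 := gd_int_abs a
  rw [integral_undef h] at h1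
  have : 0 < Real.Gamma (((a : ℝ) + 2) / 2) := Real.Gamma_pos_of_pos (by positivity)
  linarith

lemma gd_integrable (a b : ℕ) : Integrable (fun z : ℂ => conj z ^ a * z ^ b * (gd z : ℂ)) := by
  refine (gd_integrable_abs (a + b)).mono' ?_ (Filter.Eventually.of_forall fun z => ?_)
  · apply Continuous.aestronglyMeasurable
    have := gd_cont
    fun_prop
  · have : 0 ≤ gd z := by unfold gd; positivity
    simp [abs_of_nonneg this, pow_add]

lemma gd_int (a b : ℕ) : ∫ z : ℂ, conj z ^ a * z ^ b * (gd z : ℂ)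
    = if a = b then (a.factorial : ℂ) else 0 := by
  split_ifs with h
  · subst h
    have h1 := gd_int_abs (2 * a)
    have e : (((2 * a : ℕ) : ℝ) + 2) / 2 = a + 1 := by push_cast; ring
    rw [e, Real.Gamma_nat_eq_factorial] at h1
    have h2 := congrArg (fun x : ℝ => (x : ℂ)) h1
    rw [← integral_complex_ofReal] at h2
    rw [Complex.ofReal_natCast] at h2
    rw [← h2]
    congr 1
    ext z
    push_cast
    rw [← mul_pow, pow_mul]
    congr 2
    rw [mul_comm, Complex.mul_conj, Complex.normSq_eq_norm_sq]
    push_cast; rfl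
  · set θ : ℝ := π / ((b : ℝ) - a) with hθ
    have hne : (b : ℝ) - a ≠ 0 := sub_ne_zero.2 (fun h' => h (by exact_mod_cast h'.symm))
    have hmp := (rotation (Circle.exp θ)).measurePreserving
    have hI := hmp.integral_comp' (f := (rotation (Circle.exp θ)).toHomeomorph.toMeasurableEquiv)
      (fun z : ℂ => conj z ^ a * z ^ b * (gd z : ℂ))
    have e : ∀ z : ℂ, conj (rotation (Circle.exp θ) z) ^ a * (rotation (Circle.exp θ) z) ^ b *
        (gd (rotation (Circle.exp θ) z) : ℂ) = (-1) * (conj z ^ a * z ^ b * (gd z : ℂ)) := by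
      intro z
      have e1 : gd (rotation (Circle.exp θ) z) = gd z := by
        simp [gd]
      rw [e1, rotation_apply, map_mul, mul_pow, mul_pow]
      have e2 : conj (Circle.exp θ : ℂ) ^ a * (Circle.exp θ : ℂ) ^ b = -1 := by
        rw [Circle.coe_exp, ← Complex.exp_conj, ← Complex.exp_nat_mul, ← Complex.exp_nat_mul,
          ← Complex.exp_add, ← Complex.exp_pi_mul_I]
        congr 1
        have : (π : ℂ) = (θ : ℂ) * ((b : ℂ) - a) := by
          have : π = θ * ((b : ℝ) - a) := by rw [hθ]; field_simp
          exact_mod_cast congrArg (fun x : ℝ => (x : ℂ)) this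
        rw [this]
        simp
        ring
      linear_combination (conj z ^ a * z ^ b * (gd z : ℂ)) * e2
    have hI' : ∫ z : ℂ, (-1) * (conj z ^ a * z ^ b * (gd z : ℂ))
        = ∫ z : ℂ, conj z ^ a * z ^ b * (gd z : ℂ) := by
      rw [← hI]
      exact integral_congr_ae (Filter.Eventually.of_forall fun z => (e z).symm)
    rw [integral_const_mul] at hI'
    have := hI'
    linear_combination (-1/2) * this

variable {m : ℕ}

/-- Gaussian density -/
noncomputable def Gd (z : Fin m → ℂ) : ℝ := ∏ i, gd (z i)

lemma Gd_nonneg (z : Fin m → ℂ) : 0 ≤ Gd z :=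
  Finset.prod_nonneg fun i _ => by unfold gd; positivity

/-- normalized monomials -/
noncomputable def phi (α : Fin m → ℕ) (z : Fin m → ℂ) : ℂ :=
  ∏ i, (z i ^ α i * ((√((α i).factorial : ℝ))⁻¹ : ℝ))

lemma phi_up (i : Fin m) (α : Fin m → ℕ) (z : Fin m → ℂ) :
    z i * phi α z = (√((α i : ℝ) + 1) : ℂ) * phi (up i α) z := by
  simp only [phi]
  rw [← Finset.mul_prod_erase _ _ (Finset.mem_univ i), ← Finset.mul_prod_erase _ (fun j => z j ^ up i α j * _) (Finset.mem_univ i)]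
  have : ∀ j ∈ Finset.univ.erase i, z j ^ up i α j * (((√((up i α j).factorial : ℝ))⁻¹ : ℝ) : ℂ)
      = z j ^ α j * (((√((α j).factorial : ℝ))⁻¹ : ℝ) : ℂ) := by
    intro j hj
    rw [up_ne (Finset.ne_of_mem_erase hj)]
  rw [Finset.prod_congr rfl this, up_self, Nat.factorial_succ]
  have h1 : (√((α i : ℝ) + 1)) ≠ 0 := by positivity
  have e : √((α i : ℝ) + 1) * (√(((α i + 1) * (α i).factorial : ℕ) : ℝ))⁻¹ = (√((α i).factorial : ℝ))⁻¹ := by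
    push_cast
    rw [Real.sqrt_mul (by positivity), mul_inv, ← mul_assoc, mul_inv_cancel₀ h1, one_mul]
  have e' : ((√((α i : ℝ) + 1) : ℝ) : ℂ) * (((√(((α i + 1) * (α i).factorial : ℕ) : ℝ))⁻¹ : ℝ) : ℂ) = (((√((α i).factorial : ℝ))⁻¹ : ℝ) : ℂ) := by
    exact_mod_cast congrArg (fun x : ℝ => (x : ℂ)) e
  rw [← e', pow_succ]
  ring

lemma phi_prod (α β : Fin m → ℕ) (z : Fin m → ℂ) : conj (phi α z) * phi β z * (Gd z : ℂ)
    = ∏ i, ((((√((α i).factorial : ℝ))⁻¹ * (√((β i).factorial : ℝ))⁻¹ : ℝ) : ℂ) *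
      (conj (z i) ^ α i * z i ^ β i * (gd (z i) : ℂ))) := by
  simp only [phi, Gd, map_prod, Complex.ofReal_prod]
  rw [← Finset.prod_mul_distrib, ← Finset.prod_mul_distrib]
  refine Finset.prod_congr rfl fun i _ => ?_
  simp only [map_mul, map_pow, Complex.conj_ofReal]
  push_cast
  ring

lemma phi_integrable (α β : Fin m → ℕ) :
    Integrable (fun z : Fin m → ℂ => conj (phi α z) * phi β z * (Gd z : ℂ)) := by
  simp_rw [phi_prod]
  exact Integrable.fintype_prod fun i => (gd_integrable _ _).const_mul _

lemma phi_int (α β : Fin m → ℕ) :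
    ∫ z : Fin m → ℂ, conj (phi α z) * phi β z * (Gd z : ℂ) = if α = β then 1 else 0 := by
  simp_rw [phi_prod]
  rw [integral_fintype_prod_volume_eq_prod (f := fun i z => (((√((α i).factorial : ℝ))⁻¹ * (√((β i).factorial : ℝ))⁻¹ : ℝ) : ℂ) *
      (conj z ^ α i * z ^ β i * (gd z : ℂ)))]
  simp_rw [integral_const_mul, gd_int]
  split_ifs with h
  · subst h
    refine Finset.prod_eq_one fun i _ => ?_
    rw [if_pos rfl, ← mul_inv, Real.mul_self_sqrt (by positivity)]
    push_cast
    exact inv_mul_cancel₀ (by exact_mod_cast (Nat.factorial_ne_zero _))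
  · obtain ⟨i, hi⟩ := Function.ne_iff.1 h
    refine Finset.prod_eq_zero (Finset.mem_univ i) ?_
    rw [if_neg hi, mul_zero]

variable {E : Type*} [NormedAddCommGroup E] [InnerProductSpace ℂ E]

/-- The isometry lemma -/
lemma phi_expand {κ : Type*} (s t : Finset κ) (p q : κ → Fin m → ℕ) (x y : κ → E) (z : Fin m → ℂ) :
    inner ℂ (∑ k ∈ s, phi (p k) z • x k) (∑ l ∈ t, phi (q l) z • y l) * (Gd z : ℂ)
     = ∑ k ∈ s, ∑ l ∈ t, inner ℂ (x k) (y l) * (conj (phi (p k) z) * phi (q l) z * (Gd z : ℂ)) := by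
  rw [sum_inner, Finset.sum_mul]
  refine Finset.sum_congr rfl fun k _ => ?_
  rw [inner_sum, Finset.sum_mul]
  refine Finset.sum_congr rfl fun l _ => ?_
  rw [inner_smul_left, inner_smul_right]
  ring

lemma iso_integrable {κ : Type*} (s t : Finset κ) (p q : κ → Fin m → ℕ) (x y : κ → E) :
    Integrable (fun z : Fin m → ℂ =>
      inner ℂ (∑ k ∈ s, phi (p k) z • x k) (∑ l ∈ t, phi (q l) z • y l) * (Gd z : ℂ)) := by
  simp_rw [phi_expand]
  exact integrable_finsetSum _ fun k _ => integrable_finsetSum _ fun l _ =>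
    (phi_integrable _ _).const_mul _

lemma iso_int {κ : Type*} (s t : Finset κ) (p q : κ → Fin m → ℕ) (x y : κ → E) :
    ∫ z : Fin m → ℂ,
      inner ℂ (∑ k ∈ s, phi (p k) z • x k) (∑ l ∈ t, phi (q l) z • y l) * (Gd z : ℂ)
     = inner ℂ (∑ k ∈ s, lp.single 2 (p k) (x k) : L2 (Fin m → ℕ) E)
        (∑ l ∈ t, lp.single 2 (q l) (y l)) := by
  simp_rw [phi_expand]
  rw [integral_finsetSum _ fun k _ => integrable_finsetSum _ fun l _ =>
    (phi_integrable _ _).const_mul _, sum_inner]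
  refine Finset.sum_congr rfl fun k _ => ?_
  rw [integral_finsetSum _ fun l _ => (phi_integrable _ _).const_mul _, inner_sum]
  refine Finset.sum_congr rfl fun l _ => ?_
  rw [integral_const_mul, phi_int, lp.inner_single_left, lp.single_apply]
  split_ifs with h
  · rw [h]; simp
  · rw [Pi.single_eq_of_ne h]; simp

end Gauss
end SL

namespace SL
set_option linter.unusedSectionVars false
open MeasureTheory ContinuousLinearMap
open scoped Real ComplexConjugate

section EstThm
variable {m : ℕ} {E : Type*} [NormedAddCommGroup E] [InnerProductSpace ℂ E]

lemma Z_single (i : Fin m) (α : Fin m → ℕ) (x : E) :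
    Z E i (lp.single 2 α x) = lp.single 2 (up i α) (((√((α i : ℝ) + 1) * rho α : ℝ) : ℂ) • x) := by
  ext β
  by_cases h : β i = 0
  · rw [Z_apply_zero _ h, lp.single_apply, Pi.single_eq_of_ne]
    rintro rfl; simp at h
  · obtain ⟨γ, rfl⟩ := exists_up h
    rw [Z_apply_up, lp.single_apply, lp.single_apply]
    by_cases hg : γ = α
    · subst hg; simp
    · rw [Pi.single_eq_of_ne hg, Pi.single_eq_of_ne (fun h => hg (up_inj i h)), smul_zero]

lemma Yo_single (i : Fin m) (α : Fin m → ℕ) (x : E) :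
    Yo E i (lp.single 2 α x) =
      lp.single 2 (up i α) (((√((α i : ℝ) + 1) * rho (up i α) : ℝ) : ℂ) • x) := by
  ext β
  rw [Yo_apply]
  by_cases h : β i = 0
  · rw [lp.single_apply _ (up i α), Pi.single_eq_of_ne]
    · simp [h]
    · rintro rfl; simp at h
  · obtain ⟨γ, rfl⟩ := exists_up h
    rw [dn_up, lp.single_apply, lp.single_apply]
    by_cases hg : γ = α
    · subst hg; simp
    · rw [Pi.single_eq_of_ne hg, Pi.single_eq_of_ne (fun h => hg (up_inj i h)), smul_zero]

lemma Mop_single {ι : Type*} [DecidableEq ι] (a : E →L[ℂ] E) (α : ι) (x : E) :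
    Mop ι a (lp.single 2 α x) = lp.single 2 α (a x) := by
  ext β
  rw [Mop_apply, lp.single_apply, lp.single_apply]
  by_cases hg : β = α
  · subst hg; simp
  · rw [Pi.single_eq_of_ne hg, Pi.single_eq_of_ne hg, map_zero]

/-- the function attached to a finitely supported sequence -/
noncomputable def fz (s : Finset (Fin m → ℕ)) (v : (Fin m → ℕ) → E) (z : Fin m → ℂ) : E :=
  ∑ α ∈ s, phi α z • ((rho α : ℂ) • v α)

/-- the finitely supported sequence -/
noncomputable def wz (s : Finset (Fin m → ℕ)) (v : (Fin m → ℕ) → E) : L2 (Fin m → ℕ) E :=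
  ∑ α ∈ s, lp.single 2 α (v α)

lemma z_fz (s : Finset (Fin m → ℕ)) (v : (Fin m → ℕ) → E) (z : Fin m → ℂ) (i : Fin m) :
    z i • fz s v z = ∑ α ∈ s, phi (up i α) z • (((√((α i : ℝ) + 1) * rho α : ℝ) : ℂ) • v α) := by
  rw [fz, Finset.smul_sum]
  refine Finset.sum_congr rfl fun α _ => ?_
  rw [smul_smul, phi_up, smul_smul, smul_smul]
  congr 1
  push_cast
  ring

/-- weighted integral -/
def II (h : (Fin m → ℂ) → ℂ) (v : ℂ) : Prop :=
  Integrable (fun z => h z * (Gd z : ℂ)) ∧ ∫ z, h z * (Gd z : ℂ) = v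

lemma II.add {h k : (Fin m → ℂ) → ℂ} {v w : ℂ} (a : II h v) (b : II k w) :
    II (fun z => h z + k z) (v + w) := by
  constructor
  · simp_rw [add_mul]; exact a.1.add b.1
  · simp_rw [add_mul]; rw [integral_add a.1 b.1, a.2, b.2]

lemma II.const_mul {h : (Fin m → ℂ) → ℂ} {v : ℂ} (a : II h v) (c : ℂ) :
    II (fun z => c * h z) (c * v) := by
  constructor
  · simp_rw [mul_assoc]; exact a.1.const_mul c
  · simp_rw [mul_assoc]; rw [integral_const_mul, a.2]

lemma II.sum {κ : Type*} (s : Finset κ) {h : κ → (Fin m → ℂ) → ℂ} {v : κ → ℂ}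
    (a : ∀ k, II (h k) (v k)) : II (fun z => ∑ k ∈ s, h k z) (∑ k ∈ s, v k) := by
  constructor
  · simp_rw [Finset.sum_mul]; exact integrable_finsetSum _ fun k _ => (a k).1
  · simp_rw [Finset.sum_mul]; rw [integral_finsetSum _ fun k _ => (a k).1]
    exact Finset.sum_congr rfl fun k _ => (a k).2

lemma II.re_nonneg {h : (Fin m → ℂ) → ℂ} {v : ℂ} (a : II h v) (h0 : ∀ z, 0 ≤ (h z).re) :
    0 ≤ v.re := by
  rw [← a.2]
  have := integral_re a.1
  simp only [RCLike.re_to_complex] at this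
  rw [← this]
  refine integral_nonneg fun z => ?_
  simp only [Complex.re_mul_ofReal, Pi.zero_apply]
  exact mul_nonneg (h0 z) (Gd_nonneg z)

lemma II1 (s : Finset (Fin m → ℕ)) (v : (Fin m → ℕ) → E) (a b : E →L[ℂ] E) (i j : Fin m) :
    II (fun z => inner ℂ (a (z i • fz s v z)) (b (z j • fz s v z)))
      (inner ℂ (Mop _ a (Z E i (wz s v))) (Mop _ b (Z E j (wz s v)))) := by
  simp only [z_fz, wz, map_sum, Z_single, Mop_single, map_smul]
  exact ⟨iso_integrable s s (up i) (up j) _ _, by rw [iso_int s s (up i) (up j)]⟩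

lemma II2 (s : Finset (Fin m → ℕ)) (v : (Fin m → ℕ) → E) (a b : E →L[ℂ] E) (i j : Fin m) :
    II (fun z => inner ℂ (a (z j • z i • fz s v z)) (b (fz s v z)))
      (inner ℂ (Mop _ a (Yo E j (Z E i (wz s v)))) (Mop _ b (wz s v))) := by
  have e : ∀ z : Fin m → ℂ, z j • z i • fz s v z = ∑ α ∈ s, phi (up j (up i α)) z •
      ((√((up i α j : ℝ) + 1) : ℂ) • (((√((α i : ℝ) + 1) * rho α : ℝ) : ℂ) • v α)) := by
    intro z
    rw [z_fz, Finset.smul_sum]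
    refine Finset.sum_congr rfl fun α _ => ?_
    rw [smul_smul (z j), phi_up, smul_smul (phi (up j (up i α)) z)]
    congr 1
    ring
  simp only [e]
  simp only [fz, wz, map_sum, Z_single, Mop_single, Yo_single, map_smul]
  refine ⟨iso_integrable s s (fun α => up j (up i α)) (fun α => α) _ _, ?_⟩
  rw [iso_int s s (fun α => up j (up i α)) (fun α => α), sum_inner, sum_inner]
  refine Finset.sum_congr rfl fun k _ => ?_
  rw [inner_sum, inner_sum]
  refine Finset.sum_congr rfl fun l _ => ?_
  rw [lp.inner_single_left, lp.single_apply, lp.inner_single_left, lp.single_apply]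
  by_cases h : up j (up i k) = l
  · subst h
    simp only [Pi.single_eq_same, inner_smul_left, inner_smul_right, Complex.conj_ofReal]
    push_cast
    ring
  · rw [Pi.single_eq_of_ne h, Pi.single_eq_of_ne h]; simp

lemma sum_Z_sq [NeZero m] [CompleteSpace E] (w : L2 (Fin m → ℕ) E) :
    ∑ i, inner ℂ (Z E i w) (Z E i w) = inner ℂ w w := by
  have h : ∑ i, (Zs E i ∘L Z E i) = ContinuousLinearMap.id ℂ (L2 (Fin m → ℕ) E) := by
    ext u α : 3
    simp only [sum_apply, lp.coeFn_sum, Finset.sum_apply, ContinuousLinearMap.comp_apply, Zs_apply,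
      Z_apply_up, smul_smul, ContinuousLinearMap.id_apply]
    rw [← Finset.sum_smul]
    have : ∑ i, (√((α i : ℝ) + 1) * rho α) * (√((α i : ℝ) + 1) * rho α) = 1 := by
      have e : ∀ i, (√((α i : ℝ) + 1) * rho α) * (√((α i : ℝ) + 1) * rho α)
        = rho α ^ 2 * ((α i : ℝ) + 1) := fun i => by
          have := Real.mul_self_sqrt (show 0 ≤ (α i : ℝ) + 1 by positivity)
          linear_combination rho α ^ 2 * this
      simp_rw [e]
      rw [← Finset.mul_sum, Finset.sum_add_distrib]
      simp only [Finset.sum_const, Finset.card_univ, Fintype.card_fin, nsmul_eq_mul, mul_one]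
      rw [← rho_sq_mul α, deg]
      push_cast; rfl
    have h2 : ∑ i, ((√((α i : ℝ) + 1) * rho α : ℝ) : ℂ) * ((√((α i : ℝ) + 1) * rho α : ℝ) : ℂ) = 1 := by
      exact_mod_cast congrArg (fun x : ℝ => (x : ℂ)) this
    rw [h2, one_smul]
  have := congrArg (fun T : L2 (Fin m → ℕ) E →L[ℂ] L2 (Fin m → ℕ) E => inner ℂ (T w) w) h
  simp only [sum_apply, sum_inner, ContinuousLinearMap.comp_apply, ContinuousLinearMap.id_apply] at this
  rw [← this]
  refine Finset.sum_congr rfl fun i _ => ?_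
  rw [← Z_adjoint, ContinuousLinearMap.adjoint_inner_left]

/-- Toeplitz operators with linear symbol -/
noncomputable def Top (A B : Fin m → E →L[ℂ] E) : L2 (Fin m → ℕ) E →L[ℂ] L2 (Fin m → ℕ) E :=
  ∑ i, (Mop _ (A i) ∘L Z E i + Mop _ (B i) ∘L Zs E i)

lemma Mop_Z_app (a : E →L[ℂ] E) (i : Fin m) (u : L2 (Fin m → ℕ) E) :
    Mop _ a (Z E i u) = Z E i (Mop _ a u) := congrArg (fun T => T u) (Mop_Z (E := E) a i)
lemma Mop_Zs_app (a : E →L[ℂ] E) (i : Fin m) (u : L2 (Fin m → ℕ) E) :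
    Mop _ a (Zs E i u) = Zs E i (Mop _ a u) := congrArg (fun T => T u) (Mop_Zs (E := E) a i)

lemma MZ_inner [CompleteSpace E] (a b : E →L[ℂ] E) (j : Fin m) (x y : L2 (Fin m → ℕ) E) :
    inner ℂ (Mop _ a (Z E j x)) (Mop _ b y) = inner ℂ (Mop _ a x) (Mop _ b (Zs E j y)) := by
  rw [Mop_Z_app, Mop_Zs_app, ← Z_adjoint, adjoint_inner_right]
lemma MZs_inner [CompleteSpace E] (a b : E →L[ℂ] E) (j : Fin m) (x y : L2 (Fin m → ℕ) E) :
    inner ℂ (Mop _ a (Zs E j x)) (Mop _ b y) = inner ℂ (Mop _ a x) (Mop _ b (Z E j y)) := by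
  rw [Mop_Z_app, Mop_Zs_app, ← Z_adjoint, adjoint_inner_left]

lemma Top_adjoint [CompleteSpace E] (A B : Fin m → E →L[ℂ] E) :
    adjoint (Top A B) = Top (fun i => adjoint (B i)) (fun i => adjoint (A i)) := by
  simp only [Top, map_sum, map_add, adjoint_comp, Mop_adjoint, Z_adjoint, Zs_adjoint, Mop_Z, Mop_Zs]
  exact Finset.sum_congr rfl fun i _ => add_comm _ _

/-- the compact correction -/
noncomputable def Kop [CompleteSpace E] (A B : Fin m → E →L[ℂ] E) :
    L2 (Fin m → ℕ) E →L[ℂ] L2 (Fin m → ℕ) E :=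
  ∑ i, ∑ j, ((2 : ℂ) • (adjoint (Mop _ (B j)) ∘L Mop _ (A i) ∘L (Yo E j - Z E j) ∘L Z E i)
    + adjoint (Mop _ (B j)) ∘L Mop _ (B i) ∘L (Zs E i ∘L Z E j - Z E j ∘L Zs E i))

lemma Kop_cpt [FiniteDimensional ℂ E] [CompleteSpace E] (A B : Fin m → E →L[ℂ] E) : Cpt (Kop A B) := by
  refine Cpt.sum _ fun i _ => Cpt.sum _ fun j _ => Cpt.add (Cpt.smul ?_ _) ?_
  · apply Cpt.left
    apply Cpt.left
    apply Cpt.right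
    exact Yo_sub_cpt j
  · apply Cpt.left
    apply Cpt.left
    exact comm_cpt j i

lemma norm_P_Q {H : Type*} [NormedAddCommGroup H] [InnerProductSpace ℂ H] (P Q : Fin m → H) :
    ((‖∑ i, (P i + Q i)‖ ^ 2 : ℝ)) = (∑ i, ∑ j, inner ℂ (P i) (P j) +
      2 * ∑ i, ∑ j, inner ℂ (P i) (Q j) + ∑ i, ∑ j, inner ℂ (Q i) (Q j)).re := by
  rw [Finset.sum_add_distrib, @norm_add_sq ℂ]
  have h : ∀ a b : Fin m → H, inner ℂ (∑ i, a i) (∑ j, b j) = ∑ i, ∑ j, inner ℂ (a i) (b j) := by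
    intro a b; rw [sum_inner]; exact Finset.sum_congr rfl fun i _ => inner_sum _ _ _
  rw [← h, ← h, ← h, inner_self_eq_norm_sq_to_K, inner_self_eq_norm_sq_to_K]
  simp only [RCLike.re_to_complex, Complex.add_re, Complex.mul_re, Complex.re_ofNat, Complex.im_ofNat,
    zero_mul, sub_zero, Complex.coe_algebraMap]
  norm_cast

theorem est_fin [NeZero m] [CompleteSpace E] (A B : Fin m → E →L[ℂ] E) (c : ℝ)
    (hc : ∀ (z : Fin m → ℂ) (x : E), c * ((∑ i, ‖z i‖ ^ 2) * ‖x‖ ^ 2) ≤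
      ‖∑ i, (A i (z i • x) + B i (conj (z i) • x))‖ ^ 2)
    (s : Finset (Fin m → ℕ)) (v : (Fin m → ℕ) → E) :
    c * ‖wz s v‖ ^ 2 ≤ ‖Top A B (wz s v)‖ ^ 2 + (inner ℂ (Kop A B (wz s v)) (wz s v)).re := by
  set w := wz s v with hw
  have hI := (((II.sum Finset.univ fun i => II.sum Finset.univ fun j => II1 s v (A i) (A j) i j).add
    ((II.sum Finset.univ fun i => II.sum Finset.univ fun j => II2 s v (A i) (B j) i j).const_mul 2)).add
    (II.sum Finset.univ fun i => II.sum Finset.univ fun j => II1 s v (B i) (B j) j i)).add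
    ((II.sum Finset.univ fun i => II1 s v (.id ℂ E) (.id ℂ E) i i).const_mul (-c : ℂ))
  have h0 := hI.re_nonneg ?_
  · have e1 : ∑ i, inner ℂ (Mop _ (.id ℂ E) (Z E i (wz s v))) (Mop _ (.id ℂ E) (Z E i (wz s v)))
        = inner ℂ w w := by
      rw [← sum_Z_sq w]; rfl
    rw [e1, inner_self_eq_norm_sq_to_K] at h0
    have e2 := norm_P_Q (fun i => Mop _ (A i) (Z E i w)) (fun i => Mop _ (B i) (Zs E i w))
    have e2' : ∑ i, (Mop _ (A i) (Z E i w) + Mop _ (B i) (Zs E i w)) = Top A B w := by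
      rw [Top, sum_apply]; rfl
    rw [e2'] at e2
    have e3 : inner ℂ (Kop A B w) w = 2 * ∑ i, ∑ j, (inner ℂ (Mop _ (A i) (Yo E j (Z E i w))) (Mop _ (B j) w)
        - inner ℂ (Mop _ (A i) (Z E i w)) (Mop _ (B j) (Zs E j w)))
        + ∑ i, ∑ j, (inner ℂ (Mop _ (B i) (Z E j w)) (Mop _ (B j) (Z E i w))
          - inner ℂ (Mop _ (B i) (Zs E i w)) (Mop _ (B j) (Zs E j w))) := by
      rw [Kop, sum_apply, sum_inner, Finset.mul_sum, ← Finset.sum_add_distrib]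
      refine Finset.sum_congr rfl fun i _ => ?_
      rw [sum_apply, sum_inner, Finset.mul_sum, ← Finset.sum_add_distrib]
      refine Finset.sum_congr rfl fun j _ => ?_
      rw [add_apply, inner_add_left, smul_apply, inner_smul_left]
      simp only [ContinuousLinearMap.comp_apply, adjoint_inner_left, sub_apply, map_sub, inner_sub_left]
      rw [MZ_inner (A i), MZ_inner (B i), MZs_inner (B i), show (starRingEnd ℂ) 2 = 2 from Complex.conj_ofNat 2]
    rw [e2, e3]
    simp only [Finset.sum_sub_distrib, mul_sub] 
    simp only [Complex.add_re, Complex.sub_re] at h0 ⊢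
    have e4 : (-(c : ℂ) * ((‖w‖ : ℝ) : ℂ) ^ 2).re = - (c * ‖w‖ ^ 2) := by
      rw [← Complex.ofReal_pow, ← Complex.ofReal_neg, ← Complex.ofReal_mul, Complex.ofReal_re]; ring
    simp only [Complex.coe_algebraMap] at h0
    rw [e4] at h0
    rw [← hw] at h0
    linarith
  · intro z
    have h1 := hc z (fz s v z)
    have h2 := norm_P_Q (fun i => A i (z i • fz s v z)) (fun i => B i (conj (z i) • fz s v z))
    rw [h2] at h1
    have e1 : ∀ i j, inner ℂ (A i (z i • fz s v z)) (B j (conj (z j) • fz s v z))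
       = inner ℂ (A i (z j • z i • fz s v z)) (B j (fz s v z)) := by
      intro i j
      rw [map_smul (B j), map_smul (A i) (z j), inner_smul_left, inner_smul_right]
    have e2 : ∀ i j, inner ℂ (B i (conj (z i) • fz s v z)) (B j (conj (z j) • fz s v z))
       = inner ℂ (B i (z j • fz s v z)) (B j (z i • fz s v z)) := by
      intro i j
      rw [map_smul, map_smul, map_smul, map_smul, inner_smul_left, inner_smul_right, inner_smul_left,
        inner_smul_right, Complex.conj_conj]
      ring
    simp only [e1, e2] at h1
    have e3 : (-(c : ℂ) * ∑ i, inner ℂ (z i • fz s v z) (z i • fz s v z)).re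
      = - (c * ((∑ i, ‖z i‖ ^ 2) * ‖fz s v z‖ ^ 2)) := by
      have : ∑ i, inner ℂ (z i • fz s v z) (z i • fz s v z) =
          (((∑ i, ‖z i‖ ^ 2) * ‖fz s v z‖ ^ 2 : ℝ) : ℂ) := by
        rw [Finset.sum_mul]
        push_cast
        refine Finset.sum_congr rfl fun i _ => ?_
        rw [inner_self_eq_norm_sq_to_K, norm_smul]
        push_cast
        simp [mul_pow]
      rw [this, ← Complex.ofReal_neg, ← Complex.ofReal_mul, Complex.ofReal_re]; ring
    simp only [ContinuousLinearMap.id_apply]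
    rw [Complex.add_re, e3]
    linarith

theorem est_top [NeZero m] [FiniteDimensional ℂ E] [CompleteSpace E] (A B : Fin m → E →L[ℂ] E) (c : ℝ) (hc0 : 0 < c)
    (hc : ∀ (z : Fin m → ℂ) (x : E), c * ((∑ i, ‖z i‖ ^ 2) * ‖x‖ ^ 2) ≤
      ‖∑ i, (A i (z i • x) + B i (conj (z i) • x))‖ ^ 2) : Est (Top A B) := by
  refine ⟨c, hc0, Kop A B, Kop_cpt A B, fun u => ?_⟩
  rw [add_apply, inner_add_left, map_add, ContinuousLinearMap.comp_apply, adjoint_inner_left,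
    inner_self_eq_norm_sq]
  have hs := lp.hasSum_single (p := 2) (by simp) u
  have hl : Continuous fun u : L2 (Fin m → ℕ) E => c * ‖u‖ ^ 2 := by fun_prop
  have hr : Continuous fun u : L2 (Fin m → ℕ) E =>
      ‖Top A B u‖ ^ 2 + RCLike.re (inner ℂ (Kop A B u) u) := by fun_prop
  exact le_of_tendsto_of_tendsto' ((hl.tendsto u).comp hs) ((hr.tendsto u).comp hs)
    fun s => est_fin A B c hc s u

end EstThm
end SL

namespace SL
set_option linter.unusedSectionVars false
open ContinuousLinearMap
open scoped ComplexConjugate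

section CAR
variable {m : ℕ} {F : Type*} [NormedAddCommGroup F] [InnerProductSpace ℂ F] [FiniteDimensional ℂ F]

/-- exterior algebra with coefficients in `F` -/
abbrev EX (m : ℕ) (F : Type*) [NormedAddCommGroup F] : Type _ := PiLp 2 (fun _ : Finset (Fin m) => F)

/-- elementary sign -/
def tau (i j : Fin m) : ℤ := if i < j then -1 else 1
/-- sign -/
def sg (j : Fin m) (S : Finset (Fin m)) : ℤ := ∏ i ∈ S, tau i j

lemma tau_mul {i j : Fin m} (h : i ≠ j) : tau i j * tau j i = -1 := by
  rcases lt_or_gt_of_ne h with h | h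
  · simp [tau, h, not_lt_of_gt h]
  · simp [tau, h, not_lt_of_gt h]
lemma tau_sq (i j : Fin m) : tau i j * tau i j = 1 := by
  unfold tau; split_ifs <;> simp
lemma tau_self (i : Fin m) : tau i i = 1 := by simp [tau]
lemma sg_sq (j : Fin m) (S : Finset (Fin m)) : sg j S * sg j S = 1 := by
  rw [sg, ← Finset.prod_mul_distrib]; exact Finset.prod_eq_one fun i _ => tau_sq i j
lemma sg_insert {i j : Fin m} {S : Finset (Fin m)} (h : i ∉ S) : sg j (insert i S) = tau i j * sg j S := by
  rw [sg, Finset.prod_insert h, sg]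
lemma sg_erase {i j : Fin m} {S : Finset (Fin m)} (h : i ∈ S) : sg j S = tau i j * sg j (S.erase i) := by
  rw [sg, ← Finset.mul_prod_erase _ _ h, sg]

/-- creation -/
noncomputable def ec (F : Type*) [NormedAddCommGroup F] [InnerProductSpace ℂ F] [FiniteDimensional ℂ F]
    (j : Fin m) : EX m F →L[ℂ] EX m F :=
  LinearMap.toContinuousLinearMap
  { toFun := fun x => WithLp.toLp 2 fun S => if j ∈ S then ((sg j S : ℤ) : ℂ) • x (S.erase j) else 0
    map_add' := fun x y => by
      ext S
      by_cases h : j ∈ S <;> simp [h]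
    map_smul' := fun c x => by
      ext S
      by_cases h : j ∈ S
      · simp only [h, PiLp.smul_apply, if_true, RingHom.id_apply]; rw [smul_comm]
      · simp [h] }

/-- annihilation -/
noncomputable def io (F : Type*) [NormedAddCommGroup F] [InnerProductSpace ℂ F] [FiniteDimensional ℂ F]
    (j : Fin m) : EX m F →L[ℂ] EX m F :=
  LinearMap.toContinuousLinearMap
  { toFun := fun x => WithLp.toLp 2 fun S => if j ∈ S then 0 else ((sg j S : ℤ) : ℂ) • x (insert j S)
    map_add' := fun x y => by
      ext S
      by_cases h : j ∈ S <;> simp [h]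
    map_smul' := fun c x => by
      ext S
      by_cases h : j ∈ S
      · simp [h]
      · simp only [h, PiLp.smul_apply, if_false, RingHom.id_apply]; rw [smul_comm] }

lemma ec_apply (j : Fin m) (x : EX m F) (S : Finset (Fin m)) :
    ec F j x S = if j ∈ S then ((sg j S : ℤ) : ℂ) • x (S.erase j) else 0 := rfl
lemma io_apply (j : Fin m) (x : EX m F) (S : Finset (Fin m)) :
    io F j x S = if j ∈ S then 0 else ((sg j S : ℤ) : ℂ) • x (insert j S) := rfl

lemma ec_adjoint (j : Fin m) : adjoint (ec F j) = io F j := by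
  symm
  rw [eq_adjoint_iff]
  intro x y
  rw [PiLp.inner_apply, PiLp.inner_apply]
  simp only [ec_apply, io_apply]
  have e1 : ∀ S, inner ℂ (if j ∈ S then 0 else ((sg j S : ℤ) : ℂ) • x (insert j S)) (y S)
     = if j ∉ S then ((sg j S : ℤ) : ℂ) * inner ℂ (x (insert j S)) (y S) else 0 := by
    intro S
    by_cases h : j ∈ S <;> simp [h, mul_comm]
  have e2 : ∀ S, inner ℂ (x S) (if j ∈ S then ((sg j S : ℤ) : ℂ) • y (S.erase j) else 0)
     = if j ∈ S then ((sg j S : ℤ) : ℂ) * inner ℂ (x S) (y (S.erase j)) else 0 := by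
    intro S
    by_cases h : j ∈ S <;> simp [h]
  simp_rw [e1, e2]
  rw [← Finset.sum_filter, ← Finset.sum_filter]
  refine Finset.sum_bij' (fun S _ => insert j S) (fun S _ => S.erase j) ?_ ?_ ?_ ?_ ?_
  · intro S hS; simp
  · intro S hS; simp
  · intro S hS; exact Finset.erase_insert (by simpa using hS)
  · intro S hS; exact Finset.insert_erase (by simpa using hS)
  · intro S hS
    have : j ∉ S := by simpa using hS
    rw [sg_insert this, tau_self, one_mul, Finset.erase_insert this]

lemma io_adjoint (j : Fin m) : adjoint (io F j) = ec F j := by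
  rw [← ec_adjoint, adjoint_adjoint]

lemma ec_io_self (j : Fin m) (x : EX m F) (S : Finset (Fin m)) :
    ec F j (io F j x) S = if j ∈ S then x S else 0 := by
  rw [ec_apply]
  split_ifs with h
  · rw [io_apply, if_neg (Finset.notMem_erase j S), smul_smul, Finset.insert_erase h, sg_erase h, tau_self,
      one_mul, ← Int.cast_mul, sg_sq, Int.cast_one, one_smul]
  · rfl

lemma io_ec_self (j : Fin m) (x : EX m F) (S : Finset (Fin m)) :
    io F j (ec F j x) S = if j ∈ S then 0 else x S := by
  rw [io_apply]
  split_ifs with h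
  · rfl
  · rw [ec_apply, if_pos (Finset.mem_insert_self j S), smul_smul, Finset.erase_insert h, sg_insert h, tau_self,
      one_mul, ← Int.cast_mul, sg_sq, Int.cast_one, one_smul]

lemma car_self (j : Fin m) (x : EX m F) : ec F j (io F j x) + io F j (ec F j x) = x := by
  ext S
  rw [PiLp.add_apply, ec_io_self, io_ec_self]
  split_ifs <;> simp

lemma car_ne {i j : Fin m} (h : i ≠ j) (x : EX m F) : ec F i (io F j x) + io F j (ec F i x) = 0 := by
  ext S
  rw [PiLp.add_apply, ec_apply, io_apply, io_apply, ec_apply, PiLp.zero_apply]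
  by_cases hi : i ∈ S
  · by_cases hj : j ∈ S
    · simp [hj, h.symm]
    · have hj' : j ∉ S.erase i := fun h => hj (Finset.mem_of_mem_erase h)
      have e : (insert j S).erase i = insert j (S.erase i) := Finset.erase_insert_of_ne h.symm
      rw [if_pos hi, if_neg hj', if_neg hj, if_pos (Finset.mem_insert_of_mem hi), e, smul_smul, smul_smul,
        ← add_smul, sg_insert hj, sg_erase (j := j) hi, ← Int.cast_mul, ← Int.cast_mul, ← Int.cast_add]
      have : sg i S * sg j (S.erase i) + tau i j * sg j (S.erase i) * (tau j i * sg i S) = 0 := by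
        linear_combination (sg i S * sg j (S.erase i)) * tau_mul h
      rw [this]; simp
  · simp [hi, h]

lemma io_io (i j : Fin m) (x : EX m F) : io F i (io F j x) + io F j (io F i x) = 0 := by
  ext S
  rw [PiLp.add_apply, io_apply, io_apply, io_apply, io_apply, PiLp.zero_apply]
  by_cases h : i = j
  · subst h; simp
  by_cases hi : i ∈ S
  · simp [hi]
  by_cases hj : j ∈ S
  · simp [hj]
  rw [if_neg hi, if_neg hj, if_neg (by simp [hj, Ne.symm h]), if_neg (by simp [hi, h]), smul_smul, smul_smul,
    Finset.insert_comm, ← add_smul, sg_insert hi, sg_insert hj, ← Int.cast_mul, ← Int.cast_mul, ← Int.cast_add]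
  have : sg i S * (tau i j * sg j S) + sg j S * (tau j i * sg i S) = 0 := by
    have h1 : tau i j + tau j i = 0 := by
      rcases lt_or_gt_of_ne h with h | h <;> simp [tau, h, not_lt_of_gt h]
    linear_combination (sg i S * sg j S) * h1
  rw [this]; simp

lemma ec_ec (i j : Fin m) (x : EX m F) : ec F i (ec F j x) + ec F j (ec F i x) = 0 := by
  refine ext_inner_left ℂ fun y => ?_
  rw [inner_add_right, ← io_adjoint, ← io_adjoint, adjoint_inner_right, adjoint_inner_right,
    adjoint_inner_right, adjoint_inner_right, ← inner_add_left, add_comm, io_io]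
  simp

/-- the symbol of the Koszul operator -/
lemma koszul_norm (z : Fin m → ℂ) (x : EX m F) :
    1 * ((∑ i, ‖z i‖ ^ 2) * ‖x‖ ^ 2) ≤ ‖∑ i, (io F i (z i • x) + ec F i (conj (z i) • x))‖ ^ 2 := by
  set c : EX m F →L[ℂ] EX m F := ∑ i, (z i • io F i + conj (z i) • ec F i) with hc
  have hcx : ∀ x, c x = ∑ i, (io F i (z i • x) + ec F i (conj (z i) • x)) := fun x => by
    simp [hc, sum_apply]
  have hadj : adjoint c = c := by
    simp only [hc, map_sum, map_add, map_smulₛₗ, io_adjoint, ec_adjoint, Complex.conj_conj]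
    exact Finset.sum_congr rfl fun i _ => add_comm _ _
  have hsq : c (c x) = (∑ i, z i * conj (z i)) • x := by
    have e1 : c (c x) = ∑ i, ∑ j, ((z i * z j) • io F i (io F j x) + (conj (z i) * conj (z j)) • ec F i (ec F j x)
       + ((z i * conj (z j)) • io F i (ec F j x) + (conj (z i) * z j) • ec F i (io F j x))) := by
      simp only [hcx, map_sum, map_add, map_smul, smul_add, Finset.smul_sum, smul_smul]
      refine Finset.sum_congr rfl fun i _ => ?_
      rw [← Finset.sum_add_distrib]
      refine Finset.sum_congr rfl fun j _ => ?_
      abel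
    have key1 : ∑ i, ∑ j, (z i * z j) • io F i (io F j x) = 0 := by
      have h2 : ∑ i, ∑ j, (z i * z j) • io F i (io F j x) + ∑ i, ∑ j, (z i * z j) • io F i (io F j x) = 0 := by
        nth_rw 2 [Finset.sum_comm]
        rw [← Finset.sum_add_distrib]
        refine Finset.sum_eq_zero fun i _ => ?_
        rw [← Finset.sum_add_distrib]
        refine Finset.sum_eq_zero fun j _ => ?_
        rw [mul_comm (z j), ← smul_add, io_io, smul_zero]
      rw [← two_smul ℂ] at h2; exact (smul_eq_zero.1 h2).resolve_left two_ne_zero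
    have key2 : ∑ i, ∑ j, (conj (z i) * conj (z j)) • ec F i (ec F j x) = 0 := by
      have h2 : ∑ i, ∑ j, (conj (z i) * conj (z j)) • ec F i (ec F j x) + ∑ i, ∑ j, (conj (z i) * conj (z j)) • ec F i (ec F j x) = 0 := by
        nth_rw 2 [Finset.sum_comm]
        rw [← Finset.sum_add_distrib]
        refine Finset.sum_eq_zero fun i _ => ?_
        rw [← Finset.sum_add_distrib]
        refine Finset.sum_eq_zero fun j _ => ?_
        rw [mul_comm (conj (z j)), ← smul_add, ec_ec, smul_zero]
      rw [← two_smul ℂ] at h2; exact (smul_eq_zero.1 h2).resolve_left two_ne_zero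
    rw [e1]
    simp only [Finset.sum_add_distrib]
    rw [key1, key2, zero_add, zero_add]
    nth_rw 2 [Finset.sum_comm]
    rw [← Finset.sum_add_distrib, Finset.sum_smul]
    refine Finset.sum_congr rfl fun i _ => ?_
    rw [← Finset.sum_add_distrib, Finset.sum_eq_single i]
    · rw [mul_comm (conj (z i)), ← smul_add, add_comm, car_self]
    · intro j _ hj
      rw [mul_comm (conj (z j)), ← smul_add, add_comm, car_ne hj, smul_zero]
    · simp
  rw [← hcx, one_mul]
  apply le_of_eq
  have h3 : inner ℂ (c x) (c x) = inner ℂ x (c (c x)) := by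
    rw [← adjoint_inner_right c x, hadj]
  rw [hsq, inner_smul_right, inner_self_eq_norm_sq_to_K, inner_self_eq_norm_sq_to_K] at h3
  simp only [Complex.mul_conj, Complex.normSq_eq_norm_sq] at h3
  apply Complex.ofReal_injective
  push_cast
  push_cast at h3
  exact h3.symm

end CAR
end SL

namespace SL
set_option linter.unusedSectionVars false
open ContinuousLinearMap
open scoped ComplexConjugate

section Comm
variable {X : Type*} [NormedAddCommGroup X] [InnerProductSpace ℂ X]

/-- commuting modulo compact operators -/
def CC (P Q : X →L[ℂ] X) : Prop := Cpt (P ∘L Q - Q ∘L P)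

lemma CC.symm {P Q : X →L[ℂ] X} (h : CC P Q) : CC Q P := by
  have := Cpt.neg h
  rwa [neg_sub] at this
lemma CC.add_left {P P' Q : X →L[ℂ] X} (h : CC P Q) (h' : CC P' Q) : CC (P + P') Q := by
  have := Cpt.add h h'
  have e : (P + P') ∘L Q - Q ∘L (P + P') = P ∘L Q - Q ∘L P + (P' ∘L Q - Q ∘L P') := by
    rw [add_comp, comp_add]; abel
  rw [CC, e]; exact this
lemma CC.zero_left {Q : X →L[ℂ] X} : CC 0 Q := by
  rw [CC, zero_comp, comp_zero, sub_zero]; exact Cpt.zero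
lemma CC.sum_left {κ : Type*} (s : Finset κ) {P : κ → X →L[ℂ] X} {Q : X →L[ℂ] X}
    (h : ∀ i, CC (P i) Q) : CC (∑ i ∈ s, P i) Q := by
  classical
  induction s using Finset.induction_on with
  | empty => simpa using CC.zero_left
  | insert a s ha ih => rw [Finset.sum_insert ha]; exact (h a).add_left ih
lemma CC.add_right {P Q Q' : X →L[ℂ] X} (h : CC P Q) (h' : CC P Q') : CC P (Q + Q') :=
  (h.symm.add_left h'.symm).symm
lemma CC.sum_right {κ : Type*} (s : Finset κ) {P : X →L[ℂ] X} {Q : κ → X →L[ℂ] X}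
    (h : ∀ i, CC P (Q i)) : CC P (∑ i ∈ s, Q i) := (CC.sum_left s fun i => (h i).symm).symm

variable {m : ℕ} {E : Type*} [NormedAddCommGroup E] [InnerProductSpace ℂ E] [FiniteDimensional ℂ E]
  [CompleteSpace E]

lemma Mop_comp {ι : Type*} (a b : E →L[ℂ] E) : Mop ι a ∘L Mop ι b = Mop ι (a ∘L b) := rfl

lemma CC.mop {a k : E →L[ℂ] E} (hak : a ∘L k = k ∘L a) {P Q : L2 (Fin m → ℕ) E →L[ℂ] L2 (Fin m → ℕ) E}
    (hP : ∀ b, Mop _ b ∘L P = P ∘L Mop _ b) (hQ : ∀ b, Mop _ b ∘L Q = Q ∘L Mop _ b) (h : CC P Q) :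
    CC (Mop _ a ∘L P) (Mop _ k ∘L Q) := by
  have e : (Mop _ a ∘L P) ∘L (Mop _ k ∘L Q) - (Mop _ k ∘L Q) ∘L (Mop _ a ∘L P)
      = Mop _ (a ∘L k) ∘L (P ∘L Q - Q ∘L P) := by
    rw [comp_sub]
    congr 1
    · rw [← Mop_comp, comp_assoc, ← comp_assoc P, ← hP k]; rfl
    · rw [hak, ← Mop_comp, comp_assoc, ← comp_assoc Q, ← hQ a]; rfl
  rw [CC, e]
  exact Cpt.left h _

lemma CC.top {A B P Q : Fin m → E →L[ℂ] E} (h1 : ∀ i j, A i ∘L P j = P j ∘L A i)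
    (h2 : ∀ i j, A i ∘L Q j = Q j ∘L A i) (h3 : ∀ i j, B i ∘L P j = P j ∘L B i)
    (h4 : ∀ i j, B i ∘L Q j = Q j ∘L B i) : CC (Top A B) (Top P Q) := by
  have zz : ∀ i j : Fin m, CC (Z E i) (Z E j) := fun i j => by
    rw [CC, Z_comm, sub_self]; exact Cpt.zero
  have ss : ∀ i j : Fin m, CC (Zs E i) (Zs E j) := fun i j => by
    rw [CC, ← Z_adjoint, ← Z_adjoint, ← adjoint_comp, ← adjoint_comp, Z_comm, sub_self]; exact Cpt.zero
  have sz : ∀ i j : Fin m, CC (Zs E i) (Z E j) := fun i j => comm_cpt j i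
  refine CC.sum_left _ fun i => CC.sum_right _ fun j => ?_
  refine CC.add_left (CC.add_right ?_ ?_) (CC.add_right ?_ ?_)
  · exact CC.mop (h1 i j) (fun b => Mop_Z b i) (fun b => Mop_Z b j) (zz i j)
  · exact CC.mop (h2 i j) (fun b => Mop_Z b i) (fun b => Mop_Zs b j) (sz j i).symm
  · exact CC.mop (h3 i j) (fun b => Mop_Zs b i) (fun b => Mop_Z b j) (sz i j)
  · exact CC.mop (h4 i j) (fun b => Mop_Zs b i) (fun b => Mop_Zs b j) (ss i j)

end Comm

section Tens
variable {m : ℕ} {F : Type*} [NormedAddCommGroup F] [InnerProductSpace ℂ F] [FiniteDimensional ℂ F]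

/-- `a ⊗ 1` -/
noncomputable def tens (m : ℕ) (a : F →L[ℂ] F) : EX m F →L[ℂ] EX m F :=
  LinearMap.toContinuousLinearMap
  { toFun := fun x => WithLp.toLp 2 fun S => a (x S)
    map_add' := fun x y => by ext S; simp
    map_smul' := fun c x => by ext S; simp }

lemma tens_apply (a : F →L[ℂ] F) (x : EX m F) (S : Finset (Fin m)) : tens m a x S = a (x S) := rfl

/-- matrix units -/
noncomputable def mu (F : Type*) [NormedAddCommGroup F] [InnerProductSpace ℂ F] [FiniteDimensional ℂ F]
    (S T : Finset (Fin m)) : EX m F →L[ℂ] EX m F :=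
  LinearMap.toContinuousLinearMap
  { toFun := fun x => WithLp.toLp 2 fun R => if R = S then x T else 0
    map_add' := fun x y => by ext R; by_cases h : R = S <;> simp [h]
    map_smul' := fun c x => by ext R; by_cases h : R = S <;> simp [h] }

lemma mu_apply (S T : Finset (Fin m)) (x : EX m F) (R : Finset (Fin m)) :
    mu F S T x R = if R = S then x T else 0 := rfl

variable [CompleteSpace F]

lemma tens_adjoint (a : F →L[ℂ] F) : adjoint (tens m a) = tens m (adjoint a) := by
  symm
  rw [eq_adjoint_iff]
  intro x y
  rw [PiLp.inner_apply, PiLp.inner_apply]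
  refine Finset.sum_congr rfl fun S _ => ?_
  rw [tens_apply, tens_apply, adjoint_inner_left]

lemma tens_ec (a : F →L[ℂ] F) (j : Fin m) : tens m a ∘L ec F j = ec F j ∘L tens m a := by
  ext x S
  simp only [comp_apply, tens_apply, ec_apply]
  split_ifs <;> simp
lemma tens_io (a : F →L[ℂ] F) (j : Fin m) : tens m a ∘L io F j = io F j ∘L tens m a := by
  ext x S
  simp only [comp_apply, tens_apply, io_apply]
  split_ifs <;> simp
lemma tens_mu (a : F →L[ℂ] F) (S T : Finset (Fin m)) : tens m a ∘L mu F S T = mu F S T ∘L tens m a := by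
  ext x R
  simp only [comp_apply, tens_apply, mu_apply]
  split_ifs <;> simp

lemma tens_bound (A B : Fin m → F →L[ℂ] F) (c : ℝ)
    (hc : ∀ (z : Fin m → ℂ) (x : F), c * ((∑ i, ‖z i‖ ^ 2) * ‖x‖ ^ 2) ≤
      ‖∑ i, (A i (z i • x) + B i (conj (z i) • x))‖ ^ 2) (z : Fin m → ℂ) (x : EX m F) :
    c * ((∑ i, ‖z i‖ ^ 2) * ‖x‖ ^ 2) ≤
      ‖∑ i, (tens m (A i) (z i • x) + tens m (B i) (conj (z i) • x))‖ ^ 2 := by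
  rw [PiLp.norm_sq_eq_of_L2, PiLp.norm_sq_eq_of_L2, Finset.mul_sum, Finset.mul_sum]
  refine Finset.sum_le_sum fun S _ => (hc z (x S)).trans (le_of_eq ?_)
  congr 2
  have : ∀ (s : Finset (Fin m)) (f : Fin m → EX m F), (∑ i ∈ s, f i).ofLp S = ∑ i ∈ s, (f i).ofLp S := by
    intro s f
    induction s using Finset.induction_on with
    | empty => simp
    | insert a s ha ih => rw [Finset.sum_insert ha, Finset.sum_insert ha, ← ih]; rfl
  rw [this]
  rfl

lemma exists_bound (A B : Fin m → F →L[ℂ] F)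
    (h : ∀ (z : Fin m → ℂ) (x : F), z ≠ 0 → x ≠ 0 → ∑ i, (A i (z i • x) + B i (conj (z i) • x)) ≠ 0) :
    ∃ c > 0, ∀ (z : Fin m → ℂ) (x : F), c * ((∑ i, ‖z i‖ ^ 2) * ‖x‖ ^ 2) ≤
      ‖∑ i, (A i (z i • x) + B i (conj (z i) • x))‖ ^ 2 := by
  set g : EuclideanSpace ℂ (Fin m) × F → ℝ :=
    fun p => ‖∑ i, (A i (p.1 i • p.2) + B i (conj (p.1 i) • p.2))‖ ^ 2 with hg
  have hgc : Continuous g := by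
    have : ∀ i, Continuous fun p : EuclideanSpace ℂ (Fin m) × F => p.1 i := fun i => by fun_prop
    have h2 : ∀ i, Continuous fun p : EuclideanSpace ℂ (Fin m) × F => conj (p.1 i) := fun i =>
      Complex.continuous_conj.comp (this i)
    have h3 : ∀ i, Continuous fun p : EuclideanSpace ℂ (Fin m) × F =>
        (A i (p.1 i • p.2) + B i (conj (p.1 i) • p.2)) := fun i =>
      ((A i).continuous.comp ((this i).smul continuous_snd)).add
        ((B i).continuous.comp ((h2 i).smul continuous_snd))
    exact (continuous_finsetSum _ fun i _ => h3 i).norm.pow 2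
  have hK : IsCompact (Metric.sphere (0 : EuclideanSpace ℂ (Fin m)) 1 ×ˢ Metric.sphere (0 : F) 1) := by
    have : ProperSpace F := FiniteDimensional.proper ℂ F
    exact (isCompact_sphere _ _).prod (isCompact_sphere _ _)
  have key : ∃ c > 0, ∀ p ∈ (Metric.sphere (0 : EuclideanSpace ℂ (Fin m)) 1 ×ˢ Metric.sphere (0 : F) 1),
      c ≤ g p := by
    rcases Set.eq_empty_or_nonempty
      (Metric.sphere (0 : EuclideanSpace ℂ (Fin m)) 1 ×ˢ Metric.sphere (0 : F) 1) with he | hne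
    · exact ⟨1, one_pos, fun p hp => by rw [he] at hp; exact hp.elim⟩
    · obtain ⟨p, hp, hmin⟩ := hK.exists_isMinOn hne hgc.continuousOn
      refine ⟨g p, ?_, fun q hq => hmin hq⟩
      have h1 : p.1 ≠ 0 := by
        have := hp.1; intro h0; rw [h0] at this; simp at this
      have h2 : p.2 ≠ 0 := by
        have := hp.2; intro h0; rw [h0] at this; simp at this
      have := h (fun i => p.1 i) p.2 (fun h0 => h1 (by ext i; exact congrFun h0 i)) h2
      simp only [hg]
      have := norm_pos_iff.2 this
      positivity
  obtain ⟨c, hc, hc'⟩ := key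
  refine ⟨c, hc, fun z x => ?_⟩
  set z' : EuclideanSpace ℂ (Fin m) := WithLp.toLp 2 z with hz'
  have hzn : ∑ i, ‖z i‖ ^ 2 = ‖z'‖ ^ 2 := by rw [EuclideanSpace.norm_sq_eq]
  rw [hzn]
  by_cases hz0 : z' = 0
  · rw [hz0]; simp
  by_cases hx0 : x = 0
  · rw [hx0]; simp
  have hz1 : ‖z'‖ ≠ 0 := norm_ne_zero_iff.2 hz0
  have hx1 : ‖x‖ ≠ 0 := norm_ne_zero_iff.2 hx0
  have := hc' (((‖z'‖⁻¹ : ℝ) : ℂ) • z', ((‖x‖⁻¹ : ℝ) : ℂ) • x) ⟨by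
    simp [norm_smul, hz1], by simp [norm_smul, hx1]⟩
  simp only [hg] at this
  have e : ∑ i, (A i ((((‖z'‖⁻¹ : ℝ) : ℂ) • z') i • ((‖x‖⁻¹ : ℝ) : ℂ) • x)
      + B i (conj ((((‖z'‖⁻¹ : ℝ) : ℂ) • z') i) • ((‖x‖⁻¹ : ℝ) : ℂ) • x))
      = ((‖z'‖⁻¹ * ‖x‖⁻¹ : ℝ) : ℂ) • ∑ i, (A i (z i • x) + B i (conj (z i) • x)) := by
    rw [Finset.smul_sum]
    refine Finset.sum_congr rfl fun i _ => ?_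
    simp only [PiLp.smul_apply, smul_eq_mul, map_mul, Complex.conj_ofReal, map_smul, smul_add, smul_smul, hz']
    push_cast
    congr 2 <;> ring
  rw [e, norm_smul, Complex.norm_real, mul_pow, Real.norm_eq_abs, sq_abs] at this
  have h2 := mul_le_mul_of_nonneg_left this (show 0 ≤ ‖z'‖ ^ 2 * ‖x‖ ^ 2 by positivity)
  calc _ = ‖z'‖ ^ 2 * ‖x‖ ^ 2 * c := by ring
    _ ≤ _ := h2
    _ = _ := by field_simp

lemma exists_bound_adj (A B : Fin m → F →L[ℂ] F)
    (h : ∀ (z : Fin m → ℂ) (x : F), z ≠ 0 → x ≠ 0 → ∑ i, (A i (z i • x) + B i (conj (z i) • x)) ≠ 0) :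
    ∀ (z : Fin m → ℂ) (x : F), z ≠ 0 → x ≠ 0 →
      ∑ i, (adjoint (B i) (z i • x) + adjoint (A i) (conj (z i) • x)) ≠ 0 := by
  intro z x hz hx h0
  set G : F →L[ℂ] F := ∑ i, (z i • A i + conj (z i) • B i) with hG
  have e1 : ∀ y, G y = ∑ i, (A i (z i • y) + B i (conj (z i) • y)) := fun y => by
    simp [hG, sum_apply]
  have e2 : adjoint G x = 0 := by
    rw [← h0]
    simp only [hG, map_sum, map_add, map_smulₛₗ, sum_apply, Complex.conj_conj, add_apply, smul_apply, map_smul]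
    exact Finset.sum_congr rfl fun i _ => by rw [add_comm]; rfl
  have inj : Function.Injective (G : F →ₗ[ℂ] F) := by
    rw [← LinearMap.ker_eq_bot, LinearMap.ker_eq_bot']
    intro y hy
    by_contra hne
    exact h z y hz hne (by rw [← e1]; exact hy)
  obtain ⟨y, hy⟩ := LinearMap.surjective_of_injective inj x
  have : inner ℂ x x = 0 := by
    nth_rw 2 [← hy]
    rw [ContinuousLinearMap.coe_coe, ← adjoint_inner_left, e2, inner_zero_left]
  exact hx (inner_self_eq_zero.1 this)

end Tens
end SL

namespace SL
set_option linter.unusedSectionVars false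
open ContinuousLinearMap
open scoped ComplexConjugate

section Sector
variable {m : ℕ} {F : Type*} [NormedAddCommGroup F] [InnerProductSpace ℂ F] [FiniteDimensional ℂ F]

/-- the big Hilbert space -/
abbrev HH (m : ℕ) (F : Type*) [NormedAddCommGroup F] : Type _ := L2 (Fin m → ℕ) (EX m F)

/-- parity sectors -/
def sec (m : ℕ) (F : Type*) [NormedAddCommGroup F] [InnerProductSpace ℂ F] (p s : ZMod 2) : Submodule ℂ (HH m F) where
  carrier := {u | ∀ α S, ¬ ((deg α : ZMod 2) = p ∧ (S.card : ZMod 2) = s) → u α S = 0}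
  add_mem' := fun {u v} hu hv α S h => by
    rw [lp.coeFn_add, Pi.add_apply, PiLp.add_apply, hu α S h, hv α S h, add_zero]
  zero_mem' := fun α S h => rfl
  smul_mem' := fun c u hu α S h => by
    rw [lp.coeFn_smul, Pi.smul_apply, PiLp.smul_apply, hu α S h, smul_zero]

lemma mem_sec {p s : ZMod 2} {u : HH m F} : u ∈ sec m F p s ↔
  ∀ α S, ¬ ((deg α : ZMod 2) = p ∧ (S.card : ZMod 2) = s) → u α S = 0 := Iff.rfl

lemma sec_closed (p s : ZMod 2) : IsClosed (sec m F p s : Set (HH m F)) := by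
  have : (sec m F p s : Set (HH m F)) = ⋂ α, ⋂ S, {u : HH m F |
      ¬ ((deg α : ZMod 2) = p ∧ (S.card : ZMod 2) = s) → u α S = 0} := by
    ext u; simp only [Set.mem_iInter]; rfl
  rw [this]
  refine isClosed_iInter fun α => isClosed_iInter fun S => ?_
  by_cases h : ((deg α : ZMod 2) = p ∧ (S.card : ZMod 2) = s)
  · simp [h]
  · have hc : Continuous fun u : HH m F => u α S := by
      have h1 : Continuous fun u : HH m F => u α := (lp.evalCLM ℂ (fun _ : Fin m → ℕ => EX m F) 2 α).continuous
      exact (PiLp.continuous_apply 2 _ S).comp h1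
    simp only [h, not_false_eq_true, true_imp_iff]
    exact isClosed_eq hc continuous_const

instance sec_complete [CompleteSpace F] (p s : ZMod 2) : CompleteSpace (sec m F p s) :=
  (sec_closed p s).completeSpace_coe

lemma coord_sum (κ : Type*) (s : Finset κ) (f : κ → HH m F) (α : Fin m → ℕ) (S : Finset (Fin m)) :
    (∑ i ∈ s, f i) α S = ∑ i ∈ s, f i α S := by
  classical
  induction s using Finset.induction_on with
  | empty => simp
  | insert a s ha ih => rw [Finset.sum_insert ha, Finset.sum_insert ha, ← ih]; rfl

lemma ne_add_one {a b : ZMod 2} (h : a ≠ b) : a = b + 1 := by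
  revert a b; decide

lemma sec_Z {p s : ZMod 2} (i : Fin m) {u : HH m F} (hu : u ∈ sec m F p s) :
    Z (EX m F) i u ∈ sec m F (p + 1) s := by
  intro α S h
  by_cases hi : α i = 0
  · rw [Z_apply_zero _ hi]; rfl
  · obtain ⟨γ, rfl⟩ := exists_up hi
    rw [Z_apply_up, PiLp.smul_apply, hu γ S, smul_zero]
    rintro ⟨h1, h2⟩
    exact h ⟨by rw [deg_up]; push_cast; rw [h1], h2⟩

lemma sec_Zs {p s : ZMod 2} (i : Fin m) {u : HH m F} (hu : u ∈ sec m F p s) :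
    Zs (EX m F) i u ∈ sec m F (p + 1) s := by
  intro α S h
  rw [Zs_apply, PiLp.smul_apply, hu (up i α) S, smul_zero]
  rintro ⟨h1, h2⟩
  refine h ⟨?_, h2⟩
  rw [deg_up] at h1
  push_cast at h1
  rw [← h1, add_assoc]
  have : (1 + 1 : ZMod 2) = 0 := rfl
  rw [this, add_zero]

lemma sec_tens {p s : ZMod 2} (a : F →L[ℂ] F) {u : HH m F} (hu : u ∈ sec m F p s) :
    Mop _ (tens m a) u ∈ sec m F p s := by
  intro α S h
  rw [Mop_apply, tens_apply, hu α S h, map_zero]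

lemma sec_io {p s : ZMod 2} (j : Fin m) {u : HH m F} (hu : u ∈ sec m F p s) :
    Mop _ (io F j) u ∈ sec m F p (s + 1) := by
  intro α S h
  rw [Mop_apply, io_apply]
  split_ifs with hj
  · rfl
  · rw [hu α _, smul_zero]
    rintro ⟨h1, h2⟩
    refine h ⟨h1, ?_⟩
    rw [Finset.card_insert_of_notMem hj] at h2
    push_cast at h2
    rw [← h2, add_assoc]
    have : (1 + 1 : ZMod 2) = 0 := rfl
    rw [this, add_zero]

lemma sec_ec {p s : ZMod 2} (j : Fin m) {u : HH m F} (hu : u ∈ sec m F p s) :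
    Mop _ (ec F j) u ∈ sec m F p (s + 1) := by
  intro α S h
  rw [Mop_apply, ec_apply]
  split_ifs with hj
  · rw [hu α _, smul_zero]
    rintro ⟨h1, h2⟩
    refine h ⟨h1, ?_⟩
    rw [← h2, ← Finset.card_erase_add_one hj]
    push_cast; rfl
  · rfl

lemma sec_topT {p s : ZMod 2} (A B : Fin m → F →L[ℂ] F) {u : HH m F} (hu : u ∈ sec m F p s) :
    Top (fun i => tens m (A i)) (fun i => tens m (B i)) u ∈ sec m F (p + 1) s := by
  rw [Top, sum_apply]
  exact Submodule.sum_mem _ fun i _ => Submodule.add_mem _ (sec_tens _ (sec_Z i hu)) (sec_tens _ (sec_Zs i hu))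

/-- the Koszul operator -/
noncomputable def Cop (m : ℕ) (F : Type*) [NormedAddCommGroup F] [InnerProductSpace ℂ F] [FiniteDimensional ℂ F] :
    HH m F →L[ℂ] HH m F := Top (io F) (ec F)

lemma sec_Cop {p s : ZMod 2} {u : HH m F} (hu : u ∈ sec m F p s) :
    Cop m F u ∈ sec m F (p + 1) (s + 1) := by
  rw [Cop, Top, sum_apply]
  exact Submodule.sum_mem _ fun i _ => Submodule.add_mem _ (sec_io _ (sec_Z i hu)) (sec_ec _ (sec_Zs i hu))

variable [CompleteSpace F]

lemma Cop_adjoint : adjoint (Cop m F) = Cop m F := by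
  rw [Cop, Top_adjoint]
  simp only [io_adjoint, ec_adjoint]

/-- half of the Koszul operator -/
noncomputable def Qop (m : ℕ) (F : Type*) [NormedAddCommGroup F] [InnerProductSpace ℂ F] [FiniteDimensional ℂ F] :
    HH m F →L[ℂ] HH m F := ∑ i, Mop _ (io F i) ∘L Z (EX m F) i
/-- the other half -/
noncomputable def Qs (m : ℕ) (F : Type*) [NormedAddCommGroup F] [InnerProductSpace ℂ F] [FiniteDimensional ℂ F] :
    HH m F →L[ℂ] HH m F := ∑ i, Mop _ (ec F i) ∘L Zs (EX m F) i

lemma Cop_eq : Cop m F = Qop m F + Qs m F := by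
  rw [Cop, Top, Finset.sum_add_distrib]; rfl

lemma Q_adjoint : adjoint (Qs m F) = Qop m F := by
  simp only [Qs, Qop, map_sum, adjoint_comp, Mop_adjoint, Zs_adjoint, ec_adjoint, Mop_Z]

lemma Q_sq (u : HH m F) : Qop m F (Qop m F u) = 0 := by
  have e : Qop m F (Qop m F u) = ∑ i, ∑ j, Mop _ (io F i) (Mop _ (io F j) (Z _ i (Z _ j u))) := by
    simp only [Qop, sum_apply, comp_apply, map_sum]
    rw [Finset.sum_comm]
    refine Finset.sum_congr rfl fun i _ => Finset.sum_congr rfl fun j _ => ?_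
    rw [Mop_Z_app (io F j) i]
  have h2 : Qop m F (Qop m F u) + Qop m F (Qop m F u) = 0 := by
    rw [e]
    nth_rw 2 [Finset.sum_comm]
    rw [← Finset.sum_add_distrib]
    refine Finset.sum_eq_zero fun i _ => ?_
    rw [← Finset.sum_add_distrib]
    refine Finset.sum_eq_zero fun j _ => ?_
    have hz : Z _ j (Z _ i u) = Z _ i (Z _ j u) := congrArg (fun T => T u) (Z_comm (E := EX m F) j i)
    rw [hz]
    ext α : 2
    exact io_io i j _
  rw [← two_smul ℂ] at h2; exact (smul_eq_zero.1 h2).resolve_left two_ne_zero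

lemma ker_Q {u : HH m F} (h : Cop m F u = 0) : Qop m F u = 0 ∧ Qs m F u = 0 := by
  rw [Cop_eq, add_apply] at h
  have h1 : Qop m F u = - Qs m F u := eq_neg_of_add_eq_zero_left h
  have h2 : inner ℂ (Qs m F u) (Qop m F u) = 0 := by
    rw [← adjoint_inner_right, Q_adjoint, Q_sq, inner_zero_right]
  have h3 : Qs m F u = 0 := by
    rw [h1, inner_neg_right, neg_eq_zero] at h2
    exact inner_self_eq_zero.1 h2
  exact ⟨by rw [h1, h3, neg_zero], h3⟩

lemma ker_D1 {u : HH m F} (h : Qop m F u = 0) (β : Fin m → ℕ) :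
    ∑ j, ((√(β j : ℝ) : ℝ) : ℂ) • io F j (u (dn j β)) = 0 := by
  by_cases h0 : ∀ i, β i = 0
  · exact Finset.sum_eq_zero fun j _ => by simp [h0 j]
  push Not at h0
  obtain ⟨i, hi⟩ := h0
  have : NeZero m := ⟨by have := i.2; omega⟩
  have hβ := congrArg (fun v : HH m F => v β) h
  simp only [Qop, sum_apply, comp_apply, lp.coeFn_sum, Finset.sum_apply, Mop_apply, Z_apply, map_smul,
    lp.coeFn_zero, Pi.zero_apply] at hβ
  have e : ∀ j, zw j β = rho (dn i β) * √(β j : ℝ) := by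
    intro j
    by_cases hj : β j = 0
    · rw [zw_zero hj, hj]; simp
    · rw [zw, mul_comm]
      congr 1
      apply rho_congr
      obtain ⟨a, ha⟩ := exists_up hi
      obtain ⟨b, hb⟩ := exists_up hj
      have h1 : deg β = deg a + 1 := by rw [ha, deg_up]
      have h2 : deg β = deg b + 1 := by rw [hb, deg_up]
      have h3 : dn i β = a := by rw [ha, dn_up]
      have h4 : dn j β = b := by rw [hb, dn_up]
      rw [h3, h4]; omega
  simp only [e, Complex.ofReal_mul, mul_smul] at hβ
  rw [← Finset.smul_sum] at hβ
  exact (smul_eq_zero.1 hβ).resolve_left (by exact_mod_cast (rho_pos _).ne')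

lemma ker_D2 {u : HH m F} (h : Qs m F u = 0) (α : Fin m → ℕ) :
    ∑ j, ((√((α j : ℝ) + 1) : ℝ) : ℂ) • ec F j (u (up j α)) = 0 := by
  rcases Nat.eq_zero_or_pos m with hm | hm
  · subst hm; simp
  have : NeZero m := ⟨hm.ne'⟩
  have hβ := congrArg (fun v : HH m F => v α) h
  simp only [Qs, sum_apply, comp_apply, lp.coeFn_sum, Finset.sum_apply, Mop_apply, Zs_apply, map_smul,
    lp.coeFn_zero, Pi.zero_apply] at hβ
  simp only [mul_comm _ (rho α), Complex.ofReal_mul, mul_smul] at hβ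
  rw [← Finset.smul_sum] at hβ
  exact (smul_eq_zero.1 hβ).resolve_left (by exact_mod_cast (rho_pos _).ne')

lemma ker_term (u : HH m F) (α : Fin m → ℕ) (j i : Fin m) :
    ((√((α j : ℝ) + 1) : ℝ) : ℂ) • ((√(up j α i : ℝ) : ℝ) : ℂ) • ec F j (io F i (u (dn i (up j α))))
    + ((√(α i : ℝ) : ℝ) : ℂ) • ((√((dn i α j : ℝ) + 1) : ℝ) : ℂ) • io F i (ec F j (u (up j (dn i α))))
    = if i = j then (α j : ℂ) • u α + ec F j (io F j (u α)) else 0 := by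
  split_ifs with h
  · subst h
    rw [dn_up, up_self]
    have e1 : ((√((α i : ℝ) + 1) : ℝ) : ℂ) * ((√((α i : ℝ) + 1) : ℝ) : ℂ) = (α i : ℂ) + 1 := by
      rw [← Complex.ofReal_mul, Real.mul_self_sqrt (by positivity)]; push_cast; rfl
    have e0 : ((√(α i : ℝ) : ℝ) : ℂ) • ((√((dn i α i : ℝ) + 1) : ℝ) : ℂ) • io F i (ec F i (u (up i (dn i α))))
      = (α i : ℂ) • io F i (ec F i (u α)) := by
      by_cases h0 : α i = 0
      · simp [h0]
      · obtain ⟨γ, rfl⟩ := exists_up h0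
        rw [dn_up, up_self, smul_smul, Nat.cast_add, Nat.cast_one, ← Complex.ofReal_mul,
          Real.mul_self_sqrt (by positivity)]
        push_cast; rfl
    rw [e0]
    rw [Nat.cast_add, Nat.cast_one, smul_smul, e1]
    nth_rw 3 [← car_self i (u α)]
    module
  · rw [up_ne h, dn_ne (Ne.symm h)]
    by_cases h0 : α i = 0
    · simp [h0]
    · rw [dn_up_ne h0, smul_comm, ← smul_add, ← smul_add, car_ne (Ne.symm h)]
      simp

lemma ker_supp {u : HH m F} (h : Cop m F u = 0) (α : Fin m → ℕ) (S : Finset (Fin m)) :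
    ((deg α + S.card : ℕ) : ℂ) • u α S = 0 := by
  obtain ⟨h1, h2⟩ := ker_Q h
  have s1 : ∑ j, ∑ i, ((√((α j : ℝ) + 1) : ℝ) : ℂ) • ((√(up j α i : ℝ) : ℝ) : ℂ) •
      ec F j (io F i (u (dn i (up j α)))) = 0 := by
    refine Finset.sum_eq_zero fun j _ => ?_
    have := congrArg (fun x => ((√((α j : ℝ) + 1) : ℝ) : ℂ) • ec F j x) (ker_D1 h1 (up j α))
    simpa only [map_sum, map_smul, Finset.smul_sum, map_zero, smul_zero] using this
  have s2 : ∑ i, ∑ j, ((√(α i : ℝ) : ℝ) : ℂ) • ((√((dn i α j : ℝ) + 1) : ℝ) : ℂ) •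
      io F i (ec F j (u (up j (dn i α)))) = 0 := by
    refine Finset.sum_eq_zero fun i _ => ?_
    have := congrArg (fun x => ((√(α i : ℝ) : ℝ) : ℂ) • io F i x) (ker_D2 h2 (dn i α))
    simpa only [map_sum, map_smul, Finset.smul_sum, map_zero, smul_zero] using this
  rw [Finset.sum_comm] at s2
  have s3 : ∑ j, ((α j : ℂ) • u α + ec F j (io F j (u α))) = 0 := by
    have := congrArg₂ (· + ·) s1 s2
    simp only [add_zero] at this
    rw [← Finset.sum_add_distrib] at this
    rw [← this]
    refine Finset.sum_congr rfl fun j _ => ?_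
    rw [← Finset.sum_add_distrib]
    simp_rw [ker_term]
    simp
  have s4 := congrArg (fun x : EX m F => x S) s3
  have hs : ∀ (s : Finset (Fin m)) (f : Fin m → EX m F), (∑ i ∈ s, f i).ofLp S = ∑ i ∈ s, (f i).ofLp S := by
    intro s f
    induction s using Finset.induction_on with
    | empty => simp
    | insert a s ha ih => rw [Finset.sum_insert ha, Finset.sum_insert ha, ← ih]; rfl
  simp only [hs, PiLp.add_apply, PiLp.smul_apply, ec_io_self, PiLp.zero_apply] at s4
  rw [Finset.sum_add_distrib, ← Finset.sum_smul, Finset.sum_ite_mem, Finset.univ_inter, Finset.sum_const] at s4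
  rw [Nat.cast_add, add_smul, ← s4, deg]
  push_cast
  congr 1
  exact Nat.cast_smul_eq_nsmul ℂ _ _

lemma ker_supp' {u : HH m F} (h : Cop m F u = 0) (α : Fin m → ℕ) (S : Finset (Fin m))
    (hne : ¬ (α = 0 ∧ S = ∅)) : u α S = 0 := by
  refine (smul_eq_zero.1 (ker_supp h α S)).resolve_left ?_
  rw [Nat.cast_eq_zero]
  intro h0
  apply hne
  have h1 : deg α = 0 := by omega
  refine ⟨?_, Finset.card_eq_zero.1 (by omega)⟩
  ext i
  have := le_deg α i
  simp; omega

/-- the vacuum embedding -/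
noncomputable def vac (m : ℕ) (F : Type*) [NormedAddCommGroup F] [InnerProductSpace ℂ F] [FiniteDimensional ℂ F] :
    F →ₗ[ℂ] HH m F where
  toFun x := lp.single 2 (0 : Fin m → ℕ) (WithLp.toLp 2 (Pi.single (∅ : Finset (Fin m)) x))
  map_add' x y := by rw [Pi.single_add, WithLp.toLp_add, lp.single_add]
  map_smul' c x := by
    rw [RingHom.id_apply, ← lp.single_smul, ← WithLp.toLp_smul, ← Pi.single_smul]

lemma vac_apply (x : F) (α : Fin m → ℕ) (S : Finset (Fin m)) :
    vac m F x α S = if α = 0 ∧ S = ∅ then x else 0 := by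
  change (lp.single 2 (0 : Fin m → ℕ) (WithLp.toLp 2 (Pi.single (∅ : Finset (Fin m)) x)) : HH m F) α S = _
  rw [lp.single_apply]
  by_cases h : α = 0
  · subst h
    rw [Pi.single_eq_same]
    by_cases h' : S = ∅
    · subst h'; simp
    · simp [h']
  · rw [Pi.single_eq_of_ne h]; simp [h]

lemma vac_inj : Function.Injective (vac m F) := by
  intro x y h
  have := congrArg (fun u : HH m F => u 0 ∅) h
  simpa [vac_apply] using this

lemma Cop_vac (x : F) : Cop m F (vac m F x) = 0 := by
  rw [Cop, Top, sum_apply]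
  refine Finset.sum_eq_zero fun i _ => ?_
  rw [add_apply, comp_apply, comp_apply]
  have h1 : Zs (EX m F) i (vac m F x) = 0 := by
    ext α : 2
    ext S
    rw [Zs_apply, PiLp.smul_apply, vac_apply, if_neg]
    · simp
    · rintro ⟨h, -⟩
      have := congrFun h i
      simp at this
  have h2 : Mop _ (io F i) (vac m F x) = 0 := by
    ext α : 2
    ext S
    rw [Mop_apply, io_apply]
    split_ifs with h
    · rfl
    · rw [vac_apply, if_neg]
      · simp
      · rintro ⟨-, h⟩
        simp at h
  rw [h1, map_zero, Mop_Z_app, h2, map_zero, add_zero]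

lemma dk_Cop_zero : dk (sec m F 0 0) (Cop m F) = Module.finrank ℂ F := by
  have : sec m F 0 0 ⊓ (Cop m F : HH m F →ₗ[ℂ] HH m F).ker = (vac m F).range := by
    ext u
    rw [Submodule.mem_inf, LinearMap.mem_ker, LinearMap.mem_range]
    constructor
    · rintro ⟨-, h⟩
      refine ⟨u 0 ∅, ?_⟩
      ext α : 2
      ext S
      rw [vac_apply]
      split_ifs with h0
      · rw [h0.1, h0.2]
      · exact (ker_supp' h α S h0).symm
    · rintro ⟨x, rfl⟩
      refine ⟨fun α S h => ?_, Cop_vac x⟩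
      rw [vac_apply, if_neg]
      rintro ⟨rfl, rfl⟩
      simp [deg] at h
  rw [dk, this, LinearMap.finrank_range_of_inj vac_inj]

lemma dk_Cop_ne {p s : ZMod 2} (h : ¬ (p = 0 ∧ s = 0)) : dk (sec m F p s) (Cop m F) = 0 := by
  have : sec m F p s ⊓ (Cop m F : HH m F →ₗ[ℂ] HH m F).ker = ⊥ := by
    rw [eq_bot_iff]
    rintro u ⟨h1, h2⟩
    rw [Submodule.mem_bot]
    ext α : 2
    ext S
    by_cases h0 : α = 0 ∧ S = ∅
    · obtain ⟨rfl, rfl⟩ := h0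
      apply h1
      rintro ⟨h3, h4⟩
      apply h
      rw [← h3, ← h4]
      simp [deg]
    · exact ker_supp' h2 α S h0
  rw [dk, this]
  simp

end Sector
end SL

namespace SL
set_option linter.unusedSectionVars false
open ContinuousLinearMap
open scoped ComplexConjugate

section Main
variable {m : ℕ} {F : Type*} [NormedAddCommGroup F] [InnerProductSpace ℂ F] [FiniteDimensional ℂ F]

/-- toggling an element -/
def tog (i : Fin m) (S : Finset (Fin m)) : Finset (Fin m) := if i ∈ S then S.erase i else insert i S

lemma tog_tog (i : Fin m) (S : Finset (Fin m)) : tog i (tog i S) = S := by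
  by_cases h : i ∈ S
  · simp [tog, h, Finset.insert_erase h]
  · simp [tog, h]

lemma tog_card (i : Fin m) (S : Finset (Fin m)) : ((tog i S).card : ZMod 2) = S.card + 1 := by
  by_cases h : i ∈ S
  · have := Finset.card_erase_add_one h
    simp only [tog, h, if_true]
    rw [← this]
    push_cast
    rw [add_assoc, show (1 + 1 : ZMod 2) = 0 from rfl, add_zero]
  · simp [tog, h]

lemma card_par [NeZero m] (s : ZMod 2) :
    Fintype.card {S : Finset (Fin m) // (S.card : ZMod 2) = s} = 2 ^ (m - 1) := by
  have h1 : ∀ s : ZMod 2, Fintype.card {S : Finset (Fin m) // (S.card : ZMod 2) = s} =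
      Fintype.card {S : Finset (Fin m) // (S.card : ZMod 2) = s + 1} := by
    intro s
    refine Fintype.card_congr ⟨fun S => ⟨tog 0 S.1, by rw [tog_card, S.2]⟩,
      fun S => ⟨tog 0 S.1, by
        rw [tog_card, S.2, add_assoc, show (1 + 1 : ZMod 2) = 0 from rfl, add_zero]⟩, ?_, ?_⟩
    · intro S; simp [tog_tog]
    · intro S; simp [tog_tog]
  have h2 : Fintype.card {S : Finset (Fin m) // (S.card : ZMod 2) = s} +
     Fintype.card {S : Finset (Fin m) // ¬ (S.card : ZMod 2) = s} = 2 ^ m := by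
    rw [Fintype.card_subtype_compl, Fintype.card_finset, Fintype.card_fin]
    have := Fintype.card_subtype_le (fun S : Finset (Fin m) => (S.card : ZMod 2) = s)
    rw [Fintype.card_finset, Fintype.card_fin] at this
    omega
  have h3 : Fintype.card {S : Finset (Fin m) // ¬ (S.card : ZMod 2) = s}
     = Fintype.card {S : Finset (Fin m) // (S.card : ZMod 2) = s + 1} := by
    refine Fintype.card_congr (Equiv.subtypeEquivRight fun S => ⟨fun h => ne_add_one h, fun h h' => ?_⟩)
    exact (by decide : ∀ a : ZMod 2, a ≠ a + 1) _ (h'.symm.trans h)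
  have h4 := h1 s
  obtain ⟨k, rfl⟩ : ∃ k, m = k + 1 := ⟨m - 1, by have := NeZero.pos m; omega⟩
  rw [pow_succ] at h2
  simp only [Nat.add_sub_cancel]
  omega

lemma sec_mu {p s : ZMod 2} {S T : Finset (Fin m)} (hS : (S.card : ZMod 2) = s) (hT : (T.card : ZMod 2) = s)
    {u : HH m F} (hu : u ∈ sec m F p s) : Mop _ (mu F S T) u ∈ sec m F p s := by
  intro α R h
  rw [Mop_apply, mu_apply]
  split_ifs with hR
  · subst hR
    exact hu α T fun h' => h ⟨h'.1, hS⟩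
  · rfl

lemma dk_dvd [NeZero m] (p s : ZMod 2) (T : HH m F →L[ℂ] HH m F)
    (hT : ∀ S S' u, T (Mop _ (mu F S S') u) = Mop _ (mu F S S') (T u)) :
    ((2 ^ (m - 1) : ℕ) : ℤ) ∣ dk (sec m F p s) T := by
  rw [dk, Int.natCast_dvd_natCast]
  set X : Submodule ℂ (HH m F) := sec m F p s ⊓ (T : HH m F →ₗ[ℂ] HH m F).ker with hX
  by_cases hfin : Module.Finite ℂ X
  swap
  · rw [Module.finrank_of_not_finite hfin]; exact dvd_zero _
  have hne : Nonempty {S : Finset (Fin m) // (S.card : ZMod 2) = s} := by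
    rw [← Fintype.card_pos_iff, card_par]; positivity
  obtain ⟨S0⟩ := hne
  let Y0 : Submodule ℂ (HH m F) :=
    { carrier := {u | ∀ α S, S ≠ S0.1 → u α S = 0}
      add_mem' := fun {u v} hu hv α S h => by
        rw [lp.coeFn_add, Pi.add_apply, PiLp.add_apply, hu α S h, hv α S h, add_zero]
      zero_mem' := fun α S h => rfl
      smul_mem' := fun c u hu α S h => by
        rw [lp.coeFn_smul, Pi.smul_apply, PiLp.smul_apply, hu α S h, smul_zero] }
  let Y : Submodule ℂ (HH m F) := X ⊓ Y0
  have hYfin : Module.Finite ℂ Y := Submodule.finiteDimensional_of_le (inf_le_left : Y ≤ X)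
  have hXmu : ∀ (S S' : {S : Finset (Fin m) // (S.card : ZMod 2) = s}), ∀ u ∈ X, Mop _ (mu F S.1 S'.1) u ∈ X := by
    rintro S S' u ⟨h1, h2⟩
    refine ⟨sec_mu S.2 S'.2 h1, ?_⟩
    have h3 : T u = 0 := h2
    change T (Mop _ (mu F S.1 S'.1) u) = 0
    rw [hT, h3, map_zero]
  have hYmu : ∀ (S' : {S : Finset (Fin m) // (S.card : ZMod 2) = s}), ∀ u ∈ X, Mop _ (mu F S0.1 S'.1) u ∈ Y := by
    intro S' u hu
    refine ⟨hXmu S0 S' u hu, fun α S h => ?_⟩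
    rw [Mop_apply, mu_apply, if_neg h]
  let Φ : X →ₗ[ℂ] ({S : Finset (Fin m) // (S.card : ZMod 2) = s} → Y) :=
    { toFun := fun u S => ⟨Mop _ (mu F S0.1 S.1) u.1, hYmu S u.1 u.2⟩
      map_add' := fun u v => by ext1 S; apply Subtype.ext; simp
      map_smul' := fun c u => by ext1 S; apply Subtype.ext; simp }
  have hb : Function.Bijective Φ := by
    constructor
    · rw [← LinearMap.ker_eq_bot, LinearMap.ker_eq_bot']
      intro u hu
      apply Subtype.ext
      ext α : 2
      ext S
      by_cases hS : (S.card : ZMod 2) = s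
      · have h1 := congrArg Subtype.val (congrFun hu ⟨S, hS⟩)
        have h2 := congrArg (fun v : HH m F => v α S0.1) h1
        have h3 : Mop _ (mu F S0.1 S) u.1 α S0.1 = 0 := h2
        rw [Mop_apply, mu_apply, if_pos rfl] at h3
        exact h3
      · exact u.2.1 α S fun h => hS h.2
    · intro y
      refine ⟨⟨∑ S : {S : Finset (Fin m) // (S.card : ZMod 2) = s}, Mop _ (mu F S.1 S0.1) (y S).1,
        Submodule.sum_mem _ fun S _ => hXmu S S0 _ (y S).2.1⟩, ?_⟩
      ext1 S
      apply Subtype.ext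
      ext α : 2
      ext R
      change Mop _ (mu F S0.1 S.1) (∑ S : {S : Finset (Fin m) // (S.card : ZMod 2) = s},
        Mop _ (mu F S.1 S0.1) (y S).1) α R = (y S).1 α R
      rw [Mop_apply, mu_apply]
      split_ifs with hR
      · subst hR
        rw [coord_sum, Finset.sum_eq_single S]
        · rw [Mop_apply, mu_apply, if_pos rfl]
        · intro S' _ hS'
          rw [Mop_apply, mu_apply, if_neg fun h => hS' (Subtype.ext h.symm)]
        · simp
      · exact ((y S).2.2 α R hR).symm
  rw [(LinearEquiv.ofBijective Φ hb).finrank_eq, Module.finrank_pi_fintype, Finset.sum_const, Finset.card_univ, card_par]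
  exact ⟨_, rfl⟩

lemma top_mu (A B : Fin m → F →L[ℂ] F) (S S' : Finset (Fin m)) (u : HH m F) [CompleteSpace F] :
    Top (fun i => tens m (A i)) (fun i => tens m (B i)) (Mop _ (mu F S S') u) =
      Mop _ (mu F S S') (Top (fun i => tens m (A i)) (fun i => tens m (B i)) u) := by
  have h : ∀ (a : F →L[ℂ] F) (v : HH m F), Mop _ (tens m a) (Mop _ (mu F S S') v) = Mop _ (mu F S S') (Mop _ (tens m a) v) := by
    intro a v
    have := congrArg (fun T => (Mop (Fin m → ℕ) T) v) (tens_mu a S S')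
    exact this
  simp only [Top, sum_apply, map_sum, add_apply, comp_apply, map_add]
  refine Finset.sum_congr rfl fun i _ => ?_
  rw [← Mop_Z_app, ← Mop_Zs_app, h, h]

theorem main_dvd [NeZero m] (A B : Fin m → F →L[ℂ] F)
    (h : ∀ (z : Fin m → ℂ) (x : F), z ≠ 0 → x ≠ 0 → ∑ i, (A i (z i • x) + B i (conj (z i) • x)) ≠ 0) :
    2 ^ (m - 1) ∣ Module.finrank ℂ F := by
  have : CompleteSpace F := FiniteDimensional.complete ℂ F
  set T : HH m F →L[ℂ] HH m F := Top (fun i => tens m (A i)) (fun i => tens m (B i)) with hT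
  have hTa : adjoint T = Top (fun i => tens m (adjoint (B i))) (fun i => tens m (adjoint (A i))) := by
    rw [hT, Top_adjoint]; simp only [tens_adjoint]
  obtain ⟨c, hc, hc'⟩ := exists_bound A B h
  obtain ⟨d, hd, hd'⟩ := exists_bound _ _ (exists_bound_adj A B h)
  have eA : Est T := est_top _ _ c hc (tens_bound A B c hc')
  have eA' : Est (adjoint T) := by
    rw [hTa]; exact est_top _ _ d hd (tens_bound _ _ d hd')
  have eC : Est (Cop m F) := est_top _ _ 1 one_pos koszul_norm
  have eC' : Est (adjoint (Cop m F)) := by rw [Cop_adjoint]; exact eC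
  have hcomm : Cpt (T ∘L Cop m F - Cop m F ∘L T) :=
    CC.top (fun i j => tens_io _ _) (fun i j => tens_ec _ _) (fun i j => tens_io _ _) (fun i j => tens_ec _ _)
  have z2 : (1 + 1 : ZMod 2) = 0 := rfl
  have z1 : (0 + 1 : ZMod 2) = 1 := rfl
  have hA : ∀ {p q s : ZMod 2}, p + 1 = q → ∀ u ∈ sec m F p s, T u ∈ sec m F q s := by
    rintro p q s rfl u hu; exact sec_topT A B hu
  have hA' : ∀ {p q s : ZMod 2}, p + 1 = q → ∀ u ∈ sec m F p s, adjoint T u ∈ sec m F q s := by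
    rintro p q s rfl u hu; rw [hTa]; exact sec_topT _ _ hu
  have hC : ∀ {p q s t : ZMod 2}, p + 1 = q → s + 1 = t → ∀ u ∈ sec m F p s, Cop m F u ∈ sec m F q t := by
    rintro p q s t rfl rfl u hu; exact sec_Cop hu
  have hC' : ∀ {p q s t : ZMod 2}, p + 1 = q → s + 1 = t → ∀ u ∈ sec m F p s, adjoint (Cop m F) u ∈ sec m F q t := by
    rw [Cop_adjoint]; exact hC
  have key := index_square (U1 := sec m F 0 0) (U2 := sec m F 1 1) (U3 := sec m F 0 1) (U4 := sec m F 1 0)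
    (hA z2) (hA' z1) (hA z1) (hA' z2) (hC z1 z1) (hC' z2 z2) (hC z2 z1) (hC' z1 z2) eA eA' eC eC' hcomm
  rw [Cop_adjoint, dk_Cop_zero, dk_Cop_ne (by decide), dk_Cop_ne (by decide), dk_Cop_ne (by decide)] at key
  have d1 : ∀ p s, ((2 ^ (m - 1) : ℕ) : ℤ) ∣ dk (sec m F p s) T := fun p s => dk_dvd p s T (fun S S' u => top_mu A B S S' u)
  have d2 : ∀ p s, ((2 ^ (m - 1) : ℕ) : ℤ) ∣ dk (sec m F p s) (adjoint T) := fun p s =>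
    dk_dvd p s _ (by rw [hTa]; exact fun S S' u => top_mu _ _ S S' u)
  rw [← Int.natCast_dvd_natCast]
  have e : ((Module.finrank ℂ F : ℕ) : ℤ) = dk (sec m F 0 0) T - dk (sec m F 1 0) (adjoint T)
    - (dk (sec m F 1 1) T - dk (sec m F 0 1) (adjoint T)) := by linarith
  rw [e]
  exact dvd_sub (dvd_sub (d1 _ _) (d2 _ _)) (dvd_sub (d1 _ _) (d2 _ _))

end Main
end SL

namespace SL
open Matrix

/-- A bilinear product on a real space of dimension `2 * m` without zero divisors forces divisibility. -/
theorem div_dvd {E : Type*} [AddCommGroup E] [Module ℝ E] [FiniteDimensional ℝ E] {m : ℕ} [NeZero m]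
    (hE : Module.finrank ℝ E = 2 * m) (L : E →ₗ[ℝ] E →ₗ[ℝ] E)
    (hL : ∀ x y, L x y = 0 → x = 0 ∨ y = 0) : 2 ^ (m - 1) ∣ 2 * m := by
  classical
  have hc : Module.finrank ℝ E = Fintype.card (Fin m × Fin 2) := by simp [hE, mul_comm]
  let d : Module.Basis (Fin m × Fin 2) ℝ E :=
    (Module.finBasisOfFinrankEq ℝ E hc).reindex (Fintype.equivFin _).symm
  let M : Fin m × Fin 2 → Fin m × Fin 2 → Fin m × Fin 2 → ℝ := fun k r s => d.repr (L (d k) (d s)) r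
  have hM : ∀ w v : Fin m × Fin 2 → ℝ, w ≠ 0 → (∀ r, ∑ s, (∑ k, w k * M k r s) * v s = 0) → v = 0 := by
    intro w v hw h
    have h1 : L (d.equivFun.symm w) (d.equivFun.symm v) = 0 := by
      apply d.repr.injective
      ext r
      rw [map_zero, Finsupp.zero_apply, ← h r]
      simp only [Module.Basis.equivFun_symm_apply, map_sum, map_smul, LinearMap.sum_apply, LinearMap.smul_apply,
        Finsupp.coe_finsetSum, Finset.sum_apply, Finsupp.smul_apply, smul_eq_mul, M, Finset.sum_mul,
        Finset.mul_sum]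
      refine Finset.sum_congr rfl fun s _ => Finset.sum_congr rfl fun k _ => by ring
    rcases hL _ _ h1 with h2 | h2
    · exact absurd ((LinearEquiv.map_eq_zero_iff _).1 h2) hw
    · exact (LinearEquiv.map_eq_zero_iff _).1 h2
  let P : Fin m → Matrix (Fin m × Fin 2) (Fin m × Fin 2) ℂ := fun i => of fun r s =>
    ((M (i, 0) r s : ℂ) - Complex.I * M (i, 1) r s) / 2
  let Q : Fin m → Matrix (Fin m × Fin 2) (Fin m × Fin 2) ℂ := fun i => of fun r s =>
    ((M (i, 0) r s : ℂ) + Complex.I * M (i, 1) r s) / 2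
  have key := main_dvd (F := EuclideanSpace ℂ (Fin m × Fin 2))
    (fun i => LinearMap.toContinuousLinearMap (Matrix.toEuclideanLin (P i)))
    (fun i => LinearMap.toContinuousLinearMap (Matrix.toEuclideanLin (Q i))) (by
    intro z x hz hx h0
    apply hx
    let w : Fin m × Fin 2 → ℝ := fun k => if k.2 = 0 then (z k.1).re else (z k.1).im
    have hw : w ≠ 0 := by
      intro hw
      apply hz
      ext i
      apply Complex.ext
      · simpa [w] using congrFun hw (i, 0)
      · simpa [w] using congrFun hw (i, 1)
    have hr : ∀ r, ∑ s, ((∑ k, w k * M k r s : ℝ) : ℂ) * x s = 0 := by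
      intro r
      have := congrArg (fun f : EuclideanSpace ℂ (Fin m × Fin 2) => f r) h0
      simp only [WithLp.ofLp_sum, Finset.sum_apply, PiLp.add_apply, PiLp.zero_apply,
        LinearMap.coe_toContinuousLinearMap', Matrix.toLpLin_apply, Matrix.mulVec, dotProduct,
        PiLp.smul_apply, smul_eq_mul, P, Q, of_apply, ← Finset.sum_add_distrib] at this
      rw [Finset.sum_comm] at this
      rw [← this]
      refine Finset.sum_congr rfl fun s _ => ?_
      rw [Fintype.sum_prod_type]
      push_cast
      rw [Finset.sum_mul]
      refine Finset.sum_congr rfl fun i _ => ?_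
      simp only [Fin.sum_univ_two, w, if_true, one_ne_zero, if_false]
      have e1 := Complex.re_add_im (z i)
      have e2 : (starRingEnd ℂ) (z i) = (z i).re - (z i).im * Complex.I := by
        apply Complex.ext <;> simp
      rw [e2]
      nth_rewrite 3 [← e1]
      linear_combination (((z i).im : ℂ) * M (i, 1) r s * x s) * Complex.I_sq
    have hre : (fun s => (x s).re) = 0 := hM w _ hw fun r => by
      have := congrArg Complex.re (hr r)
      simpa only [Complex.re_sum, Complex.re_ofReal_mul, Complex.zero_re] using this
    have him : (fun s => (x s).im) = 0 := hM w _ hw fun r => by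
      have := congrArg Complex.im (hr r)
      simpa only [Complex.im_sum, Complex.im_ofReal_mul, Complex.zero_im] using this
    ext s
    exact Complex.ext (congrFun hre s) (congrFun him s))
  simpa [mul_comm] using key

section
variable {V : Type*} [AddCommGroup V] [Module ℝ V] (T : AlternatingMap ℝ V ℝ (Fin 3))

lemma T_add1 (x x' y z : V) : T ![x + x', y, z] = T ![x, y, z] + T ![x', y, z] := T.map_vecCons_add _ _ _
lemma T_smul1 (c : ℝ) (x y z : V) : T ![c • x, y, z] = c * T ![x, y, z] := T.map_vecCons_smul _ _ _
lemma T_sw12 (x y z : V) : T ![y, x, z] = - T ![x, y, z] := by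
  rw [← T.map_swap ![x, y, z] (show (0 : Fin 3) ≠ 1 by decide)]
  congr 1; ext i; fin_cases i <;> simp [Equiv.swap_apply_def]
lemma T_sw23 (x y z : V) : T ![x, z, y] = - T ![x, y, z] := by
  rw [← T.map_swap ![x, y, z] (show (1 : Fin 3) ≠ 2 by decide)]
  congr 1; ext i; fin_cases i <;> simp [Equiv.swap_apply_def]
lemma T_add2 (x y y' z : V) : T ![x, y + y', z] = T ![x, y, z] + T ![x, y', z] := by
  rw [T_sw12, T_add1, T_sw12 T x y, T_sw12 T x y']; ring
lemma T_smul2 (c : ℝ) (x y z : V) : T ![x, c • y, z] = c * T ![x, y, z] := by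
  rw [T_sw12, T_smul1, T_sw12 T x y]; ring
lemma T_add3 (x y z z' : V) : T ![x, y, z + z'] = T ![x, y, z] + T ![x, y, z'] := by
  rw [T_sw23, T_add2, T_sw23 T x y z, T_sw23 T x y z']; ring
lemma T_smul3 (c : ℝ) (x y z : V) : T ![x, y, c • z] = c * T ![x, y, z] := by
  rw [T_sw23, T_smul2, T_sw23 T x y z]; ring
lemma T_eq12 (x z : V) : T ![x, x, z] = 0 := by linarith [T_sw12 T x x z]
lemma T_eq23 (x z : V) : T ![x, z, z] = 0 := by linarith [T_sw23 T x z z]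
lemma T_eq13 (x z : V) : T ![x, z, x] = 0 := by linarith [T_sw23 T x z x, T_eq12 T x z]

/-- `T x y ·` as a linear form. -/
def Tl (x y : V) : V →ₗ[ℝ] ℝ where
  toFun z := T ![x, y, z]
  map_add' := T_add3 T x y
  map_smul' c z := T_smul3 T c x y z

lemma T_sum3 {n : ℕ} (b : Module.Basis (Fin n) ℝ V) (x y z : V) :
    T ![x, y, z] = ∑ i, b.repr z i * T ![x, y, b i] := by
  have : Tl T x y z = ∑ i, b.repr z i * Tl T x y (b i) := by
    conv_lhs => rw [← b.sum_repr z]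
    rw [map_sum]
    simp
  exact this

lemma even_case {n : ℕ} (b : Module.Basis (Fin (n + 1)) ℝ V) (hn : Odd n) :
    ∃ a b : V, LinearIndependent ℝ ![a, b] ∧ ∀ x : V, T ![a, b, x] = 0 := by
  let N : Matrix (Fin n) (Fin n) ℝ := of fun j k => T ![b 0, b j.succ, b k.succ]
  have hN : Nᵀ = -N := by ext j k; exact T_sw23 T _ _ _
  have hd : N.det = 0 := by
    have := det_transpose N
    rw [hN, det_neg, Fintype.card_fin, hn.neg_one_pow] at this
    linarith
  obtain ⟨v, hv, hv0⟩ := Matrix.exists_mulVec_eq_zero_iff.2 hd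
  let c : V := b.equivFun.symm (Fin.cons 0 v)
  have hc : ∀ i, b.repr c i = (Fin.cons 0 v : Fin (n + 1) → ℝ) i := fun i => by
    rw [← b.equivFun_apply, LinearEquiv.apply_symm_apply]
  refine ⟨b 0, c, ?_, fun x => ?_⟩
  · rw [LinearIndependent.pair_iff]
    intro s t h
    have hh : ∀ i, s * b.repr (b 0) i + t * b.repr c i = 0 := fun i => by
      simpa only [map_add, map_smul, Finsupp.add_apply, Finsupp.smul_apply, smul_eq_mul, map_zero, Finsupp.zero_apply] using congrArg (fun u => b.repr u i) h
    have ht : t = 0 := by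
      by_contra ht
      apply hv
      ext j
      have := hh j.succ
      rw [hc] at this
      simpa [Finsupp.single_apply, (Fin.succ_ne_zero j).symm, ht] using this
    refine ⟨?_, ht⟩
    have := hh 0
    rw [hc] at this
    simpa using this
  · rw [T_sum3 T b]
    refine Finset.sum_eq_zero fun i _ => ?_
    rw [T_sw23, T_sum3 T b, Fin.sum_univ_succ]
    simp only [hc, Fin.cons_zero, Fin.cons_succ, zero_mul, zero_add]
    refine mul_eq_zero_of_right _ ?_
    rw [neg_eq_zero]
    induction i using Fin.cases with
    | zero => simp [T_eq12]
    | succ j =>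
      have := congrFun hv0 j
      simp only [mulVec, dotProduct, N, of_apply, Pi.zero_apply] at this
      rw [← this]
      exact Finset.sum_congr rfl fun k _ => mul_comm _ _

/-- Coordinates of the cross product. -/
noncomputable def crs {n : ℕ} (b : Module.Basis (Fin n) ℝ V) (x y : Fin n → ℝ) : Fin n → ℝ :=
  fun i => T ![b.equivFun.symm x, b.equivFun.symm y, b i]

lemma crs_dot {n : ℕ} (b : Module.Basis (Fin n) ℝ V) (x y z : Fin n → ℝ) :
    crs T b x y ⬝ᵥ z = T ![b.equivFun.symm x, b.equivFun.symm y, b.equivFun.symm z] := by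
  rw [T_sum3 T b]
  simp only [← b.equivFun_apply, LinearEquiv.apply_symm_apply, dotProduct, crs]
  exact Finset.sum_congr rfl fun k _ => mul_comm _ _

/-- The product on `ℝ ⊕ V`. -/
noncomputable def prd {n : ℕ} (b : Module.Basis (Fin n) ℝ V) :
    (ℝ × (Fin n → ℝ)) →ₗ[ℝ] (ℝ × (Fin n → ℝ)) →ₗ[ℝ] (ℝ × (Fin n → ℝ)) :=
  LinearMap.mk₂ ℝ (fun p q => (p.1 * q.1 - p.2 ⬝ᵥ q.2, p.1 • q.2 + q.1 • p.2 + crs T b p.2 q.2))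
    (by
      intro p p' q
      ext i
      · simp [add_dotProduct]; ring
      · simp only [crs, Prod.fst_add, Prod.snd_add, map_add, T_add1, Pi.add_apply, Pi.smul_apply, smul_eq_mul]; ring)
    (by
      intro c p q
      ext i
      · simp [smul_dotProduct]; ring
      · simp only [crs, Prod.smul_fst, Prod.smul_snd, map_smul, T_smul1, Pi.add_apply, Pi.smul_apply, smul_eq_mul]; ring)
    (by
      intro p p' q
      ext i
      · simp [dotProduct_add]; ring
      · simp only [crs, Prod.fst_add, Prod.snd_add, map_add, T_add2, Pi.add_apply, Pi.smul_apply, smul_eq_mul]; ring)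
    (by
      intro c p q
      ext i
      · simp [dotProduct_smul]; ring
      · simp only [crs, Prod.smul_fst, Prod.smul_snd, map_smul, T_smul2, Pi.add_apply, Pi.smul_apply, smul_eq_mul]; ring)

lemma prd_ne {n : ℕ} (b : Module.Basis (Fin n) ℝ V)
    (hT : ∀ a b : V, LinearIndependent ℝ ![a, b] → ∃ x : V, T ![a, b, x] ≠ 0)
    (p q : ℝ × (Fin n → ℝ)) (h : prd T b p q = 0) : p = 0 ∨ q = 0 := by
  obtain ⟨α, x⟩ := p
  obtain ⟨β, y⟩ := q
  simp only [prd, LinearMap.mk₂_apply, Prod.mk_eq_zero] at h ⊢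
  obtain ⟨h1, h2⟩ := h
  have cx : crs T b x y ⬝ᵥ x = 0 := by rw [crs_dot, T_eq13]
  have cy : crs T b x y ⬝ᵥ y = 0 := by rw [crs_dot, T_eq23]
  have c0 : crs T b x y = 0 := by
    have := congrArg (fun u => crs T b x y ⬝ᵥ u) h2
    simp only [dotProduct_add, dotProduct_smul, cx, cy, smul_zero, zero_add, dotProduct_zero] at this
    exact dotProduct_self_eq_zero.1 this
  rw [c0, add_zero] at h2
  have hdep : ∃ s t : ℝ, s • x + t • y = 0 ∧ (s = 0 → t ≠ 0) := by
    by_contra hno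
    push Not at hno
    obtain ⟨z, hz⟩ := hT (b.equivFun.symm x) (b.equivFun.symm y) (by
      rw [LinearIndependent.pair_iff]
      intro s t hst
      rw [← map_smul, ← map_smul, ← map_add] at hst
      exact hno s t ((LinearEquiv.map_eq_zero_iff _).1 hst))
    apply hz
    have := crs_dot T b x y (b.equivFun z)
    rw [c0, zero_dotProduct, LinearEquiv.symm_apply_apply] at this
    exact this.symm
  obtain ⟨s, t, hst, hs⟩ := hdep
  have hxx : 0 ≤ x ⬝ᵥ x := Finset.sum_nonneg fun i _ => mul_self_nonneg _
  have e1 : α * (x ⬝ᵥ y) + β * (x ⬝ᵥ x) = 0 := by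
    have := congrArg (fun u => x ⬝ᵥ u) h2
    simpa [dotProduct_add] using this
  have e2 : β * (α * α + x ⬝ᵥ x) = 0 := by
    rw [show x ⬝ᵥ y = α * β by linarith] at e1
    linarith
  rcases mul_eq_zero.1 e2 with hβ | hβ
  · subst hβ
    rw [zero_smul, add_zero] at h2
    rcases smul_eq_zero.1 h2 with hα | hy
    · subst hα
      by_cases hy : y = 0
      · exact Or.inr ⟨rfl, hy⟩
      left
      refine ⟨rfl, ?_⟩
      have hxy : x ⬝ᵥ y = 0 := by linarith
      have e3 : s * (x ⬝ᵥ y) + t * (y ⬝ᵥ y) = 0 := by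
        have := congrArg (fun u => u ⬝ᵥ y) hst
        simpa [add_dotProduct] using this
      rw [hxy, mul_zero, zero_add] at e3
      have ht : t = 0 := (mul_eq_zero.1 e3).resolve_right fun h => hy (dotProduct_self_eq_zero.1 h)
      subst ht
      rw [zero_smul, add_zero] at hst
      exact (smul_eq_zero.1 hst).resolve_left fun h => hs h rfl
    · exact Or.inr ⟨rfl, hy⟩
  · left
    have := mul_self_nonneg α
    exact ⟨mul_self_eq_zero.1 (by linarith), dotProduct_self_eq_zero.1 (by linarith)⟩

lemma pow_lt_aux (k : ℕ) : 2 * (k + 5) < 2 ^ (k + 4) := by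
  induction k with
  | zero => norm_num
  | succ k ih => rw [show k + 1 + 4 = (k + 4) + 1 by ring, pow_succ]; omega

end
end SL

/-- Except when `n ∈ {3,7}`, every alternating trilinear form on a real vector
space of dimension `n > 2` possesses a singular line. -/
theorem stmt_3 (V : Type*) [AddCommGroup V] [Module ℝ V] [FiniteDimensional ℝ V]
    (n : ℕ) (hdim : Module.finrank ℝ V = n) (hn : 2 < n) (h3 : n ≠ 3) (h7 : n ≠ 7)
    (T : AlternatingMap ℝ V ℝ (Fin 3)) :
    ∃ a b : V, LinearIndependent ℝ ![a, b] ∧ ∀ x : V, T ![a, b, x] = 0 := by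
  rcases Nat.even_or_odd n with he | ho
  · obtain ⟨q, rfl⟩ : ∃ q, n = q + 1 := ⟨n - 1, by omega⟩
    exact SL.even_case T (Module.finBasisOfFinrankEq ℝ V hdim) (by
      rcases Nat.even_or_odd q with h | h
      · exact absurd he (by rw [Nat.not_even_iff_odd]; exact h.add_one)
      · exact h)
  · by_contra hcon
    push Not at hcon
    obtain ⟨k, hk⟩ := ho
    have : NeZero (k + 1) := ⟨by omega⟩
    have := SL.div_dvd (m := k + 1) (by simp; omega)
      (SL.prd T (Module.finBasisOfFinrankEq ℝ V hdim)) (SL.prd_ne T _ hcon)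
    simp only [Nat.add_sub_cancel] at this
    rcases Nat.lt_or_ge k 4 with h4 | h4
    · have : k = 2 := by omega
      subst this
      revert this
      norm_num
    · obtain ⟨j, rfl⟩ := Nat.exists_eq_add_of_le' h4
      have h := Nat.le_of_dvd (by omega) this
      have := SL.pow_lt_aux j
      omega
end

section
/- Let q = 2^h with h even, and let μ ∈ GF(q) satisfy tr(μ) = 1 where tr : GF(q) → GF(2) is the absolute trace. Let T be the alternating trilinear form on V = GF(q)^6 with trivector t = f_{234} + f_{135} + f_{126} + f_{156} + f_{246} + f_{345} + μ f_{456}. Then the set of T-singular lines is a line-spread of PG(5,q). -/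
namespace Stmt8Aux

/-- The alternating form reading off the `(i,j,k)` minor. -/
noncomputable def minor (F : Type*) [Field F] (i j k : Fin 6) :
    AlternatingMap F (Fin 6 → F) F (Fin 3) :=
  (Matrix.detRowAlternating (R := F) (n := Fin 3)).compLinearMap
    (LinearMap.funLeft F F ![i, j, k])

lemma minor_apply (F : Type*) [Field F] (i j k : Fin 6) (a b x : Fin 6 → F) :
    minor F i j k ![a, b, x] =
      a i * b j * x k - a i * b k * x j - a j * b i * x k + a j * b k * x i
        + a k * b i * x j - a k * b j * x i := by
  have : minor F i j k ![a, b, x] =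
    Matrix.det (Matrix.of fun r s => (![a, b, x] r) (![i, j, k] s)) := rfl
  rw [this, Matrix.det_fin_three]
  simp

lemma ext_sorted {F : Type*} [Field F] (T S : AlternatingMap F (Fin 6 → F) F (Fin 3))
    (H : ∀ i j k : Fin 6, i < j → j < k →
      T ![Pi.single i 1, Pi.single j 1, Pi.single k 1] =
      S ![Pi.single i 1, Pi.single j 1, Pi.single k 1]) : T = S := by
  refine Module.Basis.ext_alternating (Pi.basisFun F (Fin 6)) ?_
  intro v hv
  have hmono : StrictMono (v ∘ Tuple.sort v) :=
    (Tuple.monotone_sort v).strictMono_of_injective (hv.comp (Tuple.sort v).injective)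
  have key : ∀ R : AlternatingMap F (Fin 6 → F) F (Fin 3),
      R (fun i => Pi.basisFun F (Fin 6) (v i)) =
      Equiv.Perm.sign (Tuple.sort v) • R ![Pi.single ((v ∘ Tuple.sort v) 0) 1,
        Pi.single ((v ∘ Tuple.sort v) 1) 1, Pi.single ((v ∘ Tuple.sort v) 2) 1] := by
    intro R
    have h1 := R.map_perm (fun i => Pi.basisFun F (Fin 6) (v i)) (Tuple.sort v)
    have h2 : (fun i => Pi.basisFun F (Fin 6) (v i)) ∘ (Tuple.sort v) =
        ![Pi.single ((v ∘ Tuple.sort v) 0) 1,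
        Pi.single ((v ∘ Tuple.sort v) 1) 1, Pi.single ((v ∘ Tuple.sort v) 2) 1] := by
      funext i
      fin_cases i <;> simp
    rw [← h2, h1, smul_smul, Int.units_mul_self, one_smul]
  rw [key T, key S, H _ _ _ (hmono (by decide)) (hmono (by decide))]

/-- The explicit form. -/
noncomputable def form {F : Type*} [Field F] (μ : F) :
    AlternatingMap F (Fin 6 → F) F (Fin 3) :=
  minor F 1 2 3 + minor F 0 2 4 + minor F 0 1 5 + minor F 0 4 5 + minor F 1 3 5
    + minor F 2 3 4 + μ • minor F 3 4 5

lemma eq_form {F : Type*} [Field F] (μ : F) (T : AlternatingMap F (Fin 6 → F) F (Fin 3))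
    (hT : ∀ i j k : Fin 6, i < j → j < k →
      T ![Pi.single i 1, Pi.single j 1, Pi.single k 1] =
        if ((i : ℕ), (j : ℕ), (k : ℕ)) ∈
            [((1:ℕ), (2:ℕ), (3:ℕ)), (0, 2, 4), (0, 1, 5),
              (0, 4, 5), (1, 3, 5), (2, 3, 4)] then 1
        else if ((i : ℕ), (j : ℕ), (k : ℕ)) = (3, 4, 5) then μ
        else 0) : T = form μ := by
  apply ext_sorted
  intro i j k hij hjk
  rw [hT i j k hij hjk]
  simp only [form, AlternatingMap.add_apply, AlternatingMap.smul_apply, minor_apply]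
  fin_cases i <;> fin_cases j <;> first | (exfalso; revert hij; decide) | skip
  all_goals fin_cases k <;> first | (exfalso; revert hjk; decide) | simp

lemma tele {F : Type*} [Field F] [CharP F 2] (y : F) (n : ℕ) :
    ∑ i ∈ Finset.range n, (y ^ 2 + y) ^ 2 ^ i = y ^ 2 ^ n + y := by
  have h2 : (2 : F) = 0 := CharTwo.two_eq_zero
  induction n with
  | zero => simp; linear_combination -y * h2
  | succ n ih =>
    rw [Finset.sum_range_succ, ih, add_pow_char_pow, ← pow_mul, pow_succ 2 n, mul_comm 2]
    linear_combination y ^ 2 ^ n * h2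

lemma no_root {F : Type*} [Field F] [Fintype F] [CharP F 2] (h : ℕ) (hh : Even h)
    (hcard : Fintype.card F = 2 ^ h)
    (μ : F) (hμ : ∑ i ∈ Finset.range h, μ ^ 2 ^ i = 1) (y : F) : y ^ 2 + y ≠ μ + 1 := by
  intro hy
  have h2 : (2 : F) = 0 := CharTwo.two_eq_zero
  have h1 := tele y h
  rw [hy, ← hcard, FiniteField.pow_card] at h1
  simp only [add_pow_char_pow, one_pow, Finset.sum_add_distrib, hμ] at h1
  obtain ⟨k, rfl⟩ := hh
  simp at h1
  have : (1 : F) = 0 := by linear_combination h1 + (y - k) * h2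
  exact one_ne_zero this

lemma norm_ne {F : Type*} [Field F] [CharP F 2] (μ : F) (H : ∀ y : F, y ^ 2 + y ≠ μ + 1)
    (a b : F) (hab : a ≠ 0 ∨ b ≠ 0) : a ^ 2 + a * b + (μ + 1) * b ^ 2 ≠ 0 := by
  intro h0
  have h2 : (2 : F) = 0 := CharTwo.two_eq_zero
  by_cases hb : b = 0
  · subst hb
    simp_all
  · apply H (a / b)
    field_simp
    linear_combination h0 - (μ + 1) * b ^ 2 * h2

/-- Multiplication by `θ`, where `θ² = θ + (μ + 1)`. -/
def theta {F : Type*} [Field F] (μ : F) (v : Fin 6 → F) : Fin 6 → F :=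
  ![(μ + 1) * v 3, (μ + 1) * v 4, (μ + 1) * v 5, v 0 + v 3, v 1 + v 4, v 2 + v 5]

lemma form_apply {F : Type*} [Field F] (μ : F) (a b x : Fin 6 → F) :
    form μ ![a, b, x] = minor F 1 2 3 ![a, b, x] + minor F 0 2 4 ![a, b, x]
      + minor F 0 1 5 ![a, b, x] + minor F 0 4 5 ![a, b, x] + minor F 1 3 5 ![a, b, x]
      + minor F 2 3 4 ![a, b, x] + μ * minor F 3 4 5 ![a, b, x] := by
  simp [form]

lemma form_theta {F : Type*} [Field F] [CharP F 2] (μ : F) (v x : Fin 6 → F) :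
    form μ ![v, theta μ v, x] = 0 := by
  simp only [form_apply, minor_apply, theta]
  have h2 : (2 : F) = 0 := CharTwo.two_eq_zero
  simp
  ring_nf
  simp [h2]

lemma form_span {F : Type*} [Field F] [CharP F 2] (μ : F) (v x : Fin 6 → F) (s t s' t' : F) :
    form μ ![s • v + t • theta μ v, s' • v + t' • theta μ v, x] = 0 := by
  have h2 : (2 : F) = 0 := CharTwo.two_eq_zero
  have : form μ ![s • v + t • theta μ v, s' • v + t' • theta μ v, x] =
      (s * t' - t * s') * form μ ![v, theta μ v, x] := by
    simp only [form_apply, minor_apply, Pi.add_apply, Pi.smul_apply, smul_eq_mul]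
    ring
  rw [this, form_theta, mul_zero]

lemma exists_pair {F : Type*} [Field F] (v : Fin 6 → F) (hv : v ≠ 0) :
    (v 0 ≠ 0 ∨ v 3 ≠ 0) ∨ (v 1 ≠ 0 ∨ v 4 ≠ 0) ∨ (v 2 ≠ 0 ∨ v 5 ≠ 0) := by
  by_contra hc
  push Not at hc
  apply hv
  funext i
  fin_cases i <;> simp [hc]

lemma indep {F : Type*} [Field F] [CharP F 2] (μ : F) (H : ∀ y : F, y ^ 2 + y ≠ μ + 1)
    (v : Fin 6 → F) (hv : v ≠ 0) : LinearIndependent F ![v, theta μ v] := by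
  rw [LinearIndependent.pair_iff]
  intro s t hst
  have h2 : (2 : F) = 0 := CharTwo.two_eq_zero
  have aux : ∀ a b : F, (a ≠ 0 ∨ b ≠ 0) → s * a + t * ((μ + 1) * b) = 0 →
      s * b + t * (a + b) = 0 → s = 0 ∧ t = 0 := by
    intro a b hab e1 e2
    have hN := norm_ne μ H a b hab
    constructor
    · refine (mul_eq_zero.1 (?_ : s * (a ^ 2 + a * b + (μ + 1) * b ^ 2) = 0)).resolve_right hN
      linear_combination (a + b) * e1 - (μ + 1) * b * e2 + s * (μ + 1) * b ^ 2 * h2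
    · refine (mul_eq_zero.1 (?_ : t * (a ^ 2 + a * b + (μ + 1) * b ^ 2) = 0)).resolve_right hN
      linear_combination a * e2 - b * e1 + t * (μ + 1) * b ^ 2 * h2
  have e := fun i => congrFun hst i
  rcases exists_pair v hv with hp | hp | hp
  · exact aux _ _ hp (by simpa [theta] using e 0) (by simpa [theta] using e 3)
  · exact aux _ _ hp (by simpa [theta] using e 1) (by simpa [theta] using e 4)
  · exact aux _ _ hp (by simpa [theta] using e 2) (by simpa [theta] using e 5)

/-- `K`-proportionality of two coordinates. -/
lemma prop_step {F : Type*} [Field F] [CharP F 2] (μ a b c d a' b' c' d' : F)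
    (hp : a * c' + (μ + 1) * b * d' = a' * c + (μ + 1) * b' * d)
    (hq : a * d' + b * c' + b * d' = a' * d + b' * c + b' * d) :
    (a ^ 2 + a * b + (μ + 1) * b ^ 2) * c' =
      (c * (a + b) + (μ + 1) * (d * b)) * a' + (c * b + d * a) * ((μ + 1) * b') ∧
    (a ^ 2 + a * b + (μ + 1) * b ^ 2) * d' =
      (c * (a + b) + (μ + 1) * (d * b)) * b' + (c * b + d * a) * (a' + b') := by
  have h2 : (2 : F) = 0 := CharTwo.two_eq_zero
  constructor
  · linear_combination (a + b) * hp + (μ + 1) * b * hq +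
      (b * μ * b' * d + b * b' * d - b ^ 2 * μ * d' - b ^ 2 * d'
        - a * b * μ * d' - a * b * d') * h2
  · linear_combination b * hp + a * hq - (a * b * c' + b * c * b') * h2

lemma cross {F : Type*} [Field F] [CharP F 2] (μ : F) (v w : Fin 6 → F)
    (H : ∀ x, form μ ![v, w, x] = 0) (i j k i' j' k' : Fin 6)
    (hi : (i, j, k, i', j', k') ∈ [((0 : Fin 6), (1 : Fin 6), (2 : Fin 6), (3 : Fin 6),
      (4 : Fin 6), (5 : Fin 6)), (0, 2, 1, 3, 5, 4), (1, 2, 0, 4, 5, 3)]) :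
    (v i * w j + (μ + 1) * v i' * w j' = v j * w i + (μ + 1) * v j' * w i') ∧
    (v i * w j' + v i' * w j + v i' * w j' = v j * w i' + v j' * w i + v j' * w i') := by
  have h2 : (2 : F) = 0 := CharTwo.two_eq_zero
  have e1 := H (Pi.single k 1)
  have e2 := H (Pi.single k' 1)
  simp only [form_apply, minor_apply] at e1 e2
  simp only [List.mem_cons, Prod.mk.injEq, List.not_mem_nil, or_false] at hi
  rcases hi with ⟨rfl, rfl, rfl, rfl, rfl, rfl⟩ | ⟨rfl, rfl, rfl, rfl, rfl, rfl⟩ |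
    ⟨rfl, rfl, rfl, rfl, rfl, rfl⟩ <;> simp at e1 e2 <;> constructor <;> grind

lemma mem_span {F : Type*} [Field F] [CharP F 2] (μ : F) (H : ∀ y : F, y ^ 2 + y ≠ μ + 1)
    (v w : Fin 6 → F) (hv : v ≠ 0) (hw : ∀ x, form μ ![v, w, x] = 0) :
    ∃ s t : F, s • v + t • theta μ v = w := by
  obtain ⟨p01, q01⟩ := cross μ v w hw 0 1 2 3 4 5 (by simp)
  obtain ⟨p02, q02⟩ := cross μ v w hw 0 2 1 3 5 4 (by simp)
  obtain ⟨p12, q12⟩ := cross μ v w hw 1 2 0 4 5 3 (by simp)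
  have fin : ∀ N r t : F, N ≠ 0 →
      (N * w 0 = r * v 0 + t * ((μ + 1) * v 3) ∧ N * w 3 = r * v 3 + t * (v 0 + v 3)) →
      (N * w 1 = r * v 1 + t * ((μ + 1) * v 4) ∧ N * w 4 = r * v 4 + t * (v 1 + v 4)) →
      (N * w 2 = r * v 2 + t * ((μ + 1) * v 5) ∧ N * w 5 = r * v 5 + t * (v 2 + v 5)) →
      ∃ s t : F, s • v + t • theta μ v = w := by
    rintro N r t hN ⟨e0, e3⟩ ⟨e1, e4⟩ ⟨e2, e5⟩
    refine ⟨r / N, t / N, ?_⟩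
    funext i
    apply mul_left_cancel₀ hN
    have hs : ∀ c d : F, N * (r / N * c + t / N * d) = r * c + t * d := by
      intro c d
      field_simp
    change N * (r / N * v i + t / N * theta μ v i) = N * w i
    rw [hs]
    fin_cases i
    exacts [e0.symm, e1.symm, e2.symm, e3.symm, e4.symm, e5.symm]
  rcases exists_pair v hv with hp | hp | hp
  · exact fin _ _ _ (norm_ne μ H _ _ hp) (prop_step μ _ _ _ _ _ _ _ _ rfl rfl)
      (prop_step μ _ _ _ _ _ _ _ _ p01 q01) (prop_step μ _ _ _ _ _ _ _ _ p02 q02)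
  · refine fin _ _ _ (norm_ne μ H _ _ hp) (prop_step μ _ _ (w 1) (w 4) _ _ _ _ ?_ ?_)
      (prop_step μ _ _ _ _ _ _ _ _ rfl rfl) (prop_step μ _ _ _ _ _ _ _ _ p12 q12)
    · linear_combination -p01
    · linear_combination -q01
  · refine fin _ _ _ (norm_ne μ H _ _ hp) (prop_step μ _ _ (w 2) (w 5) _ _ _ _ ?_ ?_)
      (prop_step μ _ _ _ _ _ _ _ _ ?_ ?_) (prop_step μ _ _ _ _ _ _ _ _ rfl rfl)
    · linear_combination -p02
    · linear_combination -q02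
    · linear_combination -p12
    · linear_combination -q12

end Stmt8Aux

/-- For `q = 2^h` with `h` even and `μ ∈ GF(q)` of absolute trace `1`, the
alternating trilinear form on `GF(q)⁶` with trivector
`t = f₂₃₄ + f₁₃₅ + f₁₂₆ + f₁₅₆ + f₂₄₆ + f₃₄₅ + μ f₄₅₆` has as its singular
lines a line-spread of `PG(5,q)`. (0-based indices.) -/
theorem stmt_8 (h : ℕ) (hh : Even h) (hpos : 0 < h) (F : Type*) [Field F] [Fintype F]
    (hcard : Fintype.card F = 2 ^ h)
    (μ : F) (hμ : ∑ i ∈ Finset.range h, μ ^ 2 ^ i = 1)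
    (T : AlternatingMap F (Fin 6 → F) F (Fin 3))
    (hT : ∀ i j k : Fin 6, i < j → j < k →
      T ![Pi.single i 1, Pi.single j 1, Pi.single k 1] =
        if ((i : ℕ), (j : ℕ), (k : ℕ)) ∈
            [((1:ℕ), (2:ℕ), (3:ℕ)), (0, 2, 4), (0, 1, 5),
              (0, 4, 5), (1, 3, 5), (2, 3, 4)] then 1
        else if ((i : ℕ), (j : ℕ), (k : ℕ)) = (3, 4, 5) then μ
        else 0) :
    ∀ v : Fin 6 → F, v ≠ 0 → ∃! W : Submodule F (Fin 6 → F),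
      (Module.finrank F W = 2 ∧ ∀ a ∈ W, ∀ b ∈ W, ∀ x, T ![a, b, x] = 0) ∧
        v ∈ W := by
  have : Fact (Nat.Prime 2) := ⟨Nat.prime_two⟩
  have : CharP F 2 := charP_of_card_eq_prime_pow hcard
  have H := Stmt8Aux.no_root h hh hcard μ hμ
  obtain rfl := Stmt8Aux.eq_form μ T hT
  intro v hv
  have hrank : Module.finrank F (Submodule.span F {v, Stmt8Aux.theta μ v}) = 2 := by
    have h1 := finrank_span_eq_card (Stmt8Aux.indep μ H v hv)
    have h2 : Set.range ![v, Stmt8Aux.theta μ v] = {v, Stmt8Aux.theta μ v} := by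
      ext x
      simp [eq_comm]
      tauto
    rw [h2] at h1
    simpa using h1
  refine ⟨Submodule.span F {v, Stmt8Aux.theta μ v}, ⟨⟨hrank, ?_⟩, ?_⟩, ?_⟩
  · intro a ha b hb x
    obtain ⟨s, t, rfl⟩ := Submodule.mem_span_pair.1 ha
    obtain ⟨s', t', rfl⟩ := Submodule.mem_span_pair.1 hb
    exact Stmt8Aux.form_span μ v x s t s' t'
  · exact Submodule.subset_span (by simp)
  · rintro W ⟨⟨hW, hsing⟩, hvW⟩
    refine Submodule.eq_of_le_of_finrank_eq ?_ (hW.trans hrank.symm)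
    intro w hw
    exact Submodule.mem_span_pair.2 (Stmt8Aux.mem_span μ H v w hv (hsing v hvW w hw))
end

section
/- Let q be an odd prime power and let T be the alternating trilinear form on V = GF(q)^7 with trivector t = f_{124} + f_{235} + f_{346} + f_{457} + f_{561} + f_{672} + f_{713}. Then every vector lying on a T-singular line lies on the quadric Σᵢ₌₁⁷ xᵢ² = 0: if span{a,b} is T-singular, then Σᵢ aᵢ² = 0. -/
/-- Structure constants of the trivector. -/
def epsT (i j k : Fin 7) : ℤ :=
  if (j = i + 1 ∧ k = i + 3) ∨ (k = j + 1 ∧ i = j + 3) ∨ (i = k + 1 ∧ j = k + 3) then 1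
  else if (i = j + 1 ∧ k = j + 3) ∨ (k = i + 1 ∧ j = i + 3) ∨ (j = k + 1 ∧ i = k + 3) then -1
  else 0

lemma swap01 {F : Type*} [Field F] (T : AlternatingMap F (Fin 7 → F) F (Fin 3))
    (a b c : Fin 7 → F) : T ![a, b, c] = - T ![b, a, c] := by
  have h := T.map_swap ![b, a, c] (i := 0) (j := 1) (by decide)
  rw [← h]
  congr 1
  ext i : 1
  fin_cases i <;> rfl

lemma swap12 {F : Type*} [Field F] (T : AlternatingMap F (Fin 7 → F) F (Fin 3))
    (a b c : Fin 7 → F) : T ![a, b, c] = - T ![a, c, b] := by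
  have h := T.map_swap ![a, c, b] (i := 1) (j := 2) (by decide)
  rw [← h]
  congr 1
  ext i : 1
  fin_cases i <;> rfl

lemma eps01 : ∀ i j k, epsT i j k = - epsT j i k := by decide
lemma eps12 : ∀ i j k, epsT i j k = - epsT i k j := by decide
lemma eps_lt : ∀ i j k : Fin 7, i < j → j < k → epsT i j k =
    if ((i : ℕ), (j : ℕ), (k : ℕ)) ∈
            [((0:ℕ), (1:ℕ), (3:ℕ)), (1, 2, 4), (2, 3, 5), (3, 4, 6),
              (0, 4, 5), (1, 5, 6), (0, 2, 6)] then 1 else 0 := by decide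

lemma basis_val {F : Type*} [Field F] (T : AlternatingMap F (Fin 7 → F) F (Fin 3))
    (hT : ∀ i j k : Fin 7, i < j → j < k →
      T ![Pi.single i 1, Pi.single j 1, Pi.single k 1] = (epsT i j k : F)) (i j k : Fin 7) :
    T ![Pi.single i 1, Pi.single j 1, Pi.single k 1] = (epsT i j k : F) := by
  have z01 : ∀ a c : Fin 7 → F, T ![a, a, c] = 0 := fun a c =>
    T.map_eq_zero_of_eq _ (i := 0) (j := 1) rfl (by decide)
  have z12 : ∀ a c : Fin 7 → F, T ![c, a, a] = 0 := fun a c =>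
    T.map_eq_zero_of_eq _ (i := 1) (j := 2) rfl (by decide)
  have e01 : ∀ i k, epsT i i k = 0 := by decide
  have e12 : ∀ i k, epsT k i i = 0 := by decide
  -- first sort the last two arguments, then the first
  have A : ∀ i j k : Fin 7, i < j →
      T ![Pi.single i 1, Pi.single j 1, Pi.single k 1] = (epsT i j k : F) := by
    intro i j k hij
    rcases lt_trichotomy j k with h | h | h
    · exact hT i j k hij h
    · subst h; rw [z12, e12]; simp
    · rw [swap12, eps12]
      push_cast
      congr 1
      rcases lt_trichotomy i k with h' | h' | h'
      · exact hT i k j h' h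
      · subst h'; rw [z01, e01]; simp
      · rw [swap01, eps01, hT k i j h' hij]; simp
  rcases lt_trichotomy i j with h | h | h
  · exact A i j k h
  · subst h; rw [z01, e01]; simp
  · rw [swap01, eps01, A j i k h]; simp

lemma expand {F : Type*} [Field F] (T : AlternatingMap F (Fin 7 → F) F (Fin 3))
    (a b x : Fin 7 → F) : T ![a, b, x] =
      ∑ i, ∑ j, a i * (b j * T ![Pi.single i 1, Pi.single j 1, x]) := by
  have L : ∀ (a c d : Fin 7 → F), T ![a, c, d] = ∑ i, a i * T ![Pi.single i 1, c, d] := by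
    intro a c d
    have h : ∀ a, T ![a, c, d] = AlternatingMap.curryLeftLinearMap T a ![c, d] := fun _ => rfl
    simp only [h]
    conv_lhs => rw [pi_eq_sum_univ' a]
    simp only [Fin.sum_univ_seven, map_add, map_smul, AlternatingMap.add_apply, AlternatingMap.smul_apply, smul_eq_mul]
  rw [L]
  refine Finset.sum_congr rfl fun i _ => ?_
  rw [← Finset.mul_sum, swap01, L, ← Finset.sum_neg_distrib]
  congr 1
  refine Finset.sum_congr rfl fun j _ => ?_
  rw [swap01 T (Pi.single i 1)]; ring



/-- Over `GF(q)` with `q` odd, for the form on `F⁷` with trivector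
`t = f₁₂₄ + f₂₃₅ + f₃₄₆ + f₄₅₇ + f₅₆₁ + f₆₇₂ + f₇₁₃`, every vector on a
`T`-singular line lies on the quadric `Σ xᵢ² = 0`. (0-based indices.) -/
theorem stmt_18 (F : Type*) [Field F] [Fintype F] (hq : Odd (Fintype.card F))
    (T : AlternatingMap F (Fin 7 → F) F (Fin 3))
    (hT : ∀ i j k : Fin 7, i < j → j < k →
      T ![Pi.single i 1, Pi.single j 1, Pi.single k 1] =
        if ((i : ℕ), (j : ℕ), (k : ℕ)) ∈
            [((0:ℕ), (1:ℕ), (3:ℕ)), (1, 2, 4), (2, 3, 5), (3, 4, 6),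
              (0, 4, 5), (1, 5, 6), (0, 2, 6)] then 1 else 0) :
    ∀ a b : Fin 7 → F, LinearIndependent F ![a, b] →
      (∀ x, T ![a, b, x] = 0) → ∑ i, (a i) ^ 2 = 0 := by
  intro a b hab h
  have hB := basis_val T (fun i j k hij hjk => by
    rw [hT i j k hij hjk, eps_lt i j k hij hjk]; split_ifs <;> simp)
  have hc : ∀ k, ∑ i, ∑ j, a i * (b j * (epsT i j k : F)) = 0 := fun k => by
    rw [← h (Pi.single k 1), expand]; simp only [hB]
  have key : ∀ k : Fin 7, a (k+1) * b (k+3) - a (k+3) * b (k+1)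
      + (a (k+2) * b (k+6) - a (k+6) * b (k+2)) + (a (k+4) * b (k+5) - a (k+5) * b (k+4)) = 0 := by
    intro k
    rw [← hc k]
    fin_cases k <;> simp [Fin.sum_univ_succ, epsT] <;> ring
  have c0 := key 0
  have c1 := key 1
  have c2 := key 2
  have c3 := key 3
  have c4 := key 4
  have c5 := key 5
  have c6 := key 6
  clear key hc
  simp only [Fin.reduceAdd] at c0 c1 c2 c3 c4 c5 c6
  have main : (-(∑ i, a i * b i)) • a + (∑ i, a i ^ 2) • b = 0 := by
    ext j
    simp only [Fin.sum_univ_seven, Pi.add_apply, Pi.smul_apply, smul_eq_mul, Pi.zero_apply]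
    fin_cases j <;> simp only [Fin.reduceFinMk, Fin.zero_eta, Fin.mk_one]
    · linear_combination (a 3 * c1 - a 1 * c3) + (a 6 * c2 - a 2 * c6) + (a 5 * c4 - a 4 * c5)
    · linear_combination (a 4 * c2 - a 2 * c4) + (a 0 * c3 - a 3 * c0) + (a 6 * c5 - a 5 * c6)
    · linear_combination (a 5 * c3 - a 3 * c5) + (a 1 * c4 - a 4 * c1) + (a 0 * c6 - a 6 * c0)
    · linear_combination (a 6 * c4 - a 4 * c6) + (a 2 * c5 - a 5 * c2) + (a 1 * c0 - a 0 * c1)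
    · linear_combination (a 0 * c5 - a 5 * c0) + (a 3 * c6 - a 6 * c3) + (a 2 * c1 - a 1 * c2)
    · linear_combination (a 1 * c6 - a 6 * c1) + (a 4 * c0 - a 0 * c4) + (a 3 * c2 - a 2 * c3)
    · linear_combination (a 2 * c0 - a 0 * c2) + (a 5 * c1 - a 1 * c5) + (a 4 * c3 - a 3 * c4)
  exact (LinearIndependent.pair_iff.1 hab _ _ main).2
end
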